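/- arXiv:2006.14134 — 4 statements merged into one kernel-verified Lean document; each statement's English description precedes it below -/
import Mathlib

section
/- Suppose K is perfectoid. Then: (1) there exists ϖ^♭ ∈ O_{K^♭} with |ϖ^♭|_♭ = |ϖ|; (2) for any such ϖ^♭, the zeroth-component map α ↦ α_0 induces a ring isomorphism O_{K^♭}/ϖ^♭O_{K^♭} ≅ O_K/ϖO_K; and (3) m_{K^♭} := {α ∈ O_{K^♭} : |α|_♭ < 1} is the unique maximal ideal of O_{K^♭}, and O_{K^♭}/m_{K^♭} is isomorphic as a ring to O_K/m_K, where m_K = {x ∈ O_K : |x| < 1}. -/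
/-!
Write `R = O_K/ϖ`. Raising to the `q`-th power improves congruences modulo powers of `ϖ`
(`pow_dvd_sub_pow_pow`), so `α^♯` is the limit of `a_i ^ q ^ i` for *every* choice of lifts `a_i`
(`tendsto_sharpFn`). Three properties of `♯` follow: it is multiplicative (`sharpFn_mul`), it
reduces to `α_0` modulo `ϖ` (`mk_sharpO`), and the shifts of `α` provide `q`-power roots of `α^♯`
(`sharpFn_shift_pow`), so that `α` is recovered from the system `(shift^i α)^♯`.

Consequently the tilt behaves like a valuation ring (`exists_mul_eq`): if `|α|_♭ ≤ |β|_♭` and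
`β^♯ ≠ 0`, the quotients `(shift^i α)^♯ / (shift^i β)^♯` lie in `O_K`, and their reductions form an
element `γ` with `β γ = α`.

Surjectivity of Frobenius makes `α ↦ α_0` surjective onto `R` (`exists_zero_eq`). For (1), density
of the value group gives a factorization `ϖ = u v` with `|ϖ| < |u|, |v| < 1`; lifting `u` and `v`
to the tilt preserves their absolute values, and the product of the lifts works. For (2), `α_0 = 0`
means `|α^♯| ≤ |ϖ|`, which is divisibility by `ϖ^♭`. For (3), `m_{K^♭}` is the kernel of the
surjection `α ↦ α_0 mod m_K`, and any element outside it divides `1`.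
-/

set_option synthInstance.maxHeartbeats 1000000
set_option maxHeartbeats 1000000

open Filter Topology

noncomputable section

/-- The valuation ring `O_K = {x : K | ‖x‖ ≤ 1}` of a nonarchimedean normed field. -/
def valRing (K : Type*) [NormedField K]
    (hna : IsNonarchimedean fun x : K => ‖x‖) : Subring K where
  carrier := {x : K | ‖x‖ ≤ 1}
  mul_mem' := by
    intro a b ha hb
    simp only [Set.mem_setOf_eq, norm_mul] at *
    exact mul_le_one₀ ha (norm_nonneg b) hb
  one_mem' := by simp
  add_mem' := by
    intro a b ha hb
    exact le_trans (hna a b) (max_le ha hb)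
  zero_mem' := by simp
  neg_mem' := by intro a ha; simpa using ha

/-- The tilt `O_{K^♭} = lim_{x ↦ x^q} R` of a ring `R` of characteristic `p`,
`q = p^f`: sequences `α` with `α (i+1) ^ q = α i`, a subring of `ℕ → R`. -/
def tiltSubring (R : Type*) [CommRing R] (p q f : ℕ) (hp : p.Prime)
    (hchar : CharP R p) (hq : q = p ^ f) : Subring (ℕ → R) where
  carrier := {α : ℕ → R | ∀ i, α (i + 1) ^ q = α i}
  mul_mem' := by
    intro a b ha hb i
    rw [Pi.mul_apply, Pi.mul_apply, mul_pow, ha i, hb i]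
  one_mem' := by
    intro i
    rw [Pi.one_apply, Pi.one_apply, one_pow]
  add_mem' := by
    intro a b ha hb i
    haveI := hchar
    haveI : ExpChar R p := ExpChar.prime hp
    subst hq
    rw [Pi.add_apply, Pi.add_apply, add_pow_expChar_pow, ha i, hb i]
  zero_mem' := by
    intro i
    rw [Pi.zero_apply, Pi.zero_apply, zero_pow (by subst hq; exact pow_ne_zero _ hp.ne_zero)]
  neg_mem' := by
    intro a ha i
    haveI := hchar
    haveI : ExpChar R p := ExpChar.prime hp
    subst hq
    rw [Pi.neg_apply, Pi.neg_apply, neg_eq_neg_one_mul, mul_pow, neg_one_pow_expChar_pow,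
      neg_one_mul, ha i]

/-- The sharp map `α ↦ α^♯`: the limit in `K` of `a_i ^ (q^i)` where `a_i` is a lift
of `α_i` to `O_K`. -/
def sharpFn {K : Type*} [NormedField K] (hna : IsNonarchimedean fun x : K => ‖x‖)
    (ϖ : valRing K hna) (q : ℕ)
    (α : ℕ → valRing K hna ⧸ Ideal.span {ϖ}) : K :=
  limUnder atTop fun i =>
    ((Function.surjInv Ideal.Quotient.mk_surjective (α i) : valRing K hna) : K) ^ q ^ i

/-- The function `|·|_♭` on the tilt: `|α|_♭ = |α^♯|`. -/
def flatNorm {K : Type*} [NormedField K] (hna : IsNonarchimedean fun x : K => ‖x‖)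
    (ϖ : valRing K hna) (q : ℕ)
    (α : ℕ → valRing K hna ⧸ Ideal.span {ϖ}) : ℝ :=
  ‖sharpFn hna ϖ q α‖

section TiltLemmas

/-! ### Congruences modulo powers of `ϖ` -/

/-- The `p`-th power improves a congruence modulo a divisor `ϖ` of `p`: each application of
Frobenius gains one power of `ϖ`. -/
lemma pow_dvd_sub_pow_prime {O : Type*} [CommRing O] {p : ℕ} (hp : p.Prime) {ϖ : O}
    (hϖ : ϖ ∣ (p : O)) {k : ℕ} {a b : O} (h : ϖ ^ (k + 1) ∣ a - b) :
    ϖ ^ (k + 2) ∣ a ^ p - b ^ p := by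
  obtain ⟨d, hd⟩ := h
  obtain ⟨c, hc⟩ := hϖ
  obtain ⟨r, hr⟩ := exists_add_pow_prime_eq hp b (ϖ ^ (k + 1) * d)
  obtain rfl : a = b + ϖ ^ (k + 1) * d := by rw [← hd]; ring
  obtain ⟨m, rfl⟩ := Nat.exists_eq_add_of_le' hp.two_le
  refine ⟨ϖ ^ k * d ^ 2 * (ϖ ^ (k + 1) * d) ^ m + c * b * d * r, ?_⟩
  rw [hr, hc]
  ring

lemma pow_dvd_sub_pow_pow {O : Type*} [CommRing O] {p : ℕ} (hp : p.Prime) {ϖ : O}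
    (hϖ : ϖ ∣ (p : O)) {a b : O} (h : ϖ ∣ a - b) (n : ℕ) :
    ϖ ^ (n + 1) ∣ a ^ p ^ n - b ^ p ^ n := by
  induction n with
  | zero => simpa using h
  | succ n ih => simpa only [pow_succ p, pow_mul] using pow_dvd_sub_pow_prime hp hϖ ih

/-! ### Divisibility and norms in the valuation ring -/

variable {K : Type*} [NormedField K] {hna : IsNonarchimedean fun x : K => ‖x‖}

lemma valRing_dvd_iff {x y : valRing K hna} (hx : (x : K) ≠ 0) :
    x ∣ y ↔ ‖(y : K)‖ ≤ ‖(x : K)‖ := by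
  constructor
  · rintro ⟨z, rfl⟩
    rw [Subring.coe_mul, norm_mul]
    exact mul_le_of_le_one_right (norm_nonneg _) z.2
  · intro h
    refine ⟨⟨(y : K) / x, ?_⟩, ?_⟩
    · change ‖(y : K) / x‖ ≤ 1
      rw [norm_div]
      exact div_le_one_of_le₀ h (norm_nonneg _)
    · ext
      simp only [Subring.coe_mul]
      field_simp

lemma mk_eq_mk_iff {ϖ x y : valRing K hna} (h0 : (ϖ : K) ≠ 0) :
    Ideal.Quotient.mk (Ideal.span {ϖ}) x = Ideal.Quotient.mk (Ideal.span {ϖ}) y ↔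
      ‖(x : K) - y‖ ≤ ‖(ϖ : K)‖ := by
  rw [Ideal.Quotient.eq, Ideal.mem_span_singleton, valRing_dvd_iff h0, AddSubgroupClass.coe_sub]

lemma mk_eq_zero_iff {ϖ x : valRing K hna} (h0 : (ϖ : K) ≠ 0) :
    Ideal.Quotient.mk (Ideal.span {ϖ}) x = 0 ↔ ‖(x : K)‖ ≤ ‖(ϖ : K)‖ := by
  rw [Ideal.Quotient.eq_zero_iff_mem, Ideal.mem_span_singleton, valRing_dvd_iff h0]

/-- Norms exceeding `|ϖ|` depend only on the class modulo `ϖ`. -/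
lemma norm_eq_of_mk_eq {ϖ x y : valRing K hna} (h0 : (ϖ : K) ≠ 0)
    (h : Ideal.Quotient.mk (Ideal.span {ϖ}) x = Ideal.Quotient.mk (Ideal.span {ϖ}) y)
    (hy : ‖(ϖ : K)‖ < ‖(y : K)‖) : ‖(x : K)‖ = ‖(y : K)‖ := by
  have h1 := (mk_eq_mk_iff h0).1 h
  have h2 := (mk_eq_mk_iff h0).1 h.symm
  have h3 : ‖(x : K) - y + y‖ ≤ max ‖(x : K) - y‖ ‖(y : K)‖ := hna _ _
  have h4 : ‖(y : K) - x + x‖ ≤ max ‖(y : K) - x‖ ‖(x : K)‖ := hna _ _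
  rw [sub_add_cancel] at h3 h4
  apply le_antisymm
  · exact h3.trans (max_le (h1.trans hy.le) le_rfl)
  · rcases le_max_iff.1 h4 with h5 | h5
    · linarith
    · exact h5

lemma tilt_pow_eq {R : Type*} [Monoid R] {q : ℕ} {α : ℕ → R}
    (hα : ∀ i, α (i + 1) ^ q = α i) (i : ℕ) : α i ^ q ^ i = α 0 := by
  induction i with
  | zero => simp
  | succ i ih => rw [pow_succ', pow_mul, hα, ih]

section Sharp

/-! ### The sharp map -/

variable {p q f : ℕ} {ϖ : valRing K hna}

/-- The `q^i`-th powers of two elements congruent modulo `ϖ` agree up to `|ϖ|^(i+1)`. -/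
lemma norm_pow_sub_pow_le (hp : p.Prime) (hf : 0 < f) (hq : q = p ^ f) (hϖp : ϖ ∣ (p : valRing K hna))
    {a b : valRing K hna}
    (h : Ideal.Quotient.mk (Ideal.span {ϖ}) a = Ideal.Quotient.mk (Ideal.span {ϖ}) b) (i : ℕ) :
    ‖(a : K) ^ q ^ i - (b : K) ^ q ^ i‖ ≤ ‖(ϖ : K)‖ * ‖(ϖ : K)‖ ^ i := by
  rw [Ideal.Quotient.eq, Ideal.mem_span_singleton] at h
  have h1 : ϖ ^ (i + 1) ∣ a ^ q ^ i - b ^ q ^ i := by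
    rw [hq, ← pow_mul]
    refine (pow_dvd_pow _ ?_).trans (pow_dvd_sub_pow_pow hp hϖp h (f * i))
    exact Nat.succ_le_succ (Nat.le_mul_of_pos_left i hf)
  obtain ⟨z, hz⟩ := h1
  have h2 := congrArg (fun t : valRing K hna => (t : K)) hz
  simp only [Subring.coe_mul, AddSubgroupClass.coe_sub, Subring.coe_pow] at h2
  rw [h2, norm_mul, norm_pow, ← pow_succ']
  exact mul_le_of_le_one_right (by positivity) z.2

variable [CompleteSpace K]

/-- The limit defining `α^♯` exists and may be computed with arbitrary lifts. -/
lemma tendsto_sharpFn (hp : p.Prime) (hf : 0 < f) (hq : q = p ^ f)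
    (hϖp : ϖ ∣ (p : valRing K hna)) (h1 : ‖(ϖ : K)‖ < 1)
    {α : ℕ → valRing K hna ⧸ Ideal.span {ϖ}} (hα : ∀ i, α (i + 1) ^ q = α i)
    (a : ℕ → valRing K hna) (ha : ∀ i, Ideal.Quotient.mk (Ideal.span {ϖ}) (a i) = α i) :
    Tendsto (fun i => (a i : K) ^ q ^ i) atTop (𝓝 (sharpFn hna ϖ q α)) := by
  set s : ℕ → valRing K hna := fun i => Function.surjInv Ideal.Quotient.mk_surjective (α i)
  have hs : ∀ i, Ideal.Quotient.mk (Ideal.span {ϖ}) (s i) = α i := fun i =>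
    Function.surjInv_eq Ideal.Quotient.mk_surjective (α i)
  have hcau : CauchySeq fun i => (s i : K) ^ q ^ i := by
    refine cauchySeq_of_le_geometric ‖(ϖ : K)‖ ‖(ϖ : K)‖ h1 fun i => ?_
    have h : Ideal.Quotient.mk (Ideal.span {ϖ}) (s i) =
        Ideal.Quotient.mk (Ideal.span {ϖ}) (s (i + 1) ^ q) := by
      rw [map_pow, hs, hs, hα]
    have := norm_pow_sub_pow_le hp hf hq hϖp h i
    rwa [dist_eq_norm, pow_succ' q, pow_mul, ← Subring.coe_pow (valRing K hna) (s (i + 1)) q]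
  have hlim : Tendsto (fun i => (s i : K) ^ q ^ i) atTop (𝓝 (sharpFn hna ϖ q α)) :=
    tendsto_nhds_limUnder (cauchySeq_tendsto_of_complete hcau)
  have hdiff : Tendsto (fun i => (a i : K) ^ q ^ i - (s i : K) ^ q ^ i) atTop (𝓝 0) := by
    refine squeeze_zero_norm
      (fun i => norm_pow_sub_pow_le hp hf hq hϖp ((ha i).trans (hs i).symm) i) ?_
    simpa using (tendsto_pow_atTop_nhds_zero_of_lt_one (norm_nonneg (ϖ : K)) h1).const_mul
      ‖(ϖ : K)‖
  simpa using hdiff.add hlim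

lemma sharpFn_mul (hp : p.Prime) (hf : 0 < f) (hq : q = p ^ f)
    (hϖp : ϖ ∣ (p : valRing K hna)) (h1 : ‖(ϖ : K)‖ < 1)
    {α β : ℕ → valRing K hna ⧸ Ideal.span {ϖ}} (hα : ∀ i, α (i + 1) ^ q = α i)
    (hβ : ∀ i, β (i + 1) ^ q = β i) :
    sharpFn hna ϖ q (α * β) = sharpFn hna ϖ q α * sharpFn hna ϖ q β := by
  choose a ha using fun i => Ideal.Quotient.mk_surjective (α i)
  choose b hb using fun i => Ideal.Quotient.mk_surjective (β i)
  have hl := tendsto_sharpFn hp hf hq hϖp h1 (α := α * β)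
    (fun i => by simp [mul_pow, hα, hβ]) (fun i => a i * b i) (fun i => by simp [ha, hb])
  refine tendsto_nhds_unique hl ?_
  simpa only [Subring.coe_mul, mul_pow] using
    (tendsto_sharpFn hp hf hq hϖp h1 hα a ha).mul (tendsto_sharpFn hp hf hq hϖp h1 hβ b hb)

lemma sharpFn_shift_pow (hp : p.Prime) (hf : 0 < f) (hq : q = p ^ f)
    (hϖp : ϖ ∣ (p : valRing K hna)) (h1 : ‖(ϖ : K)‖ < 1)
    {α : ℕ → valRing K hna ⧸ Ideal.span {ϖ}} (hα : ∀ i, α (i + 1) ^ q = α i) (n : ℕ) :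
    sharpFn hna ϖ q (fun i => α (i + (n + 1))) ^ q = sharpFn hna ϖ q (fun i => α (i + n)) := by
  choose a ha using fun i => Ideal.Quotient.mk_surjective (α i)
  have hshift : ∀ m i, α (i + 1 + m) ^ q = α (i + m) := fun m i => by
    rw [add_right_comm, hα]
  have h2 := tendsto_sharpFn hp hf hq hϖp h1 (hshift n) (fun i => a (i + n)) (fun i => ha _)
  have h3 := tendsto_sharpFn hp hf hq hϖp h1 (hshift (n + 1)) (fun i => a (i + (n + 1)))
    (fun i => ha _)
  refine tendsto_nhds_unique (h3.pow q) ?_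
  convert h2.comp (tendsto_add_atTop_nat 1) using 2 with i
  simp only [Function.comp_apply]
  rw [pow_succ q, pow_mul, add_right_comm i 1 n, add_assoc i n 1]

lemma norm_sharpFn_sub_le (hp : p.Prime) (hf : 0 < f) (hq : q = p ^ f)
    (hϖp : ϖ ∣ (p : valRing K hna)) (h0 : (ϖ : K) ≠ 0) (h1 : ‖(ϖ : K)‖ < 1)
    {α : ℕ → valRing K hna ⧸ Ideal.span {ϖ}} (hα : ∀ i, α (i + 1) ^ q = α i)
    {x : valRing K hna} (hx : Ideal.Quotient.mk (Ideal.span {ϖ}) x = α 0) :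
    ‖sharpFn hna ϖ q α - x‖ ≤ ‖(ϖ : K)‖ := by
  choose a ha using fun i => Ideal.Quotient.mk_surjective (α i)
  have h2 := tendsto_sharpFn hp hf hq hϖp h1 hα a ha
  refine le_of_tendsto (h2.sub_const (x : K)).norm (Eventually.of_forall fun i => ?_)
  rw [← Subring.coe_pow, ← mk_eq_mk_iff h0, map_pow, ha, hx, tilt_pow_eq hα]

lemma norm_sharpFn_le_one (hp : p.Prime) (hf : 0 < f) (hq : q = p ^ f)
    (hϖp : ϖ ∣ (p : valRing K hna)) (h0 : (ϖ : K) ≠ 0) (h1 : ‖(ϖ : K)‖ < 1)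
    {α : ℕ → valRing K hna ⧸ Ideal.span {ϖ}} (hα : ∀ i, α (i + 1) ^ q = α i) :
    ‖sharpFn hna ϖ q α‖ ≤ 1 := by
  obtain ⟨x, hx⟩ := Ideal.Quotient.mk_surjective (α 0)
  have h2 := norm_sharpFn_sub_le hp hf hq hϖp h0 h1 hα hx
  have h3 : ‖sharpFn hna ϖ q α - x + x‖ ≤ max ‖sharpFn hna ϖ q α - x‖ ‖(x : K)‖ := hna _ _
  rw [sub_add_cancel] at h3
  exact h3.trans (max_le (h2.trans h1.le) x.2)

/-- `α^♯` as an element of the valuation ring reduces to `α_0`. -/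
lemma mk_sharpO (hp : p.Prime) (hf : 0 < f) (hq : q = p ^ f)
    (hϖp : ϖ ∣ (p : valRing K hna)) (h0 : (ϖ : K) ≠ 0) (h1 : ‖(ϖ : K)‖ < 1)
    {α : ℕ → valRing K hna ⧸ Ideal.span {ϖ}} (hα : ∀ i, α (i + 1) ^ q = α i) :
    Ideal.Quotient.mk (Ideal.span {ϖ})
      ⟨sharpFn hna ϖ q α, norm_sharpFn_le_one hp hf hq hϖp h0 h1 hα⟩ = α 0 := by
  obtain ⟨x, hx⟩ := Ideal.Quotient.mk_surjective (α 0)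
  rw [← hx, mk_eq_mk_iff h0]
  exact norm_sharpFn_sub_le hp hf hq hϖp h0 h1 hα hx

/-! ### Divisibility in the tilt -/

/-- The tilt is a valuation ring for `|·|_♭`: smaller elements are multiples of larger ones. The
quotient is assembled from the quotients of the compatible `q`-power roots of `α^♯` and `β^♯`. -/
lemma exists_mul_eq (hp : p.Prime) (hf : 0 < f) (hq : q = p ^ f)
    (hϖp : ϖ ∣ (p : valRing K hna)) (h0 : (ϖ : K) ≠ 0) (h1 : ‖(ϖ : K)‖ < 1)
    {α β : ℕ → valRing K hna ⧸ Ideal.span {ϖ}} (hα : ∀ i, α (i + 1) ^ q = α i)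
    (hβ : ∀ i, β (i + 1) ^ q = β i) (hβ0 : sharpFn hna ϖ q β ≠ 0)
    (hle : flatNorm hna ϖ q α ≤ flatNorm hna ϖ q β) :
    ∃ γ : ℕ → valRing K hna ⧸ Ideal.span {ϖ}, (∀ i, γ (i + 1) ^ q = γ i) ∧ α = β * γ := by
  have hq0 : q ≠ 0 := by rw [hq]; exact pow_ne_zero _ hp.ne_zero
  set x : ℕ → K := fun n => sharpFn hna ϖ q (fun i => α (i + n)) with hxdef
  set y : ℕ → K := fun n => sharpFn hna ϖ q (fun i => β (i + n)) with hydef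
  have hx : ∀ n, x (n + 1) ^ q = x n := sharpFn_shift_pow hp hf hq hϖp h1 hα
  have hy : ∀ n, y (n + 1) ^ q = y n := sharpFn_shift_pow hp hf hq hϖp h1 hβ
  have hy0 : ∀ n, y n ≠ 0 := by
    intro n
    induction n with
    | zero => exact hβ0
    | succ n ih =>
      intro h
      apply ih
      rw [← hy, h, zero_pow hq0]
  have hxy : ∀ n, ‖x n / y n‖ ≤ 1 := by
    intro n
    induction n with
    | zero =>
      rw [norm_div]
      exact div_le_one_of_le₀ hle (norm_nonneg _)
    | succ n ih =>
      rw [← hx, ← hy, ← div_pow, norm_pow] at ih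
      exact (pow_le_one_iff_of_nonneg (norm_nonneg _) hq0).1 ih
  let z : ℕ → valRing K hna := fun n => ⟨x n / y n, hxy n⟩
  have hz : ∀ n, z (n + 1) ^ q = z n := by
    intro n
    ext
    change (x (n + 1) / y (n + 1)) ^ q = x n / y n
    rw [div_pow, hx, hy]
  have hshift : ∀ {δ : ℕ → valRing K hna ⧸ Ideal.span {ϖ}}, (∀ i, δ (i + 1) ^ q = δ i) →
      ∀ m i, δ (i + 1 + m) ^ q = δ (i + m) := fun hδ m i => by rw [add_right_comm, hδ]
  refine ⟨fun n => Ideal.Quotient.mk _ (z n), fun n => ?_, ?_⟩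
  · change Ideal.Quotient.mk _ (z (n + 1)) ^ q = Ideal.Quotient.mk _ (z n)
    rw [← map_pow, hz]
  · funext n
    have e1 := mk_sharpO hp hf hq hϖp h0 h1 (α := fun i => α (i + n)) (hshift hα n)
    have e2 := mk_sharpO hp hf hq hϖp h0 h1 (α := fun i => β (i + n)) (hshift hβ n)
    simp only [zero_add] at e1 e2
    rw [Pi.mul_apply, ← e1, ← e2, ← map_mul]
    congr 1
    ext
    change x n = y n * (x n / y n)
    rw [mul_div_cancel₀ _ (hy0 n)]

end Sharp

/-! ### Surjectivity of the zeroth component -/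

/-- Surjectivity of the `q`-power map lets every element of `R` start a sequence of the tilt. -/
lemma exists_zero_eq {R : Type*} [Monoid R] {q : ℕ} (hsurj : ∀ y : R, ∃ x, x ^ q = y) (y : R) :
    ∃ α : ℕ → R, (∀ i, α (i + 1) ^ q = α i) ∧ α 0 = y := by
  choose r hr using hsurj
  refine ⟨fun n => r^[n] y, fun i => ?_, rfl⟩
  simp only [Function.iterate_succ_apply', hr]

lemma exists_pow_pow_eq {R : Type*} [Monoid R] {p : ℕ} (hsurj : ∀ y : R, ∃ x, x ^ p = y)
    (f : ℕ) (y : R) : ∃ x, x ^ p ^ f = y := by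
  induction f generalizing y with
  | zero => exact ⟨y, by simp⟩
  | succ f ih =>
    obtain ⟨x, rfl⟩ := hsurj y
    obtain ⟨z, rfl⟩ := ih x
    exact ⟨z, by rw [pow_succ, pow_mul]⟩

/-! ### The maximal ideal of the valuation ring -/

/-- The maximal ideal `m_K = {x : ‖x‖ < 1}` of the valuation ring. -/
def valRingMax (K : Type*) [NormedField K] (hna : IsNonarchimedean fun x : K => ‖x‖) :
    Ideal (valRing K hna) where
  carrier := {x | ‖(x : K)‖ < 1}
  add_mem' := fun {a b} ha hb => lt_of_le_of_lt (hna (a : K) b) (max_lt ha hb)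
  zero_mem' := by simp
  smul_mem' := fun c x hx => by
    change ‖(c : K) * x‖ < 1
    rw [norm_mul]
    exact lt_of_le_of_lt (mul_le_of_le_one_left (norm_nonneg _) c.2) hx

lemma mem_valRingMax {x : valRing K hna} : x ∈ valRingMax K hna ↔ ‖(x : K)‖ < 1 := Iff.rfl

lemma valRingMax_isMaximal : (valRingMax K hna).IsMaximal := by
  rw [Ideal.isMaximal_iff]
  refine ⟨by simp [mem_valRingMax], fun I x _ hx hxI => ?_⟩
  have hx1 : 1 ≤ ‖(x : K)‖ := not_lt.1 hx
  have hx0 : (x : K) ≠ 0 := norm_pos_iff.1 (by linarith)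
  exact I.mem_of_dvd ((valRing_dvd_iff hx0).2 (by simpa using hx1)) hxI

end TiltLemmas

/-! ### The tilt of a perfectoid field -/

/-- **The tilt of a perfectoid field.**  Suppose `K` is perfectoid (dense value group
and surjective Frobenius on `O_K/pO_K`).  Then (1) there is `ϖ^♭ ∈ O_{K^♭}` with
`|ϖ^♭|_♭ = |ϖ|`; (2) for any such `ϖ^♭`, the zeroth-component map induces a ring
isomorphism `O_{K^♭}/ϖ^♭O_{K^♭} ≅ O_K/ϖO_K`; and (3) `m_{K^♭} = {α : |α|_♭ < 1}` is
the unique maximal ideal of `O_{K^♭}`, with residue ring `O_{K^♭}/m_{K^♭} ≅ O_K/m_K`. -/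
theorem tilt_of_perfectoid
    (p : ℕ) [Fact p.Prime] (K : Type*) [NormedField K] [CompleteSpace K]
    [Algebra ℚ_[p] K]
    (hna : IsNonarchimedean fun x : K => ‖x‖)
    (hext : ∀ c : ℚ_[p], ‖algebraMap ℚ_[p] K c‖ = ‖c‖)
    (hdense : ∀ r : ℝ, 0 < r → r ∈ closure {s : ℝ | ∃ x : K, x ≠ 0 ∧ ‖x‖ = s})
    (hfrob : ∀ y : valRing K hna ⧸ Ideal.span {(p : valRing K hna)}, ∃ x, x ^ p = y)
    (q f : ℕ) (hf : 0 < f) (hq : q = p ^ f)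
    (ϖ : valRing K hna) (hϖp : ‖(p : K)‖ ≤ ‖(ϖ : K)‖) (hϖ1 : ‖(ϖ : K)‖ < 1)
    (hchar : CharP (valRing K hna ⧸ Ideal.span {ϖ}) p) :
    -- (1) there is an element `ϖ^♭` of the tilt with `|ϖ^♭|_♭ = |ϖ|`
    (∃ ϖb : tiltSubring (valRing K hna ⧸ Ideal.span {ϖ}) p q f Fact.out hchar hq,
      flatNorm hna ϖ q (ϖb : ℕ → _) = ‖(ϖ : K)‖) ∧
    -- (2) for any such `ϖ^♭`, the zeroth-component map induces
    --     `O_{K^♭}/ϖ^♭ ≅ O_K/ϖ`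
    (∀ ϖb : tiltSubring (valRing K hna ⧸ Ideal.span {ϖ}) p q f Fact.out hchar hq,
      flatNorm hna ϖ q (ϖb : ℕ → _) = ‖(ϖ : K)‖ →
      ∃ e : (tiltSubring (valRing K hna ⧸ Ideal.span {ϖ}) p q f Fact.out hchar hq ⧸
              Ideal.span {ϖb}) ≃+*
            (valRing K hna ⧸ Ideal.span {ϖ}),
        ∀ α : tiltSubring (valRing K hna ⧸ Ideal.span {ϖ}) p q f Fact.out hchar hq,
          e (Ideal.Quotient.mk (Ideal.span {ϖb}) α) = (α : ℕ → _) 0) ∧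
    -- (3) `{α : |α|_♭ < 1}` is the unique maximal ideal, with residue ring `O_K/m_K`
    (∃ (I : Ideal (tiltSubring (valRing K hna ⧸ Ideal.span {ϖ}) p q f Fact.out hchar hq))
       (J : Ideal (valRing K hna)),
      (I : Set (tiltSubring (valRing K hna ⧸ Ideal.span {ϖ}) p q f Fact.out hchar hq)) =
        {α : tiltSubring (valRing K hna ⧸ Ideal.span {ϖ}) p q f Fact.out hchar hq |
          flatNorm hna ϖ q (α : ℕ → _) < 1} ∧
      (J : Set (valRing K hna)) = {x : valRing K hna | ‖(x : K)‖ < 1} ∧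
      I.IsMaximal ∧
      (∀ I' : Ideal (tiltSubring (valRing K hna ⧸ Ideal.span {ϖ}) p q f Fact.out hchar hq),
        I'.IsMaximal → I' = I) ∧
      Nonempty
        ((tiltSubring (valRing K hna ⧸ Ideal.span {ϖ}) p q f Fact.out hchar hq ⧸ I) ≃+*
          (valRing K hna ⧸ J))) := by
  have hp : p.Prime := Fact.out
  have hpnorm : 0 < ‖(p : K)‖ := by
    have h := hext (p : ℚ_[p])
    rw [map_natCast] at h
    rw [h, norm_pos_iff]
    exact_mod_cast hp.ne_zero
  have h0 : (ϖ : K) ≠ 0 := norm_pos_iff.1 (hpnorm.trans_le hϖp)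
  have hϖdvd : ϖ ∣ (p : valRing K hna) := (valRing_dvd_iff h0).2 (by simpa using hϖp)
  have hsurj : ∀ y : valRing K hna ⧸ Ideal.span {ϖ}, ∃ x, x ^ q = y := by
    rw [hq]
    refine exists_pow_pow_eq (fun y => ?_) f
    obtain ⟨a, rfl⟩ := Ideal.Quotient.mk_surjective y
    obtain ⟨x, hx⟩ := hfrob (Ideal.Quotient.mk _ a)
    obtain ⟨b, rfl⟩ := Ideal.Quotient.mk_surjective x
    refine ⟨Ideal.Quotient.mk _ b, ?_⟩
    rw [← map_pow, Ideal.Quotient.eq, Ideal.mem_span_singleton] at hx ⊢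
    exact hϖdvd.trans hx
  set R := valRing K hna ⧸ Ideal.span {ϖ} with hR
  set T := tiltSubring R p q f Fact.out hchar hq with hT
  -- the zeroth-component map
  let ev : T →+* R := (Pi.evalRingHom (fun _ : ℕ => R) 0).comp T.subtype
  have hev : ∀ α : T, ev α = (α : ℕ → R) 0 := fun _ => rfl
  have hevsurj : Function.Surjective ev := fun y => by
    obtain ⟨α, hα, hα0⟩ := exists_zero_eq hsurj y
    exact ⟨⟨α, hα⟩, hα0⟩
  have hmk : ∀ α : T, Ideal.Quotient.mk (Ideal.span {ϖ})
      ⟨sharpFn hna ϖ q α, norm_sharpFn_le_one hp hf hq hϖdvd h0 hϖ1 α.2⟩ = ev α :=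
    fun α => mk_sharpO hp hf hq hϖdvd h0 hϖ1 α.2
  have hdvd : ∀ α β : T, sharpFn hna ϖ q β ≠ 0 →
      flatNorm hna ϖ q α ≤ flatNorm hna ϖ q β → β ∣ α := by
    intro α β hβ hle
    obtain ⟨γ, hγ, h⟩ := exists_mul_eq hp hf hq hϖdvd h0 hϖ1 α.2 β.2 hβ hle
    exact ⟨⟨γ, hγ⟩, Subtype.ext h⟩
  have hev0 : ∀ α : T, ev α = 0 ↔ flatNorm hna ϖ q α ≤ ‖(ϖ : K)‖ := by
    intro α
    rw [← hmk α, mk_eq_zero_iff h0, flatNorm]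
  refine ⟨?_, ?_, ?_⟩
  · obtain ⟨u, hu1, hu2⟩ : ∃ u : K, ‖(ϖ : K)‖ < ‖u‖ ∧ ‖u‖ < 1 := by
      have hπ := norm_pos_iff.2 h0
      obtain ⟨r, hr1, hr2⟩ := exists_between hϖ1
      obtain ⟨s, hs, x, -, rfl⟩ := mem_closure_iff.1 (hdense r (hπ.trans hr1))
        (Set.Ioo ‖(ϖ : K)‖ 1) isOpen_Ioo ⟨hr1, hr2⟩
      exact ⟨x, hs.1, hs.2⟩
    have hupos : 0 < ‖u‖ := (norm_nonneg _).trans_lt hu1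
    have hv1 : ‖(ϖ : K)‖ < ‖(ϖ : K) / u‖ := by
      rw [norm_div, lt_div_iff₀ hupos]
      exact mul_lt_of_lt_one_right (norm_pos_iff.2 h0) hu2
    have hv2 : ‖(ϖ : K) / u‖ ≤ 1 := by
      rw [norm_div]
      exact div_le_one_of_le₀ hu1.le hupos.le
    -- elements of norm larger than `|ϖ|` have lifts to the tilt of the same norm
    have key : ∀ x : K, ‖x‖ ≤ 1 → ‖(ϖ : K)‖ < ‖x‖ → ∃ α : T, ‖sharpFn hna ϖ q α‖ = ‖x‖ := by
      intro x hx1 hx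
      obtain ⟨α, hα⟩ := hevsurj (Ideal.Quotient.mk _ (⟨x, hx1⟩ : valRing K hna))
      exact ⟨α, norm_eq_of_mk_eq h0 ((hmk α).trans hα) hx⟩
    obtain ⟨α, hα⟩ := key u hu2.le hu1
    obtain ⟨β, hβ⟩ := key _ hv2 hv1
    refine ⟨α * β, ?_⟩
    rw [flatNorm, Subring.coe_mul, sharpFn_mul hp hf hq hϖdvd hϖ1 α.2 β.2, norm_mul, hα, hβ,
      ← norm_mul, mul_div_cancel₀ _ (norm_pos_iff.1 hupos)]
  · intro ϖb hϖb
    have hϖb0 : sharpFn hna ϖ q ϖb ≠ 0 := by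
      rw [← norm_pos_iff]
      exact (norm_pos_iff.2 h0).trans_eq hϖb.symm
    have hker : Ideal.span {ϖb} = RingHom.ker ev := by
      ext α
      rw [Ideal.mem_span_singleton, RingHom.mem_ker]
      constructor
      · rintro ⟨γ, rfl⟩
        rw [map_mul, (hev0 ϖb).2 hϖb.le, zero_mul]
      · intro h
        exact hdvd _ _ hϖb0 (((hev0 α).1 h).trans_eq hϖb.symm)
    exact ⟨(Ideal.quotEquivOfEq hker).trans (RingHom.quotientKerEquivOfSurjective hevsurj),
      fun α => rfl⟩
  · have hle : Ideal.span {ϖ} ≤ valRingMax K hna := by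
      rw [Ideal.span_singleton_le_iff_mem]
      exact hϖ1
    let φ : T →+* valRing K hna ⧸ valRingMax K hna := (Ideal.Quotient.factor hle).comp ev
    have hφsurj : Function.Surjective φ :=
      (Ideal.Quotient.factor_surjective hle).comp hevsurj
    have hφ : ∀ α : T, α ∈ RingHom.ker φ ↔ flatNorm hna ϖ q α < 1 := by
      intro α
      rw [RingHom.mem_ker, RingHom.comp_apply, ← hmk α, Ideal.Quotient.factor_mk,
        Ideal.Quotient.eq_zero_iff_mem, mem_valRingMax, flatNorm]
    haveI : (valRingMax K hna).IsMaximal := valRingMax_isMaximal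
    letI : Field (valRing K hna ⧸ valRingMax K hna) := Ideal.Quotient.field _
    have hmax : (RingHom.ker φ).IsMaximal := RingHom.ker_isMaximal_of_surjective φ hφsurj
    refine ⟨RingHom.ker φ, valRingMax K hna, Set.ext hφ, rfl, hmax, ?_,
      ⟨RingHom.quotientKerEquivOfSurjective hφsurj⟩⟩
    intro I' hI'
    refine hI'.eq_of_le hmax.ne_top fun α hα => ?_
    by_contra hαn
    rw [hφ, not_lt] at hαn
    have hα0 : sharpFn hna ϖ q α ≠ 0 := norm_pos_iff.1 (zero_lt_one.trans_le hαn)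
    have hone : flatNorm hna ϖ q (1 : T) ≤ 1 :=
      norm_sharpFn_le_one hp hf hq hϖdvd h0 hϖ1 (1 : T).2
    exact hI'.ne_top (I'.eq_top_of_isUnit_mem hα
      (isUnit_of_dvd_one (hdvd 1 α hα0 (hone.trans hαn))))
end
end

section
/- Suppose K is perfectoid. Then every element of the value group |K^×| is a p-th power: for every x ∈ K with x ≠ 0, there exists y ∈ K with y ≠ 0 and |y|^p = |x|. -/
/-!
Call a nonzero `x` good if `‖x‖` is the `p`-th power of a norm. If `‖p‖ < ‖x‖ ≤ 1`, surjectivity of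
Frobenius gives `y` with `‖x - y ^ p‖ ≤ ‖p‖ < ‖x‖`, and the ultrametric inequality forces
`‖y‖ ^ p = ‖x‖`; so `x` is good. Density of the value group provides `z` with `‖p‖ < ‖z‖ < 1`, which is
therefore good. Any nonzero `x` can be multiplied by an integral power of `z` so as to land in the
annulus `‖z‖ < ‖x * z ^ n‖ ≤ 1`, whose elements are good, and good elements form a group.
-/

noncomputable section

/-- **Value group of a perfectoid field is `p`-divisible.**  Let `K` be a complete
nonarchimedean normed field extending `ℚ_p` which is perfectoid, i.e. its value group
is dense in `ℝ_{>0}` and the `p`-power Frobenius on `O_K/pO_K` is surjective, where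
`O_K = {x : K | ‖x‖ ≤ 1}`.  Then every element of the value group is a `p`-th power:
for every nonzero `x : K` there is a nonzero `y : K` with `‖y‖ ^ p = ‖x‖`. -/
theorem perfectoid_value_group_p_divisible
    (p : ℕ) [Fact p.Prime] (K : Type*) [NormedField K] [CompleteSpace K]
    [Algebra ℚ_[p] K]
    (hna : IsNonarchimedean fun x : K => ‖x‖)
    (hext : ∀ c : ℚ_[p], ‖algebraMap ℚ_[p] K c‖ = ‖c‖)
    (O : Subring K) (hO : (O : Set K) = {x : K | ‖x‖ ≤ 1})
    (hdense : ∀ r : ℝ, 0 < r → r ∈ closure {s : ℝ | ∃ x : K, x ≠ 0 ∧ ‖x‖ = s})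
    (hfrob : ∀ y : O ⧸ Ideal.span {(p : O)}, ∃ x, x ^ p = y) :
    ∀ x : K, x ≠ 0 → ∃ y : K, y ≠ 0 ∧ ‖y‖ ^ p = ‖x‖ := by
  have hmem : ∀ x : K, x ∈ O ↔ ‖x‖ ≤ 1 := fun x => by
    rw [← SetLike.mem_coe, hO, Set.mem_ofPred_eq]
  have hp1 : ‖(p : K)‖ < 1 := by
    have h := hext (p : ℚ_[p])
    rw [map_natCast] at h
    rw [h]
    exact Padic.norm_p_lt_one
  -- The annulus `‖p‖ < ‖x‖ ≤ 1`, where a `p`-th root modulo `p` determines the norm.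
  have key : ∀ x : K, ‖(p : K)‖ < ‖x‖ → ‖x‖ ≤ 1 → ∃ y : K, y ≠ 0 ∧ ‖y‖ ^ p = ‖x‖ := by
    intro x hpx hx1
    obtain ⟨y', hy'⟩ := hfrob (Ideal.Quotient.mk _ ⟨x, (hmem x).2 hx1⟩)
    obtain ⟨y, rfl⟩ := Ideal.Quotient.mk_surjective y'
    rw [← map_pow, Ideal.Quotient.eq, Ideal.mem_span_singleton] at hy'
    obtain ⟨c, hc⟩ := hy'
    have hcK : (y : K) ^ p - x = p * (c : K) := by
      simpa using congrArg (Subtype.val) hc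
    have hlt : ‖(y : K) ^ p - x‖ < ‖x‖ := by
      rw [hcK, norm_mul]
      exact (mul_le_of_le_one_right (norm_nonneg _) ((hmem _).1 c.2)).trans_lt hpx
    have heq : ‖(y : K)‖ ^ p = ‖x‖ := by
      rw [← norm_pow]
      apply le_antisymm
      · have h := hna ((y : K) ^ p - x) x
        simp only [sub_add_cancel] at h
        exact h.trans (max_le hlt.le le_rfl)
      · have h := hna (x - (y : K) ^ p) ((y : K) ^ p)
        simp only [sub_add_cancel] at h
        rw [norm_sub_rev] at h
        exact (le_max_iff.1 h).resolve_left hlt.not_ge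
    refine ⟨y, fun h0 => ?_, heq⟩
    rw [h0, norm_zero, zero_pow (Fact.out : p.Prime).ne_zero] at heq
    exact ((norm_nonneg _).trans_lt hpx).ne heq
  obtain ⟨r, hr⟩ := exists_between hp1
  obtain ⟨_, hz, z, hz0, rfl⟩ := mem_closure_iff.1
    (hdense r ((norm_nonneg _).trans_lt hr.1)) (Set.Ioo ‖(p : K)‖ 1) isOpen_Ioo hr
  obtain ⟨w, hw0, hw⟩ := key z hz.1 hz.2.le
  intro x hx0
  have hzpos : 0 < ‖z‖ := norm_pos_iff.2 hz0
  -- `‖z‖⁻¹ ^ n < ‖x‖ ≤ ‖z‖⁻¹ ^ (n + 1)`, hence `‖z‖ < ‖x * z ^ (n + 1)‖ ≤ 1`.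
  obtain ⟨n, hn1, hn2⟩ := exists_mem_Ioc_zpow (norm_pos_iff.2 hx0)
    ((one_lt_inv₀ hzpos).2 hz.2)
  have hzn : 0 < ‖z‖ ^ (n + 1) := zpow_pos hzpos _
  obtain ⟨y, hy0, hy⟩ := key (x * z ^ (n + 1))
    (by
      rw [norm_mul, norm_zpow]
      refine hz.1.trans ?_
      calc ‖z‖ = ‖z‖⁻¹ ^ n * ‖z‖ ^ (n + 1) := by
            rw [inv_zpow, zpow_add_one₀ hzpos.ne', inv_mul_cancel_left₀ (zpow_pos hzpos n).ne']
        _ < ‖x‖ * ‖z‖ ^ (n + 1) := mul_lt_mul_of_pos_right hn1 hzn)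
    (by
      rw [norm_mul, norm_zpow]
      rwa [inv_zpow, ← one_div, le_div_iff₀ hzn] at hn2)
  refine ⟨y / w ^ (n + 1), div_ne_zero hy0 (zpow_ne_zero _ hw0), ?_⟩
  rw [norm_div, norm_zpow, div_pow, hy, ← zpow_natCast, zpow_comm, zpow_natCast, hw, norm_mul,
    norm_zpow, mul_div_cancel_right₀ _ hzn.ne']
end
end

section
/- Let L be a field containing ℚ_p that is finite-dimensional as a ℚ_p-vector space, equipped with the unique absolute value extending the p-adic absolute value on ℚ_p. Fix an algebraic closure of L and let L_∞ = L(μ_{p^∞}) be the subfield generated over L by all p-power roots of unity. Let K be the completion of L_∞ with respect to the extended absolute value, with valuation ring O_K = {x ∈ K : |x| ≤ 1}. Then K is perfectoid: the value group |K^×| = {|x| : x ∈ K, x ≠ 0} is dense in ℝ_{>0} and the p-power Frobenius map x ↦ x^p on O_K/pO_K is surjective. -/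
/-!
Call Frobenius surjective on a valued field if every integral element is a `p`-th power up to an
error of norm at most some fixed `c < 1`. When the value group is dense, successive approximation
improves this to surjectivity modulo `p` (`FrobSurj.approx_p`). The norms `‖ζ - 1‖` of `p`-power
roots of unity `ζ` tend to `1`, which gives the density of the value group of `K`. Since
`L(μ_{p^∞})` is dense in `K`, it remains to show that Frobenius is surjective on it, and it is a
finite extension of `F = ℚ_p(μ_{p^∞})`, which embeds isometrically into the algebraic closure
`PadicAlgCl p` by uniqueness of extensions of the absolute value. So the theorem reduces to the
claim that every finite extension `M` of `F` inside `PadicAlgCl p` has surjective Frobenius, a weak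
form of almost purity, proved by the following steps.

* For `F` itself, the valuation ring of `ℚ_p(ζ)` is `ℤ_p[ζ - 1]`, and `ζ - 1` is congruent to
  `(ζ ^ (1 / p) - 1) ^ p` modulo `p` (`frobSurj_cycTower`).
* Frobenius surjectivity goes up extensions of degree prime to `p` (`frobSurj_of_finrank`): take
  approximate `p`-th roots of the coefficients of the minimal polynomial of `α`, and average those
  roots of the new polynomial whose `p`-th powers are close to `α`. Averaging is harmless because
  approximate `p`-th roots of one element are close together (`average_approx`).
* Frobenius surjectivity goes up cyclic extensions of degree `p` of fields containing `μ_{p^∞}`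
  (`FrobSurj.kummer`): Frobenius surjectivity of the base moves the Kummer generator almost into
  the disc `‖t ^ p - 1‖ ≤ ‖ζ_p - 1‖ ^ p`. There `w = (t - 1) / (ζ_p - 1)` satisfies an almost
  integral Artin–Schreier equation, its conjugates have mutual distance `1`, so integral elements
  are almost integral combinations of powers of `w`, and the equation shows that `w` is an
  approximate `p`-th power.
* Let `N / F` be the Galois closure of `M`. The fixed field of a Sylow `p`-subgroup has degree
  prime to `p` over `F`, and from there cyclic steps of degree `p` reach the fixed field of every
  `p`-subgroup. Averaging over a group orbit descends from the fixed field of a Sylow `p`-subgroup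
  of `Gal(N / M)` to `M` (`frobSurj_intermediateField`).
-/

noncomputable section

set_option linter.unusedSectionVars false

/-! ### The `p`-power map on ultrametric fields -/

section NormLemmas

variable {p : ℕ} [hpr : Fact p.Prime] {E : Type*} [NormedField E] [IsUltrametricDist E]

lemma um_sub_le {x y : E} {C : ℝ} (hx : ‖x‖ ≤ C) (hy : ‖y‖ ≤ C) : ‖x - y‖ ≤ C := by
  rw [sub_eq_add_neg]
  exact (IsUltrametricDist.norm_add_le_max _ _).trans (max_le hx (by rwa [norm_neg]))

lemma um_add_le {x y : E} {C : ℝ} (hx : ‖x‖ ≤ C) (hy : ‖y‖ ≤ C) : ‖x + y‖ ≤ C :=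
  (IsUltrametricDist.norm_add_le_max _ _).trans (max_le hx hy)

lemma um_natCast_le (n : ℕ) : ‖(n : E)‖ ≤ 1 := IsUltrametricDist.norm_natCast_le_one E n

lemma norm_choose_le {i : ℕ} (h0 : i ≠ 0) (hi : i < p) : ‖((p.choose i : ℕ) : E)‖ ≤ ‖(p : E)‖ := by
  obtain ⟨k, hk⟩ := hpr.out.dvd_choose_self h0 hi
  rw [hk, Nat.cast_mul, norm_mul]
  exact mul_le_of_le_one_right (norm_nonneg _) (um_natCast_le k)

/-- Additivity of the `p`-power map up to `p`, with explicit control of the error. -/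
lemma norm_add_pow_sub_le {x y : E} {R : ℝ} (hx : ‖x‖ ≤ R) (hy : ‖y‖ ≤ R) :
    ‖(x + y) ^ p - (x ^ p + y ^ p)‖ ≤ ‖(p : E)‖ * R ^ p := by
  have hR : 0 ≤ R := (norm_nonneg _).trans hx
  have h1 := hpr.out.one_lt
  have key : (x + y) ^ p - (x ^ p + y ^ p)
      = ∑ i ∈ Finset.Ico 1 p, x ^ i * y ^ (p - i) * (p.choose i : E) := by
    rw [add_pow, Finset.sum_range_succ, Finset.range_eq_Ico, Finset.sum_eq_sum_Ico_succ_bot (by lia)]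
    simp
    ring
  rw [key]
  refine IsUltrametricDist.norm_sum_le_of_forall_le_of_nonneg (by positivity) fun i hi => ?_
  rw [Finset.mem_Ico] at hi
  rw [norm_mul, norm_mul, norm_pow, norm_pow, mul_comm]
  have h2 : R ^ p = R ^ i * R ^ (p - i) := by rw [← pow_add]; congr 1; lia
  rw [h2]
  gcongr
  exact norm_choose_le (by lia) hi.2

lemma norm_sum_pow_sub_le {ι : Type*} (s : Finset ι) (f : ι → E) {R : ℝ} (hR : 0 ≤ R)
    (hf : ∀ i ∈ s, ‖f i‖ ≤ R) :
    ‖(∑ i ∈ s, f i) ^ p - ∑ i ∈ s, f i ^ p‖ ≤ ‖(p : E)‖ * R ^ p := by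
  classical
  induction s using Finset.induction_on with
  | empty => simp [hpr.out.ne_zero]; positivity
  | insert a s ha ih =>
    rw [Finset.sum_insert ha, Finset.sum_insert ha]
    have hs : ∀ i ∈ s, ‖f i‖ ≤ R := fun i hi => hf i (Finset.mem_insert_of_mem hi)
    have h1 := norm_add_pow_sub_le (p := p) (hf a (Finset.mem_insert_self a s))
      (IsUltrametricDist.norm_sum_le_of_forall_le_of_nonneg hR hs)
    have h2 := um_add_le h1 (ih hs)
    convert h2 using 2
    ring

/-- The binomial expansion of `(1 + z) ^ p` with the linear term kept. -/
lemma norm_one_add_pow_sub_le {z : E} (hz : ‖z‖ ≤ 1) :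
    ‖(1 + z) ^ p - (1 + z ^ p + p * z)‖ ≤ ‖(p : E)‖ * ‖z‖ ^ 2 := by
  have h1 := hpr.out.two_le
  have key : (1 + z) ^ p - (1 + z ^ p + p * z)
      = ∑ i ∈ Finset.Ico 2 p, z ^ i * (p.choose i : E) := by
    rw [add_comm 1 z, add_pow, Finset.sum_range_succ, Finset.range_eq_Ico,
      Finset.sum_eq_sum_Ico_succ_bot (by lia), Finset.sum_eq_sum_Ico_succ_bot (by lia)]
    simp
    ring
  rw [key]
  refine IsUltrametricDist.norm_sum_le_of_forall_le_of_nonneg (by positivity) fun i hi => ?_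
  rw [Finset.mem_Ico] at hi
  rw [norm_mul, norm_pow, mul_comm]
  gcongr ?_ * ?_
  · exact norm_choose_le (by lia) hi.2
  · exact pow_le_pow_of_le_one (norm_nonneg _) hz hi.1

lemma norm_sub_pow_le {x y : E} {R : ℝ} (hx : ‖x‖ ≤ R) (hy : ‖y‖ ≤ R) :
    ‖x - y‖ ^ p ≤ max ‖x ^ p - y ^ p‖ (‖(p : E)‖ * R ^ p) := by
  have h := norm_add_pow_sub_le (p := p) (um_sub_le hx hy) hy
  rw [← norm_pow]
  have e : (x - y) ^ p = (x ^ p - y ^ p) - ((x - y + y) ^ p - ((x - y) ^ p + y ^ p)) := by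
    rw [sub_add_cancel]; ring
  rw [e]
  exact um_sub_le (le_max_left _ _) (h.trans (le_max_right _ _))

lemma norm_pow_sub_pow_le_s14 {x y : E} {R : ℝ} (hx : ‖x‖ ≤ R) (hy : ‖y‖ ≤ R) :
    ‖x ^ p - y ^ p‖ ≤ max (‖x - y‖ ^ p) (‖(p : E)‖ * R ^ p) := by
  have h := norm_add_pow_sub_le (p := p) (um_sub_le hx hy) hy
  have e : x ^ p - y ^ p = (x - y) ^ p + ((x - y + y) ^ p - ((x - y) ^ p + y ^ p)) := by
    rw [sub_add_cancel]; ring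
  rw [e]
  refine um_add_le ?_ (h.trans (le_max_right _ _))
  rw [norm_pow]; exact le_max_left _ _

lemma um_multiset_sum_le {s : Multiset E} {C : ℝ} (hC : 0 ≤ C) (h : ∀ x ∈ s, ‖x‖ ≤ C) :
    ‖s.sum‖ ≤ C := by
  induction s using Multiset.induction_on with
  | empty => simpa
  | cons a s ih =>
    rw [Multiset.sum_cons]
    exact um_add_le (h a (by simp)) (ih fun x hx => h x (by simp [hx]))

lemma norm_natCast_eq_one (hp : ‖(p : E)‖ < 1) {n : ℕ} (hn : ¬ p ∣ n) : ‖(n : E)‖ = 1 := by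
  have hc : IsCoprime (p : ℤ) n := by
    rw [Nat.isCoprime_iff_coprime]
    exact (Nat.Prime.coprime_iff_not_dvd hpr.out).2 hn
  obtain ⟨a, b, hab⟩ := hc
  refine le_antisymm (um_natCast_le n) ?_
  by_contra! hlt
  have h1 : ((a : E) * p + b * n) = 1 := by exact_mod_cast congrArg (Int.cast (R := E)) hab
  have ha := IsUltrametricDist.norm_intCast_le_one E a
  have hb := IsUltrametricDist.norm_intCast_le_one E b
  have h2 : ‖(a : E) * p + b * n‖ < 1 := by
    refine (IsUltrametricDist.norm_add_le_max _ _).trans_lt (max_lt ?_ ?_)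
    · rw [norm_mul]; nlinarith [norm_nonneg (p : E), norm_nonneg (a : E)]
    · rw [norm_mul]; nlinarith [norm_nonneg (n : E), norm_nonneg (b : E)]
  rw [h1, norm_one] at h2
  exact lt_irrefl _ h2

lemma norm_le_one_of_pow_sub {a b : E} {c : ℝ} (hc : c ≤ 1) (ha : ‖a‖ ≤ 1)
    (h : ‖a - b ^ p‖ ≤ c) : ‖b‖ ≤ 1 := by
  have h1 : ‖b ^ p‖ ≤ 1 := by
    have := um_sub_le ha (h.trans hc)
    simpa using this
  rw [norm_pow] at h1
  exact (pow_le_one_iff_of_nonneg (norm_nonneg _) hpr.out.ne_zero).1 h1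

/-- Approximate `p`-th roots of `a` are so close together that their average, when their number
is prime to `p`, is again an approximate `p`-th root of the same quality. -/
lemma average_approx (hp : ‖(p : E)‖ < 1) {a : E} {c : ℝ} (ha : ‖a‖ ≤ 1) (hc1 : c ≤ 1)
    (hpc : ‖(p : E)‖ ≤ c) (s : Multiset E) (hs : ¬ p ∣ Multiset.card s)
    (h : ∀ b ∈ s, ‖a - b ^ p‖ ≤ c) :
    ‖a - ((Multiset.card s : E)⁻¹ * s.sum) ^ p‖ ≤ c := by
  set n := Multiset.card s with hn
  have hn1 : ‖(n : E)‖ = 1 := norm_natCast_eq_one hp hs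
  have hn0 : (n : E) ≠ 0 := by rw [← norm_ne_zero_iff, hn1]; exact one_ne_zero
  have hc0 : 0 ≤ c := (norm_nonneg _).trans hpc
  have hns : n ≠ 0 := fun h0 => hs (h0 ▸ dvd_zero p)
  obtain ⟨b, hb⟩ : ∃ b, b ∈ s := Multiset.card_pos_iff_exists_mem.1 (Nat.pos_of_ne_zero hns)
  have hle : ∀ b ∈ s, ‖b‖ ≤ 1 := fun b hb => norm_le_one_of_pow_sub hc1 ha (h b hb)
  set y := (n : E)⁻¹ * s.sum with hy
  have hyle : ‖y‖ ≤ 1 := by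
    rw [hy, norm_mul, norm_inv, hn1, inv_one, one_mul]
    exact um_multiset_sum_le zero_le_one hle
  have e : b - y = (n : E)⁻¹ * (s.map fun b' => b - b').sum := by
    rw [Multiset.sum_map_sub, Multiset.map_const', Multiset.sum_replicate, Multiset.map_id', hy,
      nsmul_eq_mul, ← hn]
    field_simp
  have hp0 : p ≠ 0 := hpr.out.ne_zero
  have hdiff : ∀ b' ∈ s, ‖b - b'‖ ^ p ≤ c := fun b' hb' => by
    refine (norm_sub_pow_le (hle b hb) (hle b' hb')).trans (max_le ?_ (by simpa using hpc))
    have e2 : b ^ p - b' ^ p = (a - b' ^ p) - (a - b ^ p) := by ring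
    rw [e2]
    exact um_sub_le (h b' hb') (h b hb)
  set d := c ^ ((p : ℝ)⁻¹) with hd
  have hdp : d ^ p = c := Real.rpow_inv_natCast_pow hc0 hp0
  have hd0 : 0 ≤ d := Real.rpow_nonneg hc0 _
  have hby : ‖b - y‖ ≤ d := by
    rw [e, norm_mul, norm_inv, hn1, inv_one, one_mul]
    refine um_multiset_sum_le hd0 fun x hx => ?_
    obtain ⟨b', hb', rfl⟩ := Multiset.mem_map.1 hx
    exact le_of_pow_le_pow_left₀ hp0 hd0 (hdp ▸ hdiff b' hb')
  have h3 := norm_pow_sub_pow_le_s14 (p := p) (hle b hb) hyle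
  have h4 : ‖b ^ p - y ^ p‖ ≤ c := by
    refine h3.trans (max_le ?_ (by simpa using hpc))
    rw [← hdp]; gcongr
  have := um_add_le (h b hb) h4
  simpa using this

end NormLemmas

/-! ### Approximate surjectivity of Frobenius -/

section ApproxFrob

variable {p : ℕ} [hpr : Fact p.Prime] {E : Type*} [NormedField E] [IsUltrametricDist E]

/-- Every element of norm at most `1` of `S` is a `p`-th power of an element of `S` up to an
error of norm at most `c`. -/
def ApproxFrob (p : ℕ) {E : Type*} [NormedField E] (S : Set E) (c : ℝ) : Prop :=
  ∀ x ∈ S, ‖x‖ ≤ 1 → ∃ y ∈ S, ‖x - y ^ p‖ ≤ c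

/-- The Frobenius of `S` is surjective modulo some element of norm less than `1`. -/
def FrobSurj (p : ℕ) {E : Type*} [NormedField E] (S : Set E) : Prop :=
  ∃ c < 1, ApproxFrob p S c

/-- Norms of elements of `S` accumulate at `1` from below. -/
def NormDense {E : Type*} [NormedField E] (S : Set E) : Prop :=
  ∀ ε < (1 : ℝ), ∃ d ∈ S, ε < ‖d‖ ∧ ‖d‖ < 1

lemma ApproxFrob.mono {S : Set E} {c c' : ℝ} (h : ApproxFrob p S c) (hc : c ≤ c') :
    ApproxFrob p S c' := fun x hx hx1 => by
  obtain ⟨y, hy, hxy⟩ := h x hx hx1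
  exact ⟨y, hy, hxy.trans hc⟩

lemma NormDense.exists_zpow {S : Subfield E} (hS : NormDense (S : Set E)) {ε r : ℝ} (hε : ε < 1)
    (hr : 0 < r) : ∃ d ∈ S, d ≠ 0 ∧ ‖d‖ ≤ r ∧ ε * r < ‖d‖ := by
  obtain ⟨d, hd, h1, h2⟩ := hS (max ε 0) (max_lt hε one_pos)
  have hd0 : 0 < ‖d‖ := (le_max_right _ _).trans_lt h1
  have hεd : ε < ‖d‖ := (le_max_left _ _).trans_lt h1
  obtain ⟨n, hn1, hn2⟩ := exists_mem_Ico_zpow hr (one_lt_inv₀ hd0 |>.2 h2)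
  refine ⟨(d⁻¹) ^ n, zpow_mem (inv_mem hd) n, ?_, ?_, ?_⟩
  · exact zpow_ne_zero _ (inv_ne_zero (norm_pos_iff.1 hd0))
  · rwa [norm_zpow, norm_inv]
  · rw [norm_zpow, norm_inv]
    rw [zpow_add_one₀ (inv_ne_zero hd0.ne')] at hn2
    have h3 : ‖d‖ * r < ‖d‖⁻¹ ^ n := by
      calc ‖d‖ * r < ‖d‖ * (‖d‖⁻¹ ^ n * ‖d‖⁻¹) := by gcongr
        _ = _ := by field_simp
    nlinarith

/-- Rescaling by `p`-th powers makes the error in `FrobSurj` relative to the size of `x`. -/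
lemma FrobSurj.relative {S : Subfield E} (hS : FrobSurj p (S : Set E))
    (hd : NormDense (S : Set E)) :
    ∃ c, 0 < c ∧ c < 1 ∧ ∀ x ∈ S, ∃ y ∈ S, ‖x - y ^ p‖ ≤ c * ‖x‖ := by
  obtain ⟨c, hc1, hc⟩ := hS
  have hp0 : p ≠ 0 := hpr.out.ne_zero
  obtain ⟨c', hc'0, hc', hcc'⟩ : ∃ c', 0 < c' ∧ c' < 1 ∧ c ≤ c' * c' := by
    rcases le_or_gt c 0 with h | h
    · exact ⟨1 / 2, by norm_num, by norm_num, h.trans (by norm_num)⟩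
    · exact ⟨√c, Real.sqrt_pos.2 h, by rw [Real.sqrt_lt' one_pos]; simpa,
        (Real.mul_self_sqrt h.le).ge⟩
  refine ⟨c', hc'0, hc', fun x hx => ?_⟩
  by_cases hx0 : x = 0
  · exact ⟨0, zero_mem S, by simp [hx0, hp0]⟩
  have hxn : 0 < ‖x‖ := norm_pos_iff.2 hx0
  -- `d` is chosen with `c' / ‖x‖ < ‖d ^ p‖ ≤ 1 / ‖x‖`
  set ε := c' ^ ((p : ℝ)⁻¹) with hε
  have hεp : ε ^ p = c' := Real.rpow_inv_natCast_pow hc'0.le hp0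
  have hε0 : 0 ≤ ε := Real.rpow_nonneg hc'0.le _
  have hε1 : ε < 1 := by
    by_contra! h
    exact absurd (hεp ▸ one_le_pow₀ h) (not_le.2 hc')
  set r := (‖x‖⁻¹) ^ ((p : ℝ)⁻¹) with hr
  have hrp : r ^ p = ‖x‖⁻¹ := Real.rpow_inv_natCast_pow (by positivity) hp0
  obtain ⟨d, hdS, hd0, hd1, hd2⟩ := hd.exists_zpow hε1 (r := r) (by positivity)
  have h1 : ‖d‖ ^ p ≤ ‖x‖⁻¹ := hrp ▸ pow_le_pow_left₀ (norm_nonneg _) hd1 p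
  have h2 : c' * ‖x‖⁻¹ ≤ ‖d‖ ^ p := by
    rw [← hrp, ← hεp, ← mul_pow]
    exact pow_le_pow_left₀ (by positivity) hd2.le p
  have hdp : 0 < ‖d‖ ^ p := pow_pos (norm_pos_iff.2 hd0) p
  obtain ⟨y, hy, hxy⟩ := hc (d ^ p * x) (mul_mem (pow_mem hdS p) hx) (by
    rw [norm_mul, norm_pow]
    calc _ ≤ ‖x‖⁻¹ * ‖x‖ := by gcongr
      _ = 1 := inv_mul_cancel₀ hxn.ne')
  refine ⟨y / d, div_mem hy hdS, ?_⟩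
  have e : x - (y / d) ^ p = (d ^ p)⁻¹ * (d ^ p * x - y ^ p) := by
    rw [div_pow]; field_simp
  rw [e, norm_mul, norm_inv, norm_pow, inv_mul_le_iff₀ hdp]
  calc _ ≤ c' * c' := hxy.trans hcc'
    _ = c' * (c' * ‖x‖⁻¹ * ‖x‖) := by field_simp
    _ ≤ c' * (‖d‖ ^ p * ‖x‖) := by gcongr
    _ = _ := by ring

/-- Successive approximation improves surjectivity modulo some element to surjectivity
modulo `p`. -/
lemma FrobSurj.approx_p {S : Subfield E} (hS : FrobSurj p (S : Set E))
    (hd : NormDense (S : Set E)) (hp : ‖(p : E)‖ < 1) (hp' : (p : E) ≠ 0) :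
    ApproxFrob p (S : Set E) ‖(p : E)‖ := by
  obtain ⟨c, hc0, hc1, hc⟩ := hS.relative hd
  intro x hx hx1
  have key : ∀ n : ℕ, ∃ y ∈ S, ‖x - y ^ p‖ ≤ max ‖(p : E)‖ (c ^ n) := by
    intro n
    induction n with
    | zero => exact ⟨0, zero_mem S, by simp [hpr.out.ne_zero, hx1]⟩
    | succ n ih =>
      obtain ⟨y, hy, hxy⟩ := ih
      have hm : max ‖(p : E)‖ (c ^ n) ≤ 1 := max_le hp.le (pow_le_one₀ hc0.le hc1.le)
      obtain ⟨z, hz, hyz⟩ := hc (x - y ^ p) (sub_mem hx (pow_mem hy p))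
      refine ⟨y + z, add_mem hy hz, ?_⟩
      have hy1 := norm_le_one_of_pow_sub hm hx1 hxy
      have hz1 : ‖z‖ ≤ 1 := by
        refine norm_le_one_of_pow_sub le_rfl (hxy.trans hm) (hyz.trans ?_)
        exact mul_le_one₀ hc1.le (norm_nonneg _) (hxy.trans hm)
      have h3 := norm_add_pow_sub_le (p := p) hy1 hz1
      rw [one_pow, mul_one] at h3
      have e : x - (y + z) ^ p = (x - y ^ p - z ^ p) - ((y + z) ^ p - (y ^ p + z ^ p)) := by ring
      rw [e]
      refine um_sub_le (hyz.trans ?_) (h3.trans (le_max_left _ _))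
      calc c * ‖x - y ^ p‖ ≤ c * max ‖(p : E)‖ (c ^ n) := by gcongr
        _ = max (c * ‖(p : E)‖) (c ^ (n + 1)) := by
          rw [mul_max_of_nonneg _ _ hc0.le, pow_succ']
        _ ≤ _ := max_le_max_right _ (mul_le_of_le_one_left (norm_nonneg _) hc1.le)
  obtain ⟨n, hn⟩ := exists_pow_lt_of_lt_one (norm_pos_iff.2 hp') hc1
  obtain ⟨y, hy, hxy⟩ := key n
  exact ⟨y, hy, hxy.trans (max_le le_rfl hn.le)⟩

end ApproxFrob

section RootsOfUnity

variable {p : ℕ} [hpr : Fact p.Prime] {E : Type*} [NormedField E] [IsUltrametricDist E]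

lemma norm_rootOfUnity {ζ : E} {m : ℕ} (hm : m ≠ 0) (h : ζ ^ m = 1) : ‖ζ‖ = 1 := by
  have : ‖ζ‖ ^ m = 1 := by rw [← norm_pow, h, norm_one]
  exact (pow_eq_one_iff_of_nonneg (norm_nonneg _) hm).1 this

lemma norm_pow_sub_one_le {ζ : E} (h : ‖ζ‖ = 1) (i : ℕ) : ‖ζ ^ i - 1‖ ≤ ‖ζ - 1‖ := by
  rw [← geom_sum_mul ζ i, norm_mul]
  refine mul_le_of_le_one_left (norm_nonneg _) ?_
  exact IsUltrametricDist.norm_sum_le_of_forall_le_of_nonneg zero_le_one fun j _ => by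
    rw [norm_pow, h, one_pow]

lemma norm_primitiveRoot_sub_one_eq {ζ μ : E} {m : ℕ} (hm : m ≠ 0) (hζ : IsPrimitiveRoot ζ m)
    (hμ : IsPrimitiveRoot μ m) : ‖μ - 1‖ = ‖ζ - 1‖ := by
  have : NeZero m := ⟨hm⟩
  have hn := norm_rootOfUnity hm hζ.pow_eq_one
  have hn' := norm_rootOfUnity hm hμ.pow_eq_one
  obtain ⟨i, -, rfl⟩ := hζ.eq_pow_of_pow_eq_one hμ.pow_eq_one
  obtain ⟨j, -, hj⟩ := hμ.eq_pow_of_pow_eq_one hζ.pow_eq_one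
  refine le_antisymm (norm_pow_sub_one_le hn i) ?_
  conv_lhs => rw [← hj]
  exact norm_pow_sub_one_le hn' j

/-- The product of `1 - μ` over the primitive `p ^ (n + 1)`-th roots of unity `μ` equals `p`, and
all factors have the same norm. -/
lemma norm_primitiveRoot_sub_one_pow {ζ : E} {n : ℕ} (hζ : IsPrimitiveRoot ζ (p ^ (n + 1))) :
    ‖ζ - 1‖ ^ (p ^ (n + 1)).totient = ‖(p : E)‖ := by
  have h0 : p ^ (n + 1) ≠ 0 := pow_ne_zero _ hpr.out.ne_zero
  have h1 := Polynomial.eval_one_cyclotomic_prime_pow (R := E) (p := p) n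
  rw [Polynomial.cyclotomic_eq_prod_X_sub_primitiveRoots hζ, Polynomial.eval_prod] at h1
  have h2 := congrArg norm h1
  rw [norm_prod, Finset.prod_congr rfl (g := fun _ => ‖ζ - 1‖), Finset.prod_const,
    hζ.card_primitiveRoots] at h2
  · exact h2
  · intro μ hμ
    rw [mem_primitiveRoots (Nat.pos_of_ne_zero h0)] at hμ
    rw [Polynomial.eval_sub, Polynomial.eval_X, Polynomial.eval_C, norm_sub_rev]
    exact norm_primitiveRoot_sub_one_eq h0 hζ hμ

/-- A subfield containing all `p`-power roots of unity has norms accumulating at `1`, since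
`‖ζ - 1‖ ^ φ(p ^ n) = ‖p‖` for `ζ` of order `p ^ n`. -/
lemma normDense_of_roots {S : Subfield E} (hp : ‖(p : E)‖ < 1) (hp' : (p : E) ≠ 0)
    (h : ∀ n : ℕ, ∃ ζ ∈ S, IsPrimitiveRoot ζ (p ^ n)) : NormDense (S : Set E) := by
  intro ε hε
  rcases lt_or_ge ε 0 with h0 | h0
  · exact ⟨0, zero_mem S, by simpa using h0⟩
  obtain ⟨n, hn⟩ := exists_pow_lt_of_lt_one (norm_pos_iff.2 hp') hε
  obtain ⟨ζ, hζS, hζ⟩ := h (n + 1)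
  refine ⟨ζ - 1, sub_mem hζS (one_mem S), ?_, ?_⟩
  · have h1 := norm_primitiveRoot_sub_one_pow hζ
    have hnt : n ≤ (p ^ (n + 1)).totient := by
      rw [Nat.totient_prime_pow_succ hpr.out]
      have := hpr.out.two_le
      calc n ≤ p ^ n := (Nat.lt_pow_self hpr.out.one_lt).le
        _ = p ^ n * 1 := (mul_one _).symm
        _ ≤ _ := by gcongr; lia
    by_contra! hle
    have : ‖ζ - 1‖ ^ (p ^ (n + 1)).totient ≤ ε ^ n :=
      (pow_le_pow_left₀ (norm_nonneg _) hle _).trans (pow_le_pow_of_le_one h0 hε.le hnt)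
    linarith
  · by_contra! hle
    have := norm_primitiveRoot_sub_one_pow hζ ▸ one_le_pow₀ (n := (p ^ (n + 1)).totient) hle
    linarith

end RootsOfUnity

/-! ### Kummer theory near the unit -/

section Kummer

variable {p : ℕ} [hpr : Fact p.Prime] {E : Type*} [NormedField E] [IsUltrametricDist E]

/-- Modulo `p`-th powers, `a` can be moved arbitrarily close to the disc
`‖a - 1‖ ≤ ‖ζ_p - 1‖ ^ p`, on which `a ^ (1 / p)` generates an unramified extension. -/
lemma exists_near_one {M : Subfield E} {c r l : ℝ} (hc1 : c < 1)
    (hc : ∀ x ∈ M, ∃ y ∈ M, ‖x - y ^ p‖ ≤ c * ‖x‖) (hr : 1 < r) (hl0 : 0 < l)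
    (hl : l ^ (p - 1) = ‖(p : E)‖) {a : E} (ha : a ∈ M) (ha0 : a ≠ 0) :
    ∃ b ∈ M, b ≠ 0 ∧ ‖a / b ^ p - 1‖ ≤ (l * r) ^ p := by
  have hp0 : p ≠ 0 := hpr.out.ne_zero
  have hp2 := hpr.out.two_le
  have hr0 : 0 < r := one_pos.trans hr
  set κ := max c r⁻¹ with hκ
  have hκ1 : κ < 1 := max_lt hc1 (inv_lt_one_of_one_lt₀ hr)
  have hκ0 : 0 < κ := (inv_pos.2 hr0).trans_le (le_max_right _ _)
  have key : ∀ n : ℕ, ∃ b ∈ M, b ≠ 0 ∧ ‖a / b ^ p - 1‖ ≤ max ((l * r) ^ p) (κ ^ (n + 1)) := by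
    intro n
    induction n with
    | zero =>
      obtain ⟨b, hb, hab⟩ := hc a ha
      have han : 0 < ‖a‖ := norm_pos_iff.2 ha0
      have hlt : ‖a - b ^ p‖ < ‖a‖ := hab.trans_lt (mul_lt_of_lt_one_left han hc1)
      have hbn : ‖b ^ p‖ = ‖a‖ := by
        rw [norm_sub_rev] at hlt
        exact IsUltrametricDist.norm_eq_of_add_norm_lt_max (y := -a) (by
          rw [← sub_eq_add_neg, norm_neg]; exact hlt.trans_le (le_max_right _ _)) |>.trans
            (norm_neg a)
      have hb0 : b ≠ 0 := by
        rintro rfl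
        rw [zero_pow hp0, norm_zero] at hbn
        exact han.ne hbn
      refine ⟨b, hb, hb0, le_max_of_le_right ?_⟩
      have hbp : b ^ p ≠ 0 := pow_ne_zero p hb0
      rw [div_sub_one hbp, norm_div, hbn, div_le_iff₀ han, zero_add, pow_one]
      exact hab.trans (by gcongr; exact le_max_left _ _)
    | succ n ih =>
      obtain ⟨b, hb, hb0, hab⟩ := ih
      set x := a / b ^ p - 1 with hx
      have hxM : x ∈ M := sub_mem (div_mem ha (pow_mem hb p)) (one_mem M)
      rcases le_or_gt ‖x‖ ((l * r) ^ p) with hle | hgt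
      · exact ⟨b, hb, hb0, le_max_of_le_left hle⟩
      have hxκ : ‖x‖ ≤ κ ^ (n + 1) := (le_max_iff.1 hab).resolve_left (not_le.2 hgt)
      have hx1 : ‖x‖ < 1 := hxκ.trans_lt (pow_lt_one₀ hκ0.le hκ1 n.succ_ne_zero)
      obtain ⟨y, hy, hxy⟩ := hc x hxM
      have hyp : ‖y‖ ^ p ≤ ‖x‖ := by
        rw [← norm_pow]
        have := um_sub_le (le_refl ‖x‖)
          (hxy.trans (mul_le_of_le_one_left (norm_nonneg _) hc1.le))
        simpa using this
      have hy1 : ‖y‖ < 1 := by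
        by_contra! h
        exact absurd ((one_le_pow₀ h).trans hyp) (not_le.2 hx1)
      have h1y : ‖1 + y‖ = 1 := by
        rw [IsUltrametricDist.norm_add_eq_max_of_norm_ne_norm (by rw [norm_one]; exact hy1.ne'),
          norm_one, max_eq_left hy1.le]
      have h1y0 : 1 + y ≠ 0 := by rw [← norm_ne_zero_iff, h1y]; exact one_ne_zero
      -- above the critical radius, the linear term `p * y` is negligible against `x`
      have hpy : ‖(p : E)‖ * ‖y‖ ≤ κ * ‖x‖ := by
        refine le_of_pow_le_pow_left₀ hp0 (by positivity) ?_
        have e1 : ‖(p : E)‖ ^ p ≤ κ ^ p * ‖x‖ ^ (p - 1) := by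
          have e2 : ((l * r) ^ p) ^ (p - 1) ≤ ‖x‖ ^ (p - 1) :=
            pow_le_pow_left₀ (by positivity) hgt.le _
          have e3 : ((l * r) ^ p) ^ (p - 1) = ‖(p : E)‖ ^ p * (r ^ p) ^ (p - 1) := by
            rw [← hl]; ring
          have e4 : r ^ p ≤ (r ^ p) ^ (p - 1) :=
            le_self_pow₀ (one_le_pow₀ hr.le) (by lia)
          have e5 : 1 ≤ κ ^ p * r ^ p := by
            rw [← mul_pow]
            refine one_le_pow₀ ?_
            calc 1 = r⁻¹ * r := (inv_mul_cancel₀ hr0.ne').symm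
              _ ≤ κ * r := by gcongr; exact le_max_right _ _
          calc ‖(p : E)‖ ^ p = ‖(p : E)‖ ^ p * 1 := (mul_one _).symm
            _ ≤ ‖(p : E)‖ ^ p * (κ ^ p * (r ^ p) ^ (p - 1)) := by
              gcongr
              exact e5.trans (by gcongr)
            _ = κ ^ p * ((l * r) ^ p) ^ (p - 1) := by rw [e3]; ring
            _ ≤ _ := by gcongr
        calc (‖(p : E)‖ * ‖y‖) ^ p = ‖(p : E)‖ ^ p * ‖y‖ ^ p := mul_pow _ _ _
          _ ≤ κ ^ p * ‖x‖ ^ (p - 1) * ‖x‖ := by gcongr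
          _ = κ ^ p * (‖x‖ ^ (p - 1) * ‖x‖) := by ring
          _ = (κ * ‖x‖) ^ p := by
            rw [← pow_succ, Nat.sub_add_cancel (by lia), mul_pow]
      refine ⟨b * (1 + y), mul_mem hb (add_mem (one_mem M) hy), mul_ne_zero hb0 h1y0,
        le_max_of_le_right ?_⟩
      have hbp : b ^ p ≠ 0 := pow_ne_zero p hb0
      have h1yp : (1 + y) ^ p ≠ 0 := pow_ne_zero p h1y0
      have e : a / (b * (1 + y)) ^ p - 1
          = ((x - y ^ p) - p * y - ((1 + y) ^ p - (1 + y ^ p + p * y))) / (1 + y) ^ p := by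
        rw [hx, mul_pow]; field_simp; ring
      rw [e, norm_div, norm_pow, h1y, one_pow, div_one]
      have hlast : κ * ‖x‖ ≤ κ ^ (n + 1 + 1) := by
        rw [pow_succ' κ (n + 1)]; gcongr
      refine le_trans ?_ hlast
      refine um_sub_le (um_sub_le (hxy.trans (by gcongr; exact le_max_left _ _)) ?_) ?_
      · rw [norm_mul]; exact hpy
      · refine (norm_one_add_pow_sub_le hy1.le).trans (le_trans ?_ hpy)
        gcongr
        rw [pow_two]
        exact mul_le_of_le_one_left (norm_nonneg _) hy1.le
  obtain ⟨n, hn⟩ := exists_pow_lt_of_lt_one (show 0 < (l * r) ^ p by positivity) hκ1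
  obtain ⟨b, hb, hb0, hab⟩ := key n
  refine ⟨b, hb, hb0, hab.trans (max_le le_rfl ?_)⟩
  exact (pow_le_pow_of_le_one hκ0.le hκ1.le n.le_succ).trans hn.le

/-- If `t ^ p` is close enough to `1`, then `w = (t - 1) / L`, with `L` of the size of `ζ_p - 1`,
satisfies an approximate Artin–Schreier equation `w ^ p + v * w = u` with `‖v‖ = 1` and `‖u‖`
at most slightly larger than `1`. -/
lemma artinSchreier_of_near_one {t L : E} {r : ℝ} (hr : 1 < r) (hL0 : L ≠ 0)
    (hL : ‖L‖ ^ (p - 1) = ‖(p : E)‖) (hLr : ‖L‖ * r < 1) (ht : ‖t ^ p - 1‖ ≤ (‖L‖ * r) ^ p) :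
    ‖(t - 1) / L‖ ≤ r ∧
      ‖((t - 1) / L) ^ p + p / L ^ (p - 1) * ((t - 1) / L) - (t ^ p - 1) / L ^ p‖ ≤
        ‖L‖ * r ^ 2 := by
  have hp0 : p ≠ 0 := hpr.out.ne_zero
  have hp2 := hpr.out.two_le
  have hr0 : 0 < r := one_pos.trans hr
  have hLn : 0 < ‖L‖ := norm_pos_iff.2 hL0
  have hL1 : ‖L‖ < 1 := lt_of_le_of_lt (le_mul_of_one_le_right hLn.le hr.le) hLr
  have htp : ‖t‖ ≤ 1 := by
    refine norm_le_one_of_pow_sub (p := p) (a := 1) (c := 1) le_rfl norm_one.le ?_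
    rw [norm_sub_rev]
    exact ht.trans (pow_le_one₀ (by positivity) hLr.le)
  set w := (t - 1) / L with hw
  have htw : t = 1 + L * w := by rw [hw]; field_simp; ring
  have hLw : ‖L * w‖ ≤ 1 := by
    have : L * w = t - 1 := by rw [htw]; ring
    rw [this]; exact um_sub_le htp norm_one.le
  have hLp : L ^ p = L ^ (p - 1) * L := by rw [← pow_succ, Nat.sub_add_cancel (by lia)]
  have hpn : 0 < ‖(p : E)‖ := hL ▸ pow_pos hLn _
  set u := (t ^ p - 1) / L ^ p with hu
  set v := (p : E) / L ^ (p - 1) with hv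
  have hv1 : ‖v‖ = 1 := by rw [hv, norm_div, norm_pow, hL, div_self hpn.ne']
  have hu1 : ‖u‖ ≤ r ^ p := by
    rw [hu, norm_div, norm_pow, div_le_iff₀ (by positivity)]
    calc _ ≤ _ := ht
      _ = _ := by ring
  have hrel : ‖w ^ p + v * w - u‖ ≤ ‖L‖ * ‖w‖ ^ 2 := by
    have h := norm_one_add_pow_sub_le (p := p) hLw
    rw [← htw] at h
    have e : w ^ p + v * w - u = -(t ^ p - (1 + (L * w) ^ p + p * (L * w))) / L ^ p := by
      rw [hv, hu, mul_pow, hLp]; field_simp; ring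
    rw [e, norm_div, norm_neg, norm_pow, div_le_iff₀ (by positivity)]
    refine h.trans (le_of_eq ?_)
    rw [norm_mul, ← hL]
    have : ‖L‖ ^ p = ‖L‖ ^ (p - 1) * ‖L‖ := by rw [← pow_succ, Nat.sub_add_cancel (by lia)]
    rw [this]; ring
  have hwr : ‖w‖ ≤ r := by
    by_contra! hlt
    have hw1 : 1 < ‖w‖ := hr.trans hlt
    have hle : ‖w ^ p‖ ≤ max (max (‖L‖ * ‖w‖ ^ 2) ‖w‖) (r ^ p) := by
      have e : w ^ p = (w ^ p + v * w - u) - v * w + u := by ring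
      rw [e]
      refine um_add_le (um_sub_le ?_ ?_) ?_
      · exact hrel.trans ((le_max_left _ _).trans (le_max_left _ _))
      · rw [norm_mul, hv1, one_mul]; exact (le_max_right _ _).trans (le_max_left _ _)
      · exact hu1.trans (le_max_right _ _)
    refine absurd hle (not_le.2 ?_)
    rw [norm_pow]
    refine max_lt (max_lt ?_ ?_) ?_
    · calc ‖L‖ * ‖w‖ ^ 2 < 1 * ‖w‖ ^ 2 := by gcongr
        _ = ‖w‖ ^ 2 := one_mul _
        _ ≤ ‖w‖ ^ p := pow_le_pow_right₀ hw1.le hp2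
    · calc ‖w‖ = ‖w‖ ^ 1 := (pow_one _).symm
        _ < ‖w‖ ^ p := pow_lt_pow_right₀ hw1 hp2
    · exact pow_lt_pow_left₀ hlt hr0.le hp0
  refine ⟨hwr, hrel.trans ?_⟩
  gcongr

lemma norm_coeff_prod_basisDivisor_le {ι : Type*} (s : Finset ι) (v : ι → E) (x : E) {r : ℝ}
    (hr : 1 ≤ r) (hv : ∀ j ∈ s, ‖v j‖ ≤ r) (hd : ∀ j ∈ s, ‖x - v j‖ = 1) (i : ℕ) :
    ‖(∏ j ∈ s, Lagrange.basisDivisor x (v j)).coeff i‖ ≤ r ^ s.card := by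
  classical
  have hr0 : 0 ≤ r := zero_le_one.trans hr
  induction s using Finset.induction_on generalizing i with
  | empty =>
    rw [Finset.prod_empty, Polynomial.coeff_one, Finset.card_empty, pow_zero]
    split_ifs <;> simp
  | insert a s ha ih =>
    have ih' := fun i => ih (fun j hj => hv j (Finset.mem_insert_of_mem hj))
      (fun j hj => hd j (Finset.mem_insert_of_mem hj)) i
    rw [Finset.prod_insert ha, Finset.card_insert_of_notMem ha, Lagrange.basisDivisor, mul_assoc,
      Polynomial.coeff_C_mul, norm_mul, norm_inv, hd a (Finset.mem_insert_self a s), inv_one,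
      one_mul, sub_mul, Polynomial.coeff_sub, Polynomial.coeff_C_mul, pow_succ']
    refine um_sub_le ?_ ?_
    · cases i with
      | zero => simp; positivity
      | succ i =>
        rw [Polynomial.coeff_X_mul]
        exact (ih' i).trans (le_mul_of_one_le_left (by positivity) hr)
    · rw [norm_mul]
      exact mul_le_mul (hv a (Finset.mem_insert_self a s)) (ih' i) (norm_nonneg _) hr0

/-- If the conjugates of `w` have mutual distance `1`, then integral elements of the cyclic
extension `S` of `M` have coordinates bounded by `r ^ p` in the basis `1, w, …, w ^ (p - 1)`:
Lagrange interpolation has no denominators. -/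
lemma exists_coords {M S : Subfield E} (σ : E ≃+* E) (hσ : ∀ x, ‖σ x‖ = ‖x‖)
    (hM : ∀ x, x ∈ M ↔ x ∈ S ∧ σ x = x) (hσS : ∀ x ∈ S, σ x ∈ S)
    (hσp : ∀ x ∈ S, σ^[p] x = x) {w : E} (hwS : w ∈ S) {r : ℝ} (hr : 1 ≤ r) (hw : ‖w‖ ≤ r)
    (hdist : ∀ j < p, ∀ k < p, j ≠ k → ‖σ^[j] w - σ^[k] w‖ = 1)
    {x : E} (hxS : x ∈ S) (hx : ‖x‖ ≤ 1) :
    ∃ f : ℕ → E, (∀ i, f i ∈ M) ∧ (∀ i, ‖f i‖ ≤ r ^ p) ∧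
      x = ∑ i ∈ Finset.range p, f i * w ^ i := by
  classical
  have hit : ∀ (j : ℕ) (y : E), ‖σ^[j] y‖ = ‖y‖ := fun j y => by
    induction j with
    | zero => rfl
    | succ j ih => rw [Function.iterate_succ_apply', hσ, ih]
  have hitS : ∀ (j : ℕ), ∀ y ∈ S, σ^[j] y ∈ S := fun j y hy => by
    induction j with
    | zero => exact hy
    | succ j ih => rw [Function.iterate_succ_apply']; exact hσS _ ih
  have hp0 := hpr.out.pos
  set v : ℕ → E := fun j => σ^[j] w with hv
  set P := Lagrange.interpolate (Finset.range p) v (fun j => σ^[j] x) with hP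
  have hinj : Set.InjOn v (Finset.range p) := by
    intro j hj k hk hjk
    by_contra hne
    have := hdist j (Finset.mem_range.1 hj) k (Finset.mem_range.1 hk) hne
    rw [show σ^[j] w = σ^[k] w from hjk, sub_self, norm_zero] at this
    exact zero_ne_one this
  have hdeg : P.degree < p := by
    have := Lagrange.degree_interpolate_lt (fun j => σ^[j] x) hinj
    rwa [Finset.card_range] at this
  have hnode : ∀ j < p, P.eval (v j) = σ^[j] x := fun j hj =>
    Lagrange.eval_interpolate_at_node _ hinj (Finset.mem_range.2 hj)
  have hmap : P.map (σ : E →+* E) = P := by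
    refine Lagrange.eq_interpolate_of_eval_eq (fun j => σ^[j] x) hinj ?_ ?_
    · rw [Finset.card_range]
      exact Polynomial.degree_map_le.trans_lt hdeg
    · intro j hj
      rw [Finset.mem_range] at hj
      have hev : ∀ y, (P.map (σ : E →+* E)).eval (σ y) = σ (P.eval y) := fun y => by
        rw [Polynomial.eval_map]
        exact Polynomial.eval₂_at_apply (σ : E →+* E) y
      cases j with
      | zero =>
        have hlast : ∀ y ∈ S, σ (σ^[p - 1] y) = y := fun y hy => by
          rw [← Function.iterate_succ_apply' σ, Nat.succ_eq_add_one, Nat.sub_add_cancel hp0,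
            hσp y hy]
        have := hev (v (p - 1))
        rw [hnode _ (by lia), hlast x hxS] at this
        simp only [hv] at this ⊢
        rw [hlast w hwS] at this
        simpa using this
      | succ j =>
        have := hev (v j)
        rw [hnode j (by lia)] at this
        simp only [hv, Function.iterate_succ_apply'] at this ⊢
        exact this
  have hlift : P ∈ Polynomial.lifts S.subtype := by
    have hC : ∀ y ∈ S, Polynomial.C y ∈ Polynomial.lifts S.subtype := fun y hy =>
      Polynomial.C_mem_lifts S.subtype (⟨y, hy⟩ : S)
    rw [hP, Lagrange.interpolate_apply]
    refine sum_mem fun j _ => mul_mem (hC _ (hitS j x hxS)) (prod_mem fun k _ => ?_)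
    have hXC : Polynomial.X - Polynomial.C (v k) ∈ Polynomial.lifts S.subtype := by
      rw [sub_eq_add_neg, ← Polynomial.C_neg]
      exact add_mem (Polynomial.X_mem_lifts _) (hC _ (neg_mem (hitS k w hwS)))
    exact mul_mem (hC _ (inv_mem (sub_mem (hitS j w hwS) (hitS k w hwS)))) hXC
  refine ⟨P.coeff, fun i => ?_, fun i => ?_, ?_⟩
  · rw [hM]
    constructor
    · obtain ⟨⟨y, hy⟩, hyy⟩ := (Polynomial.lifts_iff_coeff_lifts P).1 hlift i
      rw [← hyy]; exact hy
    · conv_rhs => rw [← hmap]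
      rw [Polynomial.coeff_map]; rfl
  · rw [hP, Lagrange.interpolate_apply, Polynomial.finsetSum_coeff]
    refine IsUltrametricDist.norm_sum_le_of_forall_le_of_nonneg (by positivity) fun j hj => ?_
    rw [Polynomial.coeff_C_mul, norm_mul, hit]
    refine (mul_le_of_le_one_left (norm_nonneg _) hx).trans ?_
    refine (norm_coeff_prod_basisDivisor_le _ v (v j) hr ?_ ?_ i).trans ?_
    · exact fun k _ => (hit k w).trans_le hw
    · intro k hk
      rw [Finset.mem_erase, Finset.mem_range] at hk
      exact hdist j (Finset.mem_range.1 hj) k hk.2 hk.1.symm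
    · refine pow_le_pow_right₀ hr ((Finset.card_le_card (Finset.erase_subset _ _)).trans ?_)
      simp
  · have h0 := hnode 0 hp0
    have hnd : P.natDegree < p := by
      by_cases hPz : P = 0
      · rw [hPz, Polynomial.natDegree_zero]; exact hp0
      · exact (Polynomial.natDegree_lt_iff_degree_lt hPz).2 hdeg
    rw [Polynomial.eval_eq_sum_range' hnd] at h0
    exact h0.symm

end Kummer

/-! ### Cyclic extensions of degree `p` -/

section KummerStep

variable {p : ℕ} [hpr : Fact p.Prime] {E : Type*} [NormedField E] [IsUltrametricDist E]

lemma norm_pow_sub_pow_le_mul {x y : E} {B : ℝ} (hB : 1 ≤ B) (hx : ‖x‖ ≤ B) (hy : ‖y‖ ≤ B)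
    (i : ℕ) : ‖x ^ i - y ^ i‖ ≤ ‖x - y‖ * B ^ i := by
  have hB0 : 0 < B := one_pos.trans_le hB
  induction i with
  | zero => simp
  | succ i ih =>
    have e : x ^ (i + 1) - y ^ (i + 1) = x * (x ^ i - y ^ i) + (x - y) * y ^ i := by ring
    rw [e]
    refine um_add_le ?_ ?_
    · rw [norm_mul]
      calc _ ≤ B * (‖x - y‖ * B ^ i) := by gcongr
        _ = _ := by ring
    · rw [norm_mul, norm_pow]
      gcongr
      exact (pow_le_pow_left₀ (norm_nonneg _) hy i).trans (pow_le_pow_right₀ hB i.le_succ)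

lemma norm_le_of_pow_le {z : E} {r : ℝ} (hr : 0 ≤ r) (h : ‖z ^ p‖ ≤ r ^ p) : ‖z‖ ≤ r := by
  rw [norm_pow] at h
  exact le_of_pow_le_pow_left₀ hpr.out.ne_zero hr h

lemma norm_le_of_sub_pow_le {x z : E} {r c : ℝ} (hr : 0 ≤ r) (hc : c ≤ 1)
    (hx : ‖x‖ ≤ r ^ p) (h : ‖x - z ^ p‖ ≤ c * ‖x‖) : ‖z‖ ≤ r := by
  refine norm_le_of_pow_le (p := p) hr ?_
  have h1 : ‖x - z ^ p‖ ≤ r ^ p :=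
    h.trans ((mul_le_of_le_one_left (norm_nonneg _) hc).trans hx)
  simpa using um_sub_le hx h1

/-- The Artin–Schreier equation `w = q * (w ^ p - u) + (small)` with `q = -v⁻¹` exhibits `w` as an
approximate `p`-th power, since `q` and `-u` are approximate `p`-th powers in `M`; hence so is
every polynomial in `w` with bounded coefficients in `M`. -/
lemma approxFrob_of_coords {M S : Subfield E} (hMS : M ≤ S) {c r : ℝ} (hc0 : 0 ≤ c) (hc1 : c < 1)
    (hc : ∀ x ∈ M, ∃ y ∈ M, ‖x - y ^ p‖ ≤ c * ‖x‖) (hpc : ‖(p : E)‖ ≤ c) (hr : 1 ≤ r)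
    {w u v : E} (hw : w ∈ S) (hu : u ∈ M) (hv : v ∈ M) (hwr : ‖w‖ ≤ r) (hur : ‖u‖ ≤ r ^ p)
    (hv1 : ‖v‖ = 1) (hrel : ‖w ^ p + v * w - u‖ ≤ c * r ^ p)
    (hcoords : ∀ x ∈ S, ‖x‖ ≤ 1 → ∃ f : ℕ → E, (∀ i, f i ∈ M) ∧ (∀ i, ‖f i‖ ≤ r ^ p) ∧
      x = ∑ i ∈ Finset.range p, f i * w ^ i) :
    ApproxFrob p (S : Set E) (c * r ^ (p * (p + 2))) := by
  have hr0 : 0 < r := one_pos.trans_le hr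
  have hrp : 1 ≤ r ^ p := one_le_pow₀ hr
  have hv0 : v ≠ 0 := by rw [← norm_ne_zero_iff, hv1]; exact one_ne_zero
  set q := -v⁻¹ with hq
  have hqM : q ∈ M := neg_mem (inv_mem hv)
  have hq1 : ‖q‖ = 1 := by rw [hq, norm_neg, norm_inv, hv1, inv_one]
  obtain ⟨a, ha, hqa⟩ := hc q hqM
  obtain ⟨b, hb, hub⟩ := hc (-u) (neg_mem hu)
  have ha1 : ‖a‖ ≤ 1 := norm_le_of_sub_pow_le (p := p) zero_le_one hc1.le (by simp [hq1]) hqa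
  have hb1 : ‖b‖ ≤ r := norm_le_of_sub_pow_le hr0.le hc1.le (by rwa [norm_neg]) hub
  set z := a * (w + b) with hz
  have hzS : z ∈ S := mul_mem (hMS ha) (add_mem hw (hMS hb))
  have hwb : ‖w + b‖ ≤ r := um_add_le hwr hb1
  have hzr : ‖z‖ ≤ r := by
    rw [hz, norm_mul]
    exact (mul_le_of_le_one_left (norm_nonneg _) ha1).trans hwb
  have hwz : ‖w - z ^ p‖ ≤ c * r ^ p := by
    have e : w - z ^ p = q * (-u - b ^ p) - q * (w ^ p + v * w - u)
        - q * ((w + b) ^ p - (w ^ p + b ^ p)) + (q - a ^ p) * (w + b) ^ p := by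
      have hqv : q * v = -1 := by rw [hq]; field_simp
      rw [hz, mul_pow]
      linear_combination w * (hqv)
    rw [e]
    refine um_add_le (um_sub_le (um_sub_le ?_ ?_) ?_) ?_
    · rw [norm_mul, hq1, one_mul]
      refine hub.trans ?_
      rw [norm_neg]; gcongr
    · rw [norm_mul, hq1, one_mul]; exact hrel
    · rw [norm_mul, hq1, one_mul]
      refine (norm_add_pow_sub_le hwr hb1).trans ?_
      gcongr
    · rw [norm_mul, norm_pow]
      rw [hq1, mul_one] at hqa
      gcongr
  intro x hx hx1
  obtain ⟨f, hfM, hfr, hxf⟩ := hcoords x hx hx1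
  choose g hgM hg using fun i => hc (f i) (hfM i)
  have hgr : ∀ i, ‖g i‖ ≤ r := fun i => norm_le_of_sub_pow_le hr0.le hc1.le (hfr i) (hg i)
  have hexp : ∀ i < p, r ^ i ≤ r ^ p := fun i hi => pow_le_pow_right₀ hr hi.le
  refine ⟨∑ i ∈ Finset.range p, g i * z ^ i,
    sum_mem fun i _ => mul_mem (hMS (hgM i)) (pow_mem hzS i), ?_⟩
  have e : x - (∑ i ∈ Finset.range p, g i * z ^ i) ^ p
      = ∑ i ∈ Finset.range p, (f i * (w ^ i - (z ^ p) ^ i) + (f i - g i ^ p) * (z ^ p) ^ i)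
        - ((∑ i ∈ Finset.range p, g i * z ^ i) ^ p - ∑ i ∈ Finset.range p, (g i * z ^ i) ^ p) := by
    have e1 : ∑ i ∈ Finset.range p, (f i * (w ^ i - (z ^ p) ^ i) + (f i - g i ^ p) * (z ^ p) ^ i)
        = ∑ i ∈ Finset.range p, f i * w ^ i - ∑ i ∈ Finset.range p, (g i * z ^ i) ^ p := by
      rw [← Finset.sum_sub_distrib]
      refine Finset.sum_congr rfl fun i _ => ?_
      ring
    rw [e1, ← hxf]; ring
  have hzp : ‖z ^ p‖ ≤ r ^ p := by rw [norm_pow]; gcongr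
  have hbig : c * r ^ (p * (p + 2)) = r ^ p * (c * r ^ p * (r ^ p) ^ p) := by
    rw [show p * (p + 2) = p + p + p * p by ring, pow_add, pow_add, pow_mul]; ring
  rw [e]
  refine um_sub_le (IsUltrametricDist.norm_sum_le_of_forall_le_of_nonneg (by positivity)
    fun i hi => um_add_le ?_ ?_) ?_
  · rw [Finset.mem_range] at hi
    rw [norm_mul, hbig]
    gcongr
    · exact hfr i
    · refine (norm_pow_sub_pow_le_mul hrp (hwr.trans (le_self_pow₀ hr hpr.out.ne_zero)) hzp i).trans
        ?_
      gcongr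
  · rw [Finset.mem_range] at hi
    rw [norm_mul, hbig, norm_pow]
    calc ‖f i - g i ^ p‖ * ‖z ^ p‖ ^ i ≤ (c * r ^ p) * (r ^ p) ^ p := by
          gcongr
          · exact (hg i).trans (by gcongr; exact hfr i)
          · exact (pow_le_pow_left₀ (norm_nonneg _) hzp i).trans
              (pow_le_pow_right₀ hrp hi.le)
      _ ≤ _ := le_mul_of_one_le_left (by positivity) hrp
  · refine (norm_sum_pow_sub_le _ _ (R := r * r ^ p) (by positivity) fun i hi => ?_).trans ?_
    · rw [Finset.mem_range] at hi
      rw [norm_mul, norm_pow]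
      gcongr
      · exact hgr i
      · exact (pow_le_pow_left₀ (norm_nonneg _) hzr i).trans (hexp i hi)
    · rw [hbig, mul_pow]
      calc ‖(p : E)‖ * (r ^ p * (r ^ p) ^ p) ≤ c * (r ^ p * (r ^ p) ^ p) := by gcongr
        _ = c * r ^ p * (r ^ p) ^ p := by ring
        _ ≤ _ := le_mul_of_one_le_left (by positivity) hrp

/-- Hilbert 90 in the form of a Lagrange resolvent: a nontrivial automorphism of order `p` has an
eigenvector whose eigenvalue is a primitive `p`-th root of unity. -/
lemma exists_kummer_generator {M S : Subfield E} (hMS : M ≤ S) (σ : E ≃+* E)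
    (hM : ∀ x ∈ M, σ x = x) (hσS : ∀ x ∈ S, σ x ∈ S) (hσp : ∀ x ∈ S, σ^[p] x = x)
    (hp' : (p : E) ≠ 0) {ζ : E} (hζM : ζ ∈ M) (hζ : IsPrimitiveRoot ζ p)
    {y : E} (hyS : y ∈ S) (hy : σ y ≠ y) :
    ∃ θ ∈ S, θ ≠ 0 ∧ ∃ ξ ∈ M, IsPrimitiveRoot ξ p ∧ σ θ = ξ * θ := by
  have hp1 := hpr.out.one_lt
  have hitS : ∀ (j : ℕ), ∀ y ∈ S, σ^[j] y ∈ S := fun j y hy => by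
    induction j with
    | zero => exact hy
    | succ j ih => rw [Function.iterate_succ_apply']; exact hσS _ ih
  set R : ℕ → E := fun i => ∑ j ∈ Finset.range p, (ζ ^ i) ^ j * σ^[j] y with hR
  have hRS : ∀ i, R i ∈ S := fun i =>
    sum_mem fun j _ => mul_mem (pow_mem (pow_mem (hMS hζM) i) j) (hitS j y hyS)
  have hσR : ∀ i, ζ ^ i * σ (R i) = R i := fun i => by
    have e : ζ ^ i * σ (R i) = ∑ j ∈ Finset.range p, (ζ ^ i) ^ (j + 1) * σ^[j + 1] y := by
      simp only [hR, map_sum, Finset.mul_sum, map_mul, map_pow, hM ζ hζM]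
      refine Finset.sum_congr rfl fun j _ => ?_
      rw [Function.iterate_succ_apply', pow_succ']; ring
    have e2 := Finset.sum_range_succ (fun j => (ζ ^ i) ^ j * σ^[j] y) p
    rw [Finset.sum_range_succ'] at e2
    rw [e]
    rw [hσp y hyS, show (ζ ^ i) ^ p = 1 by
      rw [← pow_mul, mul_comm, pow_mul, hζ.pow_eq_one, one_pow]] at e2
    simpa using e2
  have hsum : ∑ i ∈ Finset.range p, R i = p * y := by
    simp only [hR]
    rw [Finset.sum_comm]
    simp only [← Finset.sum_mul]
    rw [Finset.sum_eq_single 0]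
    · simp
    · intro j hj hj0
      rw [Finset.mem_range] at hj
      have hz : (ζ ^ j) ≠ 1 := hζ.pow_ne_one_of_pos_of_lt hj0 hj
      have := mul_geom_sum (ζ ^ j) p
      rw [← pow_mul, mul_comm j p, pow_mul, hζ.pow_eq_one, one_pow, sub_self] at this
      have h0 := (mul_eq_zero.1 this).resolve_left (sub_ne_zero.2 hz)
      have h1 : ∑ i ∈ Finset.range p, (ζ ^ i) ^ j = 0 := by
        rw [← h0]; refine Finset.sum_congr rfl fun i _ => ?_
        ring
      rw [h1, zero_mul]
    · simp [hpr.out.ne_zero]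
  obtain ⟨i, hi0, hip, hRi⟩ : ∃ i, i ≠ 0 ∧ i < p ∧ R i ≠ 0 := by
    by_contra! hall
    rw [Finset.sum_eq_single 0 (fun i hi hi0 => hall i hi0 (Finset.mem_range.1 hi))
      (by simp [hpr.out.ne_zero])] at hsum
    have h0 := hσR 0
    rw [pow_zero, one_mul, hsum, map_mul, map_natCast] at h0
    exact hy (mul_left_cancel₀ hp' h0)
  have hζi : IsPrimitiveRoot (ζ ^ i) p :=
    hζ.pow_of_coprime i (Nat.coprime_of_lt_prime hi0 hip hpr.out).symm
  refine ⟨R i, hRS i, hRi, (ζ ^ i)⁻¹, inv_mem (pow_mem hζM i), hζi.inv, ?_⟩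
  have hne : ζ ^ i ≠ 0 := hζi.ne_zero hpr.out.ne_zero
  rw [eq_inv_mul_iff_mul_eq₀ hne]
  exact hσR i

/-- Frobenius surjectivity goes up extensions `S / M` that are trivial or cyclic of degree `p`. The
Kummer generator is moved so close to `1` by `p`-th powers of `M` that `S / M` is given by an
Artin–Schreier equation that is almost étale over the valuation ring of `M`. -/
lemma FrobSurj.kummer {M S : Subfield E} (σ : E ≃+* E) (hσ : ∀ x, ‖σ x‖ = ‖x‖)
    (hM : ∀ x, x ∈ M ↔ x ∈ S ∧ σ x = x) (hσS : ∀ x ∈ S, σ x ∈ S)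
    (hσp : ∀ x ∈ S, σ^[p] x = x) (hp : ‖(p : E)‖ < 1) (hp' : (p : E) ≠ 0)
    (hζ : ∀ n : ℕ, ∃ ζ ∈ M, IsPrimitiveRoot ζ (p ^ n)) (h : FrobSurj p (M : Set E)) :
    FrobSurj p (S : Set E) := by
  have hMS : M ≤ S := fun x hx => ((hM x).1 hx).1
  by_cases hfix : ∀ y ∈ S, σ y = y
  · have : M = S := le_antisymm hMS fun x hx => (hM x).2 ⟨hx, hfix x hx⟩
    rwa [← this]
  push Not at hfix
  obtain ⟨y, hyS, hy⟩ := hfix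
  obtain ⟨ζ, hζM, hζp⟩ := hζ 1
  rw [pow_one] at hζp
  obtain ⟨θ, hθS, hθ0, ξ, hξM, hξ, hσθ⟩ :=
    exists_kummer_generator hMS σ (fun x hx => ((hM x).1 hx).2) hσS hσp hp' hζM hζp hyS hy
  have hp1 := hpr.out.one_lt
  obtain ⟨c₀, hc00, hc01, hc₀⟩ := h.relative (normDense_of_roots hp hp' hζ)
  -- `L = ξ - 1` has norm `‖p‖ ^ (1 / (p - 1))`
  set L := ξ - 1 with hLdef
  have hLM : L ∈ M := sub_mem hξM (one_mem M)
  have hL0 : L ≠ 0 := sub_ne_zero.2 (hξ.ne_one hp1)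
  have hLp : ‖L‖ ^ (p - 1) = ‖(p : E)‖ := by
    have h1 := norm_primitiveRoot_sub_one_pow (E := E) (p := p) (n := 0) (ζ := ξ) (by simpa using hξ)
    rwa [zero_add, pow_one, Nat.totient_prime hpr.out] at h1
  have hL1 : ‖L‖ < 1 := by
    by_contra! hle
    have := hLp ▸ one_le_pow₀ (n := p - 1) hle
    linarith
  set c := max c₀ (max ‖L‖ ‖(p : E)‖) with hc
  have hc1 : c < 1 := max_lt hc01 (max_lt hL1 hp)
  have hc0 : 0 < c := hc00.trans_le (le_max_left _ _)
  have hcrel : ∀ x ∈ M, ∃ y ∈ M, ‖x - y ^ p‖ ≤ c * ‖x‖ := fun x hx => by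
    obtain ⟨y, hy, hxy⟩ := hc₀ x hx
    exact ⟨y, hy, hxy.trans (by gcongr; exact le_max_left _ _)⟩
  have hLc : ‖L‖ ≤ c := (le_max_left _ _).trans (le_max_right _ _)
  have hpc : ‖(p : E)‖ ≤ c := (le_max_right _ _).trans (le_max_right _ _)
  -- `r` is so close to `1` that `c * r ^ (p * (p + 2)) < 1`
  set K := p * (p + 2) with hK
  obtain ⟨r, hr, hrK⟩ : ∃ r : ℝ, 1 < r ∧ c * r ^ K < 1 := by
    have hK1 : (K + 1 : ℕ) ≠ 0 := K.succ_ne_zero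
    set r := (c⁻¹) ^ (((K + 1 : ℕ) : ℝ)⁻¹) with hr
    have hrK : r ^ (K + 1) = c⁻¹ := Real.rpow_inv_natCast_pow (by positivity) hK1
    have hr1 : 1 < r := Real.one_lt_rpow ((one_lt_inv₀ hc0).2 hc1) (by positivity)
    refine ⟨r, hr1, ?_⟩
    calc c * r ^ K < c * r ^ (K + 1) := by
          gcongr
          exact K.lt_succ_self
      _ = 1 := by rw [hrK]; exact mul_inv_cancel₀ hc0.ne'
  have hr0 : 0 < r := one_pos.trans hr
  have hK0 : K ≠ 0 := by rw [hK]; have := hpr.out.pos; positivity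
  have hLr : ‖L‖ * r < 1 := by
    refine lt_of_le_of_lt ?_ hrK
    gcongr
    exact le_self_pow₀ hr.le hK0
  -- the Kummer generator, normalised to be close to `1`
  have hσξ : σ ξ = ξ := ((hM ξ).1 hξM).2
  have haM : θ ^ p ∈ M := (hM _).2 ⟨pow_mem hθS p, by
    rw [map_pow, hσθ, mul_pow, hξ.pow_eq_one, one_mul]⟩
  obtain ⟨b, hbM, hb0, hab⟩ := exists_near_one hc1 hcrel hr (norm_pos_iff.2 hL0) hLp haM
    (pow_ne_zero p hθ0)
  set t := θ / b with ht
  have htS : t ∈ S := div_mem hθS (hMS hbM)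
  have ht1 : ‖t ^ p - 1‖ ≤ (‖L‖ * r) ^ p := by rwa [ht, div_pow]
  have htpM : t ^ p ∈ M := by rw [ht, div_pow]; exact div_mem haM (pow_mem hbM p)
  obtain ⟨hwr, hrel⟩ := artinSchreier_of_near_one hr hL0 hLp hLr ht1
  have htn : ‖t‖ = 1 := by
    have h1 : ‖t ^ p - 1‖ < 1 :=
      ht1.trans_lt (pow_lt_one₀ (by positivity) hLr hpr.out.ne_zero)
    have h2 : ‖t ^ p‖ = 1 := by
      have := IsUltrametricDist.norm_eq_of_add_norm_lt_max (x := t ^ p) (y := -1) (by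
        rw [← sub_eq_add_neg, norm_neg, norm_one]; exact h1.trans_le (le_max_right _ _))
      rwa [norm_neg, norm_one] at this
    rw [norm_pow] at h2
    exact (pow_eq_one_iff_of_nonneg (norm_nonneg _) hpr.out.ne_zero).1 h2
  set w := (t - 1) / L with hw
  have hwS : w ∈ S := div_mem (sub_mem htS (one_mem S)) (hMS hLM)
  have hσL : σ L = L := ((hM L).1 hLM).2
  have hσb : σ b = b := ((hM b).1 hbM).2
  have hitw : ∀ j : ℕ, σ^[j] w = (ξ ^ j * t - 1) / L := fun j => by
    induction j with
    | zero => simp [hw]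
    | succ j ih =>
      rw [Function.iterate_succ_apply', ih, map_div₀, map_sub, map_mul, map_pow, hσL, hσξ, map_one,
        ht, map_div₀, hσb, hσθ, pow_succ]
      ring
  have hξn : ‖ξ‖ = 1 := norm_rootOfUnity hpr.out.ne_zero hξ.pow_eq_one
  have hLn0 : ‖L‖ ≠ 0 := norm_ne_zero_iff.2 hL0
  have hlt : ∀ j k : ℕ, j < k → k < p → ‖σ^[j] w - σ^[k] w‖ = 1 := fun j k hjk hk => by
    have e : σ^[j] w - σ^[k] w = -(ξ ^ j * t * ((ξ ^ (k - j) - 1) / L)) := by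
      rw [hitw, hitw]
      have : ξ ^ k = ξ ^ j * ξ ^ (k - j) := by rw [← pow_add]; congr 1; lia
      rw [this]; ring
    have h1 : ‖ξ ^ (k - j) - 1‖ = ‖L‖ :=
      norm_primitiveRoot_sub_one_eq hpr.out.ne_zero hξ
        (hξ.pow_of_coprime _ (Nat.coprime_of_lt_prime (by lia) (by lia) hpr.out).symm)
    rw [e, norm_neg, norm_mul, norm_mul, norm_div (ξ ^ (k - j) - 1) L, h1, norm_pow, hξn, htn,
      one_pow, div_self hLn0]
    norm_num
  refine ⟨c * r ^ K, hrK, ?_⟩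
  have hpn : ‖(p : E)‖ ≠ 0 := norm_ne_zero_iff.2 hp'
  refine approxFrob_of_coords hMS hc0.le hc1 hcrel hpc hr.le (w := w) (u := (t ^ p - 1) / L ^ p)
    (v := p / L ^ (p - 1)) hwS (div_mem (sub_mem htpM (one_mem M)) (pow_mem hLM p))
    (div_mem (natCast_mem M p) (pow_mem hLM _)) hwr ?_ ?_ (hrel.trans ?_) ?_
  · rw [norm_div, norm_pow, div_le_iff₀ (pow_pos (norm_pos_iff.2 hL0) p)]
    exact ht1.trans (by rw [mul_pow, mul_comm])
  · rw [norm_div, norm_pow, hLp, div_self hpn]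
  · gcongr
    · exact hr.le
    · exact hp1
  · intro x hx hx1
    refine exists_coords σ hσ hM hσS hσp hwS hr.le hwr (fun j hj k hk hjk => ?_) hx hx1
    rcases lt_or_gt_of_ne hjk with hl | hl
    · exact hlt j k hl hk
    · rw [norm_sub_rev]; exact hlt k j hl hj

end KummerStep

/-! ### The cyclotomic tower over `ℚ_p` -/

section CyclotomicTower

variable {p : ℕ} [hpr : Fact p.Prime]

/-- The nonzero terms `a i * π ^ i`, `i < d`, have pairwise distinct norms since `‖π‖ ^ d = ‖p‖` and
the norms of the `a i` are powers of `p`; so they are bounded by the norm of their sum. -/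
lemma norm_coeff_le_one {A : Type*} [NormedField A] [IsUltrametricDist A] [NormedAlgebra ℚ_[p] A]
    {π : A} {d : ℕ} (hπ : ‖π‖ ^ d = ‖(p : ℚ_[p])‖) {a : ℕ → ℚ_[p]}
    (h : ‖∑ i ∈ Finset.range d, algebraMap ℚ_[p] A (a i) * π ^ i‖ ≤ 1) {i : ℕ} (hi : i < d) :
    ‖a i‖ ≤ 1 := by
  classical
  by_cases hai : a i = 0
  · simp [hai]
  have hp1 : (1 : ℝ) < p := by exact_mod_cast hpr.out.one_lt
  have hp0 : (0 : ℝ) < p := one_pos.trans hp1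
  have hnorm : ∀ j, a j ≠ 0 → ‖algebraMap ℚ_[p] A (a j) * π ^ j‖ ^ d
      = (p : ℝ) ^ (-(a j).valuation * d - j) := fun j hj => by
    rw [norm_mul, norm_algebraMap', norm_pow, mul_pow, ← pow_mul, mul_comm j d, pow_mul, hπ,
      Padic.norm_p, Padic.norm_eq_zpow_neg_valuation hj, sub_eq_add_neg, zpow_add₀ hp0.ne',
      zpow_mul, zpow_natCast, zpow_neg _ (j : ℤ), zpow_natCast, inv_pow]
  set s := (Finset.range d).filter fun j => a j ≠ 0 with hs
  have his : i ∈ s := by simp [hs, hi, hai]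
  have hsum : ∑ j ∈ Finset.range d, algebraMap ℚ_[p] A (a j) * π ^ j
      = ∑ j ∈ s, algebraMap ℚ_[p] A (a j) * π ^ j := by
    rw [hs, Finset.sum_filter_of_ne]
    intro j _ hj h0
    exact hj (by simp [h0])
  rw [hsum, IsUltrametricDist.norm_sum_eq_sup'_of_pairwise_ne ⟨i, his⟩] at h
  · have h1 : ‖algebraMap ℚ_[p] A (a i) * π ^ i‖ ≤ 1 :=
      (Finset.le_sup' (fun j => ‖algebraMap ℚ_[p] A (a j) * π ^ j‖) his).trans h
    have h2 := pow_le_one₀ (n := d) (norm_nonneg _) h1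
    rw [hnorm i hai, zpow_le_one_iff_right₀ hp1] at h2
    rw [Padic.norm_eq_zpow_neg_valuation hai, zpow_le_one_iff_right₀ hp1]
    by_contra! hlt
    have : (d : ℤ) ≤ -(a i).valuation * d := le_mul_of_one_le_left (by lia) (by lia)
    lia
  · intro j hj k hk hjk heq
    simp only [hs, Finset.coe_filter, Finset.mem_range, Set.mem_ofPred_eq] at hj hk
    have h2 := congrArg (· ^ d) heq
    simp only [hnorm j hj.2, hnorm k hk.2] at h2
    have h3 := zpow_right_injective₀ hp0 hp1.ne' h2
    have h4 : ((a k).valuation - (a j).valuation) * d = j - k := by linear_combination h3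
    have h5 : (a k).valuation - (a j).valuation = 0 := by
      by_contra hne
      rcases lt_or_gt_of_ne hne with hl | hl
      · have : ((a k).valuation - (a j).valuation) * d ≤ -1 * d :=
          mul_le_mul_of_nonneg_right (by lia) (by lia)
        lia
      · have : 1 * (d : ℤ) ≤ ((a k).valuation - (a j).valuation) * d :=
          mul_le_mul_of_nonneg_right (by lia) (by lia)
        lia
    rw [h5, zero_mul] at h4
    lia

/-- Fermat's little theorem in the residue field of `ℚ_[p]`. -/
lemma padic_norm_sub_pow_le {a : ℚ_[p]} (ha : ‖a‖ ≤ 1) : ‖a - a ^ p‖ ≤ ‖(p : ℚ_[p])‖ := by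
  set b : ℤ_[p] := ⟨a, ha⟩ with hb
  have h1 : b - b ^ p ∈ RingHom.ker (PadicInt.toZMod (p := p)) := by
    rw [RingHom.mem_ker, map_sub, map_pow, ZMod.pow_card, sub_self]
  rw [PadicInt.ker_toZMod, PadicInt.maximalIdeal_eq_span_p, Ideal.mem_span_singleton] at h1
  obtain ⟨e, he⟩ := h1
  have h2 : a - a ^ p = p * (e : ℚ_[p]) := by
    have h3 : ((b - b ^ p : ℤ_[p]) : ℚ_[p]) = ((p * e : ℤ_[p]) : ℚ_[p]) := by rw [he]
    rwa [PadicInt.coe_sub, PadicInt.coe_pow, PadicInt.coe_mul, PadicInt.coe_natCast] at h3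
  rw [h2, norm_mul]
  exact mul_le_of_le_one_right (norm_nonneg _) e.2

/-- `ℤ_p[ζ]` is the valuation ring of `ℚ_p(ζ)`, and its generator `ζ - 1` is `(ξ - 1) ^ p` modulo
`p`. -/
lemma cyclotomic_step {A : Type*} [NormedField A] [IsUltrametricDist A] [NormedAlgebra ℚ_[p] A]
    [Algebra.IsAlgebraic ℚ_[p] A] {n : ℕ} {ζ ξ : A} (hζ : IsPrimitiveRoot ζ (p ^ (n + 1)))
    (hξ : ξ ^ p = ζ) {x : A} (hx : x ∈ IntermediateField.adjoin ℚ_[p] {ζ}) (hx1 : ‖x‖ ≤ 1) :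
    ∃ y ∈ IntermediateField.adjoin ℚ_[p] {ξ}, ‖x - y ^ p‖ ≤ ‖(p : A)‖ := by
  have hpA : ‖(p : A)‖ = ‖(p : ℚ_[p])‖ := by
    rw [← norm_algebraMap' A (p : ℚ_[p]), map_natCast]
  have hp1 := hpr.out.one_lt
  obtain ⟨f, rfl⟩ : ∃ f : Polynomial ℚ_[p], Polynomial.aeval (ζ - 1) f = x := by
    rw [← IntermediateField.mem_toSubalgebra,
      IntermediateField.adjoin_simple_toSubalgebra_of_isAlgebraic
        (Algebra.IsAlgebraic.isAlgebraic ζ), Algebra.adjoin_singleton_eq_range_aeval] at hx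
    obtain ⟨g, hg⟩ := hx
    refine ⟨g.comp (Polynomial.X + 1), ?_⟩
    rw [Polynomial.aeval_comp]
    simpa using hg
  set d := (p ^ (n + 1)).totient with hd
  set g := (Polynomial.cyclotomic (p ^ (n + 1)) ℚ_[p]).comp (Polynomial.X + Polynomial.C 1) with hg
  have hgm : g.Monic := (Polynomial.cyclotomic.monic _ _).comp_X_add_C 1
  have hgd : g.natDegree = d := by
    rw [hg, Polynomial.natDegree_comp, Polynomial.natDegree_X_add_C, mul_one,
      Polynomial.natDegree_cyclotomic]
  have hd0 : 0 < d := Nat.totient_pos.2 (pow_pos hpr.out.pos _)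
  have hg0 : Polynomial.aeval (ζ - 1) g = 0 := by
    rw [hg, Polynomial.aeval_comp]
    simp only [map_add, Polynomial.aeval_X, map_one, sub_add_cancel]
    have := hζ.isRoot_cyclotomic (pow_pos hpr.out.pos _)
    rw [Polynomial.IsRoot.def, ← Polynomial.map_cyclotomic _ (algebraMap ℚ_[p] A),
      Polynomial.eval_map_algebraMap] at this
    exact this
  have hg1 : g ≠ 1 := fun h => by rw [h, Polynomial.natDegree_one] at hgd; lia
  have hlt := Polynomial.natDegree_modByMonic_lt f hgm hg1
  rw [hgd] at hlt
  set a := (f %ₘ g).coeff with ha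
  have hx : Polynomial.aeval (ζ - 1) f
      = ∑ i ∈ Finset.range d, algebraMap ℚ_[p] A (a i) * (ζ - 1) ^ i := by
    rw [← Polynomial.aeval_modByMonic_eq_self_of_root hg0, Polynomial.aeval_eq_sum_range' hlt]
    simp only [Algebra.smul_def, ha]
  rw [hx] at hx1 ⊢
  have ha1 : ∀ i ∈ Finset.range d, ‖a i‖ ≤ 1 := fun i hi =>
    norm_coeff_le_one (by rw [hd, norm_primitiveRoot_sub_one_pow hζ, hpA]) hx1
      (Finset.mem_range.1 hi)
  have hξn : ‖ξ‖ = 1 := norm_rootOfUnity (m := p * p ^ (n + 1))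
    (mul_ne_zero hpr.out.ne_zero (pow_ne_zero _ hpr.out.ne_zero))
    (by rw [pow_mul, hξ, hζ.pow_eq_one])
  have hξ1 : ‖ξ - 1‖ ≤ 1 := um_sub_le hξn.le norm_one.le
  have hζ1 : ‖ζ - 1‖ ≤ 1 := um_sub_le
    (norm_rootOfUnity (pow_ne_zero _ hpr.out.ne_zero) hζ.pow_eq_one).le norm_one.le
  have hξζ : ‖(ζ - 1) - (ξ - 1) ^ p‖ ≤ ‖(p : A)‖ := by
    have := norm_add_pow_sub_le (p := p) hξ1 (norm_one (α := A)).le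
    rw [sub_add_cancel, one_pow, hξ, one_pow, mul_one] at this
    convert this using 2
    ring
  have hξF : ξ ∈ IntermediateField.adjoin ℚ_[p] {ξ} := IntermediateField.mem_adjoin_simple_self _ ξ
  refine ⟨∑ i ∈ Finset.range d, algebraMap ℚ_[p] A (a i) * (ξ - 1) ^ i, sum_mem fun i _ =>
    mul_mem (IntermediateField.algebraMap_mem _ _) (pow_mem (sub_mem hξF (one_mem _)) i), ?_⟩
  set y := ∑ i ∈ Finset.range d, algebraMap ℚ_[p] A (a i) * (ξ - 1) ^ i with hy
  have hsum := norm_sum_pow_sub_le (p := p) (Finset.range d)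
    (fun i => algebraMap ℚ_[p] A (a i) * (ξ - 1) ^ i) zero_le_one fun i hi => by
      rw [norm_mul, norm_algebraMap', norm_pow]
      exact mul_le_one₀ (ha1 i hi) (by positivity) (pow_le_one₀ (norm_nonneg _) hξ1)
  rw [one_pow, mul_one, ← hy] at hsum
  have e : (∑ i ∈ Finset.range d, algebraMap ℚ_[p] A (a i) * (ζ - 1) ^ i) - y ^ p
      = ∑ i ∈ Finset.range d, (algebraMap ℚ_[p] A (a i - a i ^ p) * (ζ - 1) ^ i
          + algebraMap ℚ_[p] A (a i) ^ p * ((ζ - 1) ^ i - ((ξ - 1) ^ p) ^ i))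
        - (y ^ p - ∑ i ∈ Finset.range d, (algebraMap ℚ_[p] A (a i) * (ξ - 1) ^ i) ^ p) := by
    have : ∑ i ∈ Finset.range d, (algebraMap ℚ_[p] A (a i - a i ^ p) * (ζ - 1) ^ i
          + algebraMap ℚ_[p] A (a i) ^ p * ((ζ - 1) ^ i - ((ξ - 1) ^ p) ^ i))
        = ∑ i ∈ Finset.range d, algebraMap ℚ_[p] A (a i) * (ζ - 1) ^ i
          - ∑ i ∈ Finset.range d, (algebraMap ℚ_[p] A (a i) * (ξ - 1) ^ i) ^ p := by
      rw [← Finset.sum_sub_distrib]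
      refine Finset.sum_congr rfl fun i _ => ?_
      rw [map_sub, map_pow]; ring
    rw [this]; ring
  rw [e]
  refine um_sub_le (IsUltrametricDist.norm_sum_le_of_forall_le_of_nonneg (norm_nonneg _)
    fun i hi => um_add_le ?_ ?_) hsum
  · rw [norm_mul, norm_algebraMap', norm_pow, hpA]
    exact (mul_le_of_le_one_right (norm_nonneg _) (pow_le_one₀ (norm_nonneg _) hζ1)).trans
      (padic_norm_sub_pow_le (ha1 i hi))
  · rw [norm_mul, norm_pow, norm_algebraMap']
    refine (mul_le_of_le_one_left (norm_nonneg _)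
      (pow_le_one₀ (norm_nonneg _) (ha1 i hi))).trans ?_
    refine (norm_pow_sub_pow_le_mul le_rfl hζ1 ?_ i).trans ?_
    · rw [norm_pow]; exact pow_le_one₀ (norm_nonneg _) hξ1
    · rwa [one_pow, mul_one]

/-- The subfield `ℚ_p(μ_{p^∞})` of `A`. -/
def cycTower (p : ℕ) [Fact p.Prime] (A : Type*) [Field A] [Algebra ℚ_[p] A] :
    IntermediateField ℚ_[p] A :=
  IntermediateField.adjoin ℚ_[p] {x : A | ∃ n : ℕ, x ^ p ^ n = 1}

/-- `ℚ_p(μ_{p^∞})` is the directed union of the fields `ℚ_p(ζ)`. -/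
lemma mem_cycTower {A : Type*} [Field A] [Algebra ℚ_[p] A]
    (hroots : ∀ n : ℕ, ∃ ζ : A, IsPrimitiveRoot ζ (p ^ n)) {x : A} (hx : x ∈ cycTower p A) :
    ∃ n : ℕ, ∃ ζ : A, IsPrimitiveRoot ζ (p ^ (n + 1)) ∧ x ∈ IntermediateField.adjoin ℚ_[p] {ζ} := by
  choose ζ hζ using fun n => hroots (n + 1)
  have hmem : ∀ n m : ℕ, n ≤ m + 1 → ∀ x : A, x ^ p ^ n = 1 →
      x ∈ IntermediateField.adjoin ℚ_[p] {ζ m} := fun n m hnm x hx => by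
    have : NeZero (p ^ (m + 1)) := ⟨pow_ne_zero _ hpr.out.ne_zero⟩
    obtain ⟨i, -, hi⟩ := (hζ m).eq_pow_of_pow_eq_one (ξ := x) (by
      obtain ⟨k, hk⟩ := pow_dvd_pow p hnm
      rw [hk, pow_mul, hx, one_pow])
    rw [← hi]
    exact pow_mem (IntermediateField.mem_adjoin_simple_self _ _) i
  have hmono : Monotone fun n => IntermediateField.adjoin ℚ_[p] {ζ n} := fun n m hnm => by
    rw [IntermediateField.adjoin_simple_le_iff]
    exact hmem (n + 1) m (by lia) _ (hζ n).pow_eq_one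
  have hle : cycTower p A ≤ ⨆ n, IntermediateField.adjoin ℚ_[p] {ζ n} := by
    rw [cycTower, IntermediateField.adjoin_le_iff]
    rintro y ⟨n, hn⟩
    exact le_iSup (fun n => IntermediateField.adjoin ℚ_[p] {ζ n}) n (hmem n n n.le_succ y hn)
  have hx' := hle hx
  rw [← SetLike.mem_coe, IntermediateField.coe_iSup_of_directed hmono.directed_le,
    Set.mem_iUnion] at hx'
  obtain ⟨n, hn⟩ := hx'
  exact ⟨n, ζ n, hζ n, hn⟩

lemma frobSurj_cycTower {A : Type*} [NormedField A] [IsUltrametricDist A] [NormedAlgebra ℚ_[p] A]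
    [Algebra.IsAlgebraic ℚ_[p] A] [IsAlgClosed A] (hroots : ∀ n : ℕ, ∃ ζ : A,
      IsPrimitiveRoot ζ (p ^ n)) (hp : ‖(p : A)‖ < 1) : FrobSurj p (cycTower p A : Set A) := by
  refine ⟨‖(p : A)‖, hp, fun x hx hx1 => ?_⟩
  obtain ⟨n, ζ, hζ, hxζ⟩ := mem_cycTower hroots hx
  obtain ⟨ξ, hξ⟩ := IsAlgClosed.exists_pow_nat_eq ζ hpr.out.pos
  obtain ⟨y, hy, hxy⟩ := cyclotomic_step hζ hξ hxζ hx1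
  refine ⟨y, ?_, hxy⟩
  refine (IntermediateField.adjoin_simple_le_iff.2 ?_ :
    IntermediateField.adjoin ℚ_[p] {ξ} ≤ cycTower p A) hy
  refine IntermediateField.subset_adjoin _ _ ⟨n + 2, ?_⟩
  rw [pow_succ', pow_mul, hξ, hζ.pow_eq_one]

end CyclotomicTower

/-! ### Extensions of degree prime to `p` -/

section PrimeToP

variable {p : ℕ} [hpr : Fact p.Prime] {A : Type*} [NormedField A] [IsUltrametricDist A]

lemma norm_coeff_prod_X_sub_C_le (s : Multiset A) (hs : ∀ a ∈ s, ‖a‖ ≤ 1) (i : ℕ) :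
    ‖((s.map fun a => Polynomial.X - Polynomial.C a).prod).coeff i‖ ≤ 1 := by
  induction s using Multiset.induction_on generalizing i with
  | empty =>
    rw [Multiset.map_zero, Multiset.prod_zero, Polynomial.coeff_one]
    split_ifs <;> simp
  | cons a s ih =>
    have ih' := ih fun b hb => hs b (Multiset.mem_cons_of_mem hb)
    rw [Multiset.map_cons, Multiset.prod_cons, sub_mul, Polynomial.coeff_sub,
      Polynomial.coeff_C_mul]
    refine um_sub_le ?_ ?_
    · cases i with
      | zero => simp
      | succ i => rw [Polynomial.coeff_X_mul]; exact ih' i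
    · rw [norm_mul]
      exact mul_le_one₀ (hs a (Multiset.mem_cons_self a s)) (norm_nonneg _) (ih' i)

lemma norm_le_one_of_monic_eq {β : A} {d : ℕ} {b : ℕ → A} (hb : ∀ i, ‖b i‖ ≤ 1)
    (h : β ^ d + ∑ i ∈ Finset.range d, b i * β ^ i = 0) : ‖β‖ ≤ 1 := by
  by_contra! hlt
  rcases Nat.eq_zero_or_pos d with rfl | hd
  · simp at h
  have h1 : ‖∑ i ∈ Finset.range d, b i * β ^ i‖ ≤ ‖β‖ ^ (d - 1) :=
    IsUltrametricDist.norm_sum_le_of_forall_le_of_nonneg (by positivity) fun i hi => by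
      rw [Finset.mem_range] at hi
      rw [norm_mul, norm_pow]
      exact (mul_le_of_le_one_left (by positivity) (hb i)).trans
        (pow_le_pow_right₀ hlt.le (by lia))
  rw [eq_neg_of_add_eq_zero_right h, norm_neg, norm_pow] at h1
  exact (pow_lt_pow_right₀ hlt (by lia)).not_ge h1

/-- Taking approximate `p`-th roots of the coefficients of a polynomial with roots `R` gives a
polynomial whose roots are approximate `p`-th roots of elements of `R`. -/
lemma exists_root_near {R : Multiset A} {a b : ℕ → A} {d : ℕ} (hRd : Multiset.card R = d)
    (hR : (R.map fun x => Polynomial.X - Polynomial.C x).prod = Polynomial.X ^ d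
      + ∑ i ∈ Finset.range d, Polynomial.C (a i) * Polynomial.X ^ i)
    {c r : ℝ} (hpc : ‖(p : A)‖ ≤ c) (hr : 0 ≤ r) (hrc : r ^ d = c)
    (hb : ∀ i, ‖b i‖ ≤ 1) (hab : ∀ i, ‖a i - b i ^ p‖ ≤ c) {β : A}
    (hβ : β ^ d + ∑ i ∈ Finset.range d, b i * β ^ i = 0) : ∃ x ∈ R, ‖β ^ p - x‖ ≤ r := by
  have hβ1 := norm_le_one_of_monic_eq hb hβ
  have hc0 : 0 ≤ c := (norm_nonneg _).trans hpc
  have hev : ((R.map fun x => β ^ p - x).prod) = (β ^ p) ^ d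
      + ∑ i ∈ Finset.range d, a i * (β ^ p) ^ i := by
    have := congrArg (Polynomial.eval (β ^ p)) hR
    rw [Polynomial.eval_multiset_prod, Multiset.map_map] at this
    simpa [Polynomial.eval_finsetSum] using this
  have hsmall : ‖(R.map fun x => β ^ p - x).prod‖ ≤ r ^ d := by
    set f : ℕ → A := fun i => if i = d then β ^ d else b i * β ^ i with hf
    have hfsum : ∑ i ∈ Finset.range (d + 1), f i = 0 := by
      rw [Finset.sum_range_succ, ← hβ, add_comm]
      congr 1
      · simp [hf]
      · refine Finset.sum_congr rfl fun i hi => ?_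
        rw [Finset.mem_range] at hi
        simp [hf, hi.ne]
    have hfp : ∑ i ∈ Finset.range (d + 1), f i ^ p = (β ^ p) ^ d
        + ∑ i ∈ Finset.range d, b i ^ p * (β ^ p) ^ i := by
      rw [Finset.sum_range_succ, add_comm]
      congr 1
      · simp [hf, ← pow_mul, mul_comm]
      · refine Finset.sum_congr rfl fun i hi => ?_
        rw [Finset.mem_range] at hi
        simp only [hf, hi.ne, if_false]; ring
    have hf1 := norm_sum_pow_sub_le (p := p) (Finset.range (d + 1)) f zero_le_one fun i _ => by
      simp only [hf]
      split_ifs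
      · rw [norm_pow]; exact pow_le_one₀ (norm_nonneg _) hβ1
      · rw [norm_mul, norm_pow]
        exact mul_le_one₀ (hb i) (by positivity) (pow_le_one₀ (norm_nonneg _) hβ1)
    rw [hfsum, hfp, zero_pow hpr.out.ne_zero, zero_sub, norm_neg, one_pow, mul_one] at hf1
    have e : (β ^ p) ^ d + ∑ i ∈ Finset.range d, a i * (β ^ p) ^ i
        = ((β ^ p) ^ d + ∑ i ∈ Finset.range d, b i ^ p * (β ^ p) ^ i)
          + ∑ i ∈ Finset.range d, (a i - b i ^ p) * (β ^ p) ^ i := by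
      rw [add_assoc, ← Finset.sum_add_distrib]
      congr 1
      refine Finset.sum_congr rfl fun i _ => ?_
      ring
    rw [hev, e, hrc]
    refine um_add_le (hf1.trans hpc)
      (IsUltrametricDist.norm_sum_le_of_forall_le_of_nonneg hc0 fun i _ => ?_)
    rw [norm_mul, norm_pow, norm_pow]
    exact (mul_le_of_le_one_right (norm_nonneg _)
      (pow_le_one₀ (by positivity) (pow_le_one₀ (norm_nonneg _) hβ1))).trans (hab i)
  by_contra! hall
  have hd0 : R ≠ 0 := by
    rintro rfl
    simp only [Multiset.card_zero] at hRd
    subst hRd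
    simp at hβ
  have hgt : ∀ T : Multiset A, T ≠ 0 → (∀ x ∈ T, r < ‖β ^ p - x‖) →
      r ^ Multiset.card T < ‖(T.map fun x => β ^ p - x).prod‖ := fun T => by
    induction T using Multiset.induction_on with
    | empty => simp
    | cons y T ih =>
      intro _ hT
      rw [Multiset.card_cons, Multiset.map_cons, Multiset.prod_cons, norm_mul, pow_succ']
      have hy := hT y (Multiset.mem_cons_self y T)
      by_cases hT0 : T = 0
      · simpa [hT0] using hy
      · exact mul_lt_mul'' hy (ih hT0 fun x hx => hT x (Multiset.mem_cons_of_mem hx)) hr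
          (by positivity)
  have := hgt R hd0 hall
  rw [hRd] at this
  exact this.not_ge hsmall

/-- Frobenius surjectivity goes up finite extensions of degree prime to `p`. Approximate `p`-th
roots of the coefficients of the minimal polynomial of `α` yield a polynomial of the same degree
over `F` whose roots lie near the `p`-th roots of the conjugates of `α`. As the Galois group
permutes the conjugates transitively, the number of roots lying near the `p`-th roots of `α`
divides the degree; their average lies in `F(α)`. -/
lemma frobSurj_of_finrank {F : Type*} [Field F] [Algebra F A] [IsAlgClosed A] [IsGalois F A]
    (hσ : ∀ (σ : A ≃ₐ[F] A) (x : A), ‖σ x‖ = ‖x‖) (hp : ‖(p : A)‖ < 1)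
    (hF : FrobSurj p (Set.range (algebraMap F A))) (E : IntermediateField F A)
    [FiniteDimensional F E] (hE : ¬ p ∣ Module.finrank F E) : FrobSurj p (E : Set A) := by
  classical
  obtain ⟨c₀, hc₀, hF⟩ := hF
  set c := max c₀ ‖(p : A)‖ with hc
  have hc1 : c < 1 := max_lt hc₀ hp
  have hpc : ‖(p : A)‖ ≤ c := le_max_right _ _
  have hc0 : 0 ≤ c := (norm_nonneg _).trans hpc
  set D := Module.finrank F E with hD
  have hD0 : D ≠ 0 := fun h => hE (h ▸ dvd_zero p)
  refine ⟨c ^ ((D : ℝ)⁻¹), Real.rpow_lt_one hc0 hc1 (by positivity), fun α hαE hα1 => ?_⟩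
  set m := minpoly F α with hm
  have hint : IsIntegral F α := Algebra.IsIntegral.isIntegral α
  have hmm : m.Monic := minpoly.monic hint
  set d := m.natDegree with hd
  have hdD : d ∣ D := by
    have h1 : minpoly F (⟨α, hαE⟩ : E) = m := (minpoly.algebraMap_eq
      (algebraMap E A).injective (⟨α, hαE⟩ : E)).symm
    have h2 := minpoly.degree_dvd (K := F) (Algebra.IsIntegral.isIntegral (⟨α, hαE⟩ : E))
    rwa [h1] at h2
  have hpd : ¬ p ∣ d := fun h => hE (h.trans hdD)
  have hd0 : 0 < d := minpoly.natDegree_pos hint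
  set r := c ^ ((d : ℝ)⁻¹) with hr
  have hr0 : 0 ≤ r := Real.rpow_nonneg hc0 _
  have hrc : r ^ d = c := Real.rpow_inv_natCast_pow hc0 hd0.ne'
  have hr1 : r ≤ 1 := Real.rpow_le_one hc0 hc1.le (by positivity)
  have hcr : c ≤ r := hrc ▸ pow_le_of_le_one hr0 hr1 hd0.ne'
  have hrD : r ≤ c ^ ((D : ℝ)⁻¹) := by
    rcases hc0.eq_or_lt with h0 | h0
    · rw [hr, ← h0, Real.zero_rpow (by positivity)]
      exact Real.rpow_nonneg le_rfl _
    · refine Real.rpow_le_rpow_of_exponent_ge h0 hc1.le ?_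
      gcongr
      exact Nat.le_of_dvd (Nat.pos_of_ne_zero hD0) hdD
  -- the conjugates of `α`
  set R := m.aroots A with hR
  have hRd : Multiset.card R = d := by
    rw [hR, Polynomial.aroots_def, ← (IsAlgClosed.splits _).natDegree_eq_card_roots,
      Polynomial.natDegree_map]
  have hconj : ∀ x ∈ R, ∃ σ : A ≃ₐ[F] A, σ α = x := fun x hx => by
    rw [hR, Polynomial.mem_aroots] at hx
    exact minpoly.exists_algEquiv_of_root' hint.isAlgebraic hx.2
  have hprod : (R.map fun x => Polynomial.X - Polynomial.C x).prod
      = m.map (algebraMap F A) :=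
    ((IsAlgClosed.splits _).eq_prod_roots_of_monic (hmm.map (algebraMap F A))).symm
  have hcoeff : ∀ i, ‖algebraMap F A (m.coeff i)‖ ≤ 1 := fun i => by
    rw [← Polynomial.coeff_map, ← hprod]
    refine norm_coeff_prod_X_sub_C_le R (fun x hx => ?_) i
    obtain ⟨σ, rfl⟩ := hconj x hx
    rwa [hσ]
  have hex : ∀ i, ∃ b : F, ‖algebraMap F A (m.coeff i) - algebraMap F A b ^ p‖ ≤ c := fun i => by
    obtain ⟨y, ⟨b, rfl⟩, hy⟩ := hF _ ⟨m.coeff i, rfl⟩ (hcoeff i)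
    exact ⟨b, hy.trans (le_max_left _ _)⟩
  choose b hb using hex
  have hb1 : ∀ i, ‖algebraMap F A (b i)‖ ≤ 1 := fun i =>
    norm_le_one_of_pow_sub (p := p) hc1.le (hcoeff i) (hb i)
  set g : Polynomial F := Polynomial.X ^ d
    + ∑ i ∈ Finset.range d, Polynomial.C (b i) * Polynomial.X ^ i with hg
  have hlt : (∑ i ∈ Finset.range d, Polynomial.C (b i) * Polynomial.X ^ i).degree
      < (d : WithBot ℕ) := by
    refine Polynomial.mem_degreeLT.1 (sum_mem fun i hi => Polynomial.mem_degreeLT.2 ?_)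
    exact (Polynomial.degree_C_mul_X_pow_le i (b i)).trans_lt
      (by exact_mod_cast Finset.mem_range.1 hi)
  have hgm : g.Monic := Polynomial.monic_X_pow_add hlt
  have hgd : g.natDegree = d := by
    rw [hg, Polynomial.natDegree_add_eq_left_of_degree_lt (by rwa [Polynomial.degree_X_pow]),
      Polynomial.natDegree_X_pow]
  set s := g.aroots A with hs
  have hsd : Multiset.card s = d := by
    rw [hs, Polynomial.aroots_def, ← (IsAlgClosed.splits _).natDegree_eq_card_roots,
      Polynomial.natDegree_map, hgd]
  have hnear : ∀ β ∈ s, ∃ x ∈ R, ‖β ^ p - x‖ ≤ r := fun β hβ => by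
    refine exists_root_near (b := fun i => algebraMap F A (b i)) hRd ?_ hpc hr0 hrc hb1 hb ?_
    · rw [hprod]
      conv_lhs => rw [hmm.as_sum]
      simp [Polynomial.map_sum, ← hd]
    · rw [hs, Polynomial.mem_aroots] at hβ
      simpa [hg] using hβ.2
  have hmap : ∀ σ : A ≃ₐ[F] A, s.map σ = s := fun σ => by
    have h1 := (IsAlgClosed.splits (g.map (algebraMap F A))).roots_map (σ : A →+* A)
    rw [Polynomial.map_map] at h1
    have h2 : (σ : A →+* A).comp (algebraMap F A) = algebraMap F A := by
      ext x; exact σ.commutes x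
    rw [h2] at h1
    exact h1.symm
  -- the roots of `g` near the `p`-th roots of `x`
  set S : A → Multiset A := fun x => s.filter fun β => ‖β ^ p - x‖ ≤ r with hS
  have hSσ : ∀ (σ : A ≃ₐ[F] A) (x : A), S (σ x) = (S x).map σ := fun σ x => by
    simp only [hS]
    conv_lhs => rw [← hmap σ]
    rw [Multiset.filter_map]
    congr 1
    refine Multiset.filter_congr fun β _ => ?_
    simp only [Function.comp_apply]
    rw [← map_pow, ← map_sub, hσ]
  have hScard : ∀ x ∈ R, Multiset.card (S x) = Multiset.card (S α) := fun x hx => by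
    obtain ⟨σ, rfl⟩ := hconj x hx
    rw [hSσ, Multiset.card_map]
  -- the balls `‖y - β ^ p‖ ≤ r` around roots `β` of `g` partition these roots into classes `S x`
  have hdvd : Multiset.card (S α) ∣ d := by
    rw [← hsd, ← Multiset.card_map (fun β => Metric.closedBall (β ^ p) r) s,
      ← Multiset.toFinset_sum_count_eq (s.map fun β => Metric.closedBall (β ^ p) r)]
    refine Finset.dvd_sum fun B hB => ?_
    rw [Multiset.mem_toFinset, Multiset.mem_map] at hB
    obtain ⟨β₀, hβ₀, rfl⟩ := hB
    obtain ⟨x, hxR, hx⟩ := hnear β₀ hβ₀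
    rw [Multiset.count_map, ← hScard x hxR]
    refine dvd_of_eq (congrArg _ ?_)
    refine Multiset.filter_congr fun β _ => ?_
    have h1 : Metric.closedBall (β₀ ^ p) r = Metric.closedBall x r :=
      IsUltrametricDist.closedBall_eq_of_mem (by
        rwa [mem_closedBall_iff_norm, norm_sub_rev])
    rw [h1]
    constructor
    · intro h
      refine IsUltrametricDist.closedBall_eq_of_mem ?_
      rwa [mem_closedBall_iff_norm]
    · intro h
      rw [← mem_closedBall_iff_norm, h]
      exact Metric.mem_closedBall_self hr0
  refine ⟨(Multiset.card (S α) : A)⁻¹ * (S α).sum, ?_, ?_⟩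
  · rw [SetLike.mem_coe, ← InfiniteGalois.fixedField_fixingSubgroup E,
      IntermediateField.mem_fixedField_iff]
    intro σ hσE
    have hσα : σ α = α := (IntermediateField.mem_fixingSubgroup_iff E σ).1 hσE α hαE
    rw [map_mul, map_inv₀, map_natCast, map_multiset_sum, ← hSσ, hσα]
  · refine (average_approx hp hα1 hr1 (hpc.trans hcr) (S α) (fun h => hpd (h.trans hdvd))
      fun β hβ => ?_).trans hrD
    rw [norm_sub_rev]
    exact (Multiset.mem_filter.1 hβ).2

end PrimeToP

/-! ### Descent through Sylow subgroups -/

section GaloisDescent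

variable {p : ℕ} [hpr : Fact p.Prime] {F N : Type*} [Field F] [NormedField N]
  [IsUltrametricDist N] [Algebra F N] [FiniteDimensional F N]

lemma sigma_pow_apply (σ : N ≃ₐ[F] N) (n : ℕ) (x : N) : (σ ^ n) x = σ^[n] x := by
  induction n with
  | zero => rfl
  | succ n ih => rw [pow_succ', Function.iterate_succ_apply', ← ih]; rfl

/-- For subgroups `H ≤ H'` of orders `p ^ n` and `p ^ (n + 1)`, the fixed field of `H` is cyclic of
degree dividing `p` over that of `H'`. -/
lemma frobSurj_fixedField_of_succ (hσ : ∀ (σ : N ≃ₐ[F] N) (x : N), ‖σ x‖ = ‖x‖)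
    (hp : ‖(p : N)‖ < 1) (hp' : (p : N) ≠ 0)
    (hζ : ∀ n : ℕ, ∃ ζ : F, IsPrimitiveRoot (algebraMap F N ζ) (p ^ n))
    {H H' : Subgroup (N ≃ₐ[F] N)} {n : ℕ} (hle : H ≤ H') (hH : Nat.card H = p ^ n)
    (hH' : Nat.card H' = p ^ (n + 1))
    (h : FrobSurj p (IntermediateField.fixedField H' : Set N)) :
    FrobSurj p (IntermediateField.fixedField H : Set N) := by
  have hp1 := hpr.out.one_lt
  have hcard : p ^ n < p ^ (n + 1) := Nat.pow_lt_pow_right hp1 n.lt_succ_self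
  obtain ⟨σ, hσH', hσH⟩ : ∃ σ ∈ H', σ ∉ H := by
    by_contra! hall
    have := Subgroup.card_dvd_of_le (show H' ≤ H from hall)
    rw [hH, hH'] at this
    exact (Nat.le_of_dvd (pow_pos hpr.out.pos n) this).not_gt hcard
  set J := H.subgroupOf H' with hJ
  have hJcard : Nat.card J = p ^ n := by
    rw [← hH]; exact Nat.card_congr (Subgroup.subgroupOfEquivOfLe hle).toEquiv
  have hJi : J.index = p := by
    have := J.index_mul_card
    rw [hJcard, hH', pow_succ'] at this
    exact Nat.eq_of_mul_eq_mul_right (pow_pos hpr.out.pos n) this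
  have hJn : J.Normal := Subgroup.normal_of_index_eq_minFac_card (by
    rw [hJi, hH', hpr.out.pow_minFac n.succ_ne_zero])
  have hconj : ∀ τ ∈ H, σ⁻¹ * τ * σ ∈ H := fun τ hτ => by
    have := hJn.conj_mem ⟨τ, hle hτ⟩ (Subgroup.mem_subgroupOf.2 hτ) ⟨σ, hσH'⟩⁻¹
    simpa [hJ, Subgroup.mem_subgroupOf] using this
  have hσp : σ ^ p ∈ H := by
    have := J.pow_index_mem ⟨σ, hσH'⟩
    rw [hJi] at this
    simpa [hJ, Subgroup.mem_subgroupOf] using this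
  refine FrobSurj.kummer (M := (IntermediateField.fixedField H').toSubfield)
    (S := (IntermediateField.fixedField H).toSubfield) σ.toRingEquiv (hσ σ) (fun x => ?_)
    (fun x hx => ?_) (fun x hx => ?_) hp hp' (fun m => ?_) h
  · change x ∈ IntermediateField.fixedField H' ↔ x ∈ IntermediateField.fixedField H ∧ σ x = x
    rw [IntermediateField.mem_fixedField_iff, IntermediateField.mem_fixedField_iff]
    refine ⟨fun hx => ⟨fun τ hτ => hx τ (hle hτ), hx σ hσH'⟩, fun ⟨hx, hxσ⟩ => ?_⟩
    set K := MulAction.stabilizer (N ≃ₐ[F] N) x ⊓ H' with hK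
    have hHK : H ≤ K := le_inf (fun τ hτ => MulAction.mem_stabilizer_iff.2 (hx τ hτ)) hle
    have hσK : σ ∈ K := ⟨MulAction.mem_stabilizer_iff.2 hxσ, hσH'⟩
    have hd := Subgroup.card_dvd_of_le (show K ≤ H' from inf_le_right)
    rw [hH', Nat.dvd_prime_pow hpr.out] at hd
    obtain ⟨k, hk, hKk⟩ := hd
    have hge : n < k := by
      by_contra! hkn
      have : H = K := Subgroup.eq_of_le_of_card_ge hHK (by
        rw [hKk, hH]; exact Nat.pow_le_pow_right hpr.out.pos hkn)
      exact hσH (this ▸ hσK)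
    have hKH' : K = H' := Subgroup.eq_of_le_of_card_ge inf_le_right (by
      rw [hKk, hH']; exact Nat.pow_le_pow_right hpr.out.pos hge)
    intro τ hτ
    rw [← hKH'] at hτ
    exact MulAction.mem_stabilizer_iff.1 hτ.1
  · change σ x ∈ IntermediateField.fixedField H
    have hx' := (IntermediateField.mem_fixedField_iff H x).1 hx
    rw [IntermediateField.mem_fixedField_iff]
    intro τ hτ
    have h1 := congrArg σ (hx' _ (hconj τ hτ))
    have h2 : σ ((σ⁻¹ * τ * σ) x) = τ (σ x) := by
      rw [← AlgEquiv.mul_apply, ← AlgEquiv.mul_apply]; congr 1; group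
    rwa [h2] at h1
  · change σ^[p] x = x
    rw [← sigma_pow_apply]
    exact (IntermediateField.mem_fixedField_iff H x).1 hx _ hσp
  · obtain ⟨ζ, hζ⟩ := hζ m
    exact ⟨_, (IntermediateField.fixedField H').algebraMap_mem ζ, hζ⟩

/-- Frobenius surjectivity passes from the fixed field of `Q` down to the fixed field of `H`, if
the index of `Q` in `H` is prime to `p`: average an approximate `p`-th root over its orbit. -/
lemma frobSurj_fixedField_of_index (hσ : ∀ (σ : N ≃ₐ[F] N) (x : N), ‖σ x‖ = ‖x‖)
    (hp : ‖(p : N)‖ < 1) {H : Subgroup (N ≃ₐ[F] N)} {Q : Subgroup H} (hQ : ¬ p ∣ Q.index)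
    (h : FrobSurj p (IntermediateField.fixedField (Q.map H.subtype) : Set N)) :
    FrobSurj p (IntermediateField.fixedField H : Set N) := by
  classical
  obtain ⟨c, hc1, hc⟩ := h
  refine ⟨max c ‖(p : N)‖, max_lt hc1 hp, fun z hz hz1 => ?_⟩
  have hz' := (IntermediateField.mem_fixedField_iff H z).1 hz
  have hQH : Q.map H.subtype ≤ H := Subgroup.map_subtype_le Q
  obtain ⟨y, hy, hzy⟩ := hc z ((IntermediateField.mem_fixedField_iff _ z).2
    fun τ hτ => hz' τ (hQH hτ)) hz1
  have hy' := (IntermediateField.mem_fixedField_iff _ y).1 hy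
  have : Finite (MulAction.orbit H y) := (Set.finite_range fun τ : H => τ • y).to_subtype
  have : Fintype (MulAction.orbit H y) := Fintype.ofFinite _
  set s : Multiset N := (Finset.univ : Finset (MulAction.orbit H y)).val.map Subtype.val with hs
  have hcard : Multiset.card s ∣ Q.index := by
    have h1 : Multiset.card s = (MulAction.stabilizer H y).index := by
      rw [MulAction.index_stabilizer, hs, Multiset.card_map, Finset.card_val, Finset.card_univ,
        ← Nat.card_eq_fintype_card, Nat.card_coe_set_eq]
    rw [h1]
    exact Subgroup.index_dvd_of_le fun τ hτ =>
      MulAction.mem_stabilizer_iff.2 (hy' τ ⟨τ, hτ, rfl⟩)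
  have hsum : s.sum = ∑ b : MulAction.orbit H y, (b : N) := rfl
  refine ⟨(Multiset.card s : N)⁻¹ * s.sum, ?_, average_approx hp hz1
    (max_le hc1.le hp.le) (le_max_right _ _) s (fun hd => hQ (hd.trans hcard)) fun b hb => ?_⟩
  · rw [SetLike.mem_coe, IntermediateField.mem_fixedField_iff]
    intro τ hτ
    rw [map_mul, map_inv₀, map_natCast, hsum, map_sum]
    congr 1
    exact Equiv.sum_comp (MulAction.toPerm (⟨τ, hτ⟩ : H)) fun b : MulAction.orbit H y => (b : N)
  · obtain ⟨⟨_, τ, rfl⟩, -, rfl⟩ := Multiset.mem_map.1 hb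
    have e : z - (τ : N ≃ₐ[F] N) y ^ p = (τ : N ≃ₐ[F] N) (z - y ^ p) := by
      rw [map_sub, map_pow, hz' τ τ.2]
    change ‖z - (τ : N ≃ₐ[F] N) y ^ p‖ ≤ _
    rw [e, hσ]
    exact hzy.trans (le_max_left _ _)

/-- Frobenius surjectivity for all intermediate fields, given the case of degree prime to `p`:
a Sylow `p`-subgroup of the Galois group has a fixed field of degree prime to `p`, the fixed
fields of its subgroups are reached by cyclic steps of degree `p`, and any subgroup contains
a `p`-group of index prime to `p`. -/
lemma frobSurj_intermediateField [IsGalois F N] (hσ : ∀ (σ : N ≃ₐ[F] N) (x : N), ‖σ x‖ = ‖x‖)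
    (hp : ‖(p : N)‖ < 1) (hp' : (p : N) ≠ 0)
    (hζ : ∀ n : ℕ, ∃ ζ : F, IsPrimitiveRoot (algebraMap F N ζ) (p ^ n))
    (htop : ∀ E : IntermediateField F N, ¬ p ∣ Module.finrank F E → FrobSurj p (E : Set N))
    (E : IntermediateField F N) : FrobSurj p (E : Set N) := by
  obtain ⟨m, k, hk, hmk⟩ := Nat.exists_eq_pow_mul_and_not_dvd
    (n := Nat.card (N ≃ₐ[F] N)) Nat.card_pos.ne' p hpr.out.one_lt.ne'
  have hchain : ∀ j n : ℕ, n + j = m → ∀ Q : Subgroup (N ≃ₐ[F] N), Nat.card Q = p ^ n →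
      FrobSurj p (IntermediateField.fixedField Q : Set N) := fun j => by
    induction j with
    | zero =>
      intro n hn Q hQ
      obtain rfl : n = m := by lia
      refine htop _ ?_
      rw [IntermediateField.finrank_eq_fixingSubgroup_index,
        IntermediateField.fixingSubgroup_fixedField]
      have := Q.index_mul_card
      rw [hQ, hmk, mul_comm] at this
      rwa [Nat.eq_of_mul_eq_mul_left (pow_pos hpr.out.pos n) this]
    | succ j ih =>
      intro n hn Q hQ
      obtain ⟨Q', hQ', hle⟩ := Sylow.exists_subgroup_card_pow_succ (p := p) (n := n)
        (by rw [hmk]; exact dvd_mul_of_dvd_left (pow_dvd_pow p (by lia)) k) hQ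
      exact frobSurj_fixedField_of_succ hσ hp hp' hζ hle hQ hQ' (ih (n + 1) (by lia) Q' hQ')
  rw [← IsGalois.fixedField_fixingSubgroup E]
  set H := E.fixingSubgroup
  obtain ⟨Q⟩ : Nonempty (Sylow p H) := inferInstance
  refine frobSurj_fixedField_of_index (Q := Q) hσ hp Q.not_dvd_index ?_
  have hQc : Nat.card ((Q : Subgroup H).map H.subtype) = p ^ (Nat.card H).factorization p := by
    rw [Subgroup.card_map_of_injective H.subtype_injective, Q.card_eq_multiplicity]
  have hle : (Nat.card H).factorization p ≤ m := by
    have h1 : p ^ (Nat.card H).factorization p ∣ p ^ m * k := by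
      rw [← hmk]
      exact (Nat.ordProj_dvd _ _).trans (Subgroup.card_subgroup_dvd_card H)
    have h2 := (Nat.Coprime.pow_left _
      ((Nat.Prime.coprime_iff_not_dvd hpr.out).2 hk)).dvd_of_dvd_mul_right h1
    exact (Nat.pow_dvd_pow_iff_le_right hpr.out.one_lt).1 h2
  exact hchain (m - (Nat.card H).factorization p) _ (by lia) _ hQc

end GaloisDescent

/-! ### Finite extensions of the cyclotomic tower -/

section Transfer

variable {p : ℕ} [hpr : Fact p.Prime]

lemma FrobSurj.image {E E' : Type*} [NormedField E] [NormedField E'] (φ : E →+* E')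
    (hφ : ∀ x, ‖φ x‖ = ‖x‖) {S : Set E} (h : FrobSurj p S) : FrobSurj p (φ '' S) := by
  obtain ⟨c, hc, h⟩ := h
  refine ⟨c, hc, ?_⟩
  rintro _ ⟨x, hx, rfl⟩ hx1
  obtain ⟨y, hy, hxy⟩ := h x hx (by rwa [← hφ])
  exact ⟨φ y, ⟨y, hy, rfl⟩, by rwa [← map_pow, ← map_sub, hφ]⟩

lemma FrobSurj.of_image {E E' : Type*} [NormedField E] [NormedField E'] (φ : E →+* E')
    (hφ : ∀ x, ‖φ x‖ = ‖x‖) {S : Set E} (h : FrobSurj p (φ '' S)) : FrobSurj p S := by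
  obtain ⟨c, hc, h⟩ := h
  refine ⟨c, hc, fun x hx hx1 => ?_⟩
  obtain ⟨_, ⟨y, hy, rfl⟩, hxy⟩ := h (φ x) ⟨x, hx, rfl⟩ (by rwa [hφ])
  exact ⟨y, hy, by rwa [← map_pow, ← map_sub, hφ] at hxy⟩

/-- Density is enough to pass from a subfield to the whole field. -/
lemma FrobSurj.of_dense {E : Type*} [NormedField E] [IsUltrametricDist E] {S : Set E}
    (hS : Dense S) (h : FrobSurj p S) : FrobSurj p (Set.univ : Set E) := by
  obtain ⟨c, hc, h⟩ := h
  refine ⟨max c (1 / 2), max_lt hc (by norm_num), fun x _ hx1 => ?_⟩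
  obtain ⟨t, ht, hxt⟩ := Metric.dense_iff.1 hS x (1 / 2) (by norm_num)
  rw [Metric.mem_ball, dist_comm, dist_eq_norm] at ht
  have ht1 : ‖t‖ ≤ 1 := by
    have := um_sub_le hx1 (ht.le.trans (by norm_num : (1 / 2 : ℝ) ≤ 1))
    rwa [sub_sub_cancel] at this
  obtain ⟨y, -, hy⟩ := h t hxt ht1
  refine ⟨y, trivial, ?_⟩
  have := um_add_le (ht.le.trans (le_max_right c _)) (hy.trans (le_max_left _ (1 / 2)))
  rwa [sub_add_sub_cancel] at this

end Transfer

section FiniteExtension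

variable {p : ℕ} [hpr : Fact p.Prime]

lemma padicAlgCl_norm_algEquiv {F : Type*} [Field F] [Algebra ℚ_[p] F] [Algebra F (PadicAlgCl p)]
    [IsScalarTower ℚ_[p] F (PadicAlgCl p)] (σ : PadicAlgCl p ≃ₐ[F] PadicAlgCl p)
    (x : PadicAlgCl p) : ‖σ x‖ = ‖x‖ := by
  rw [← PadicAlgCl.spectralNorm_eq, ← PadicAlgCl.spectralNorm_eq]
  exact (spectralNorm_eq_of_equiv (σ.restrictScalars ℚ_[p]) x).symm

lemma padicAlgCl_roots (n : ℕ) : ∃ ζ : PadicAlgCl p, IsPrimitiveRoot ζ (p ^ n) := by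
  have : NeZero ((p ^ n : ℕ) : PadicAlgCl p) :=
    ⟨by exact_mod_cast pow_ne_zero n hpr.out.ne_zero⟩
  exact HasEnoughRootsOfUnity.exists_primitiveRoot (PadicAlgCl p) (p ^ n)

lemma padicAlgCl_norm_p : ‖(p : PadicAlgCl p)‖ < 1 := by
  have := norm_algebraMap' (PadicAlgCl p) (p : ℚ_[p])
  rw [map_natCast] at this
  rw [this]
  exact Padic.norm_p_lt_one

/-- Almost purity for finite extensions of `ℚ_p(μ_{p^∞})`: the Galois closure is treated by
`frobSurj_intermediateField`, and extensions of degree prime to `p` by `frobSurj_of_finrank`. -/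
lemma frobSurj_finite_cycTower {F : IntermediateField ℚ_[p] (PadicAlgCl p)}
    (hF : F = cycTower p (PadicAlgCl p)) (M : IntermediateField F (PadicAlgCl p))
    [FiniteDimensional F M] : FrobSurj p (M : Set (PadicAlgCl p)) := by
  have : CharZero F := charZero_of_injective_algebraMap (algebraMap ℚ_[p] F).injective
  have : Algebra.IsAlgebraic F (PadicAlgCl p) := Algebra.IsAlgebraic.tower_top (K := ℚ_[p]) F
  have : IsAlgClosure F (PadicAlgCl p) := ⟨inferInstance, inferInstance⟩
  have : Normal F (PadicAlgCl p) := IsAlgClosure.normal F _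
  have : IsGalois F (PadicAlgCl p) := ⟨⟩
  set N := IntermediateField.normalClosure F M (PadicAlgCl p) with hN
  have hMN : M ≤ N := IntermediateField.le_normalClosure M
  have : FiniteDimensional F N := normalClosure.is_finiteDimensional F M (PadicAlgCl p)
  have : IsGalois F N := ⟨⟩
  have hpn := padicAlgCl_norm_p (p := p)
  have hσ : ∀ (σ : N ≃ₐ[F] N) (x : N), ‖σ x‖ = ‖x‖ := fun σ x => by
    have h1 := AlgEquiv.liftNormal_commutes σ (PadicAlgCl p) x
    have h2 := padicAlgCl_norm_algEquiv (σ.liftNormal (PadicAlgCl p)) (algebraMap N _ x)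
    rw [h1] at h2
    exact h2
  have hval : ∀ x : N, ‖N.val.toRingHom x‖ = ‖x‖ := fun x => rfl
  have key := frobSurj_intermediateField (p := p) (F := F) (N := N) hσ hpn
    (by exact_mod_cast hpr.out.ne_zero) (fun n => by
      obtain ⟨ζ, hζ⟩ := padicAlgCl_roots (p := p) n
      refine ⟨⟨ζ, hF ▸ IntermediateField.subset_adjoin _ _ ⟨n, hζ.pow_eq_one⟩⟩, ?_⟩
      refine IsPrimitiveRoot.of_map_of_injective (f := algebraMap N (PadicAlgCl p)) ?_
        (algebraMap N (PadicAlgCl p)).injective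
      exact hζ) (fun E hE => by
      refine FrobSurj.of_image N.val.toRingHom hval ?_
      have hd : Module.finrank F (IntermediateField.lift E) = Module.finrank F E :=
        (IntermediateField.liftAlgEquiv E).toLinearEquiv.finrank_eq.symm
      have : FiniteDimensional F (IntermediateField.lift E) :=
        (IntermediateField.liftAlgEquiv E).toLinearEquiv.finiteDimensional
      have := frobSurj_of_finrank (p := p) (F := F) (A := PadicAlgCl p)
        padicAlgCl_norm_algEquiv hpn (by
          have := frobSurj_cycTower (p := p) (A := PadicAlgCl p) padicAlgCl_roots hpn
          convert this
          ext x
          simp [hF]) (IntermediateField.lift E) (by rwa [hd])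
      exact this) (IntermediateField.restrict hMN)
  have h2 := key.image N.val.toRingHom hval
  convert h2
  ext x
  constructor
  · intro hx
    exact ⟨⟨x, hMN hx⟩, (IntermediateField.mem_restrict hMN _).2 hx, rfl⟩
  · rintro ⟨y, hy, rfl⟩
    exact (IntermediateField.mem_restrict hMN _).1 hy

end FiniteExtension

/-! ### The tower `L(μ_{p^∞})` and its completion -/

section Completion

variable {p : ℕ} [hpr : Fact p.Prime]

/-- An algebraic field extension of `ℚ_p` with an absolute value embeds isometrically into
`PadicAlgCl p`, by uniqueness of the extension of the `p`-adic absolute value. -/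
lemma norm_algHom_padicAlgCl {T : Type*} [NormedField T] [Algebra ℚ_[p] T]
    [Algebra.IsAlgebraic ℚ_[p] T] (hext : ∀ c : ℚ_[p], ‖algebraMap ℚ_[p] T c‖ = ‖c‖)
    (j : T →ₐ[ℚ_[p]] PadicAlgCl p) (t : T) : ‖j t‖ = ‖t‖ := by
  have h1 := spectralNorm_unique_field_norm_ext (f := NormedField.toAbsoluteValue T) hext t
  rw [← PadicAlgCl.spectralNorm_eq, spectralNorm, minpoly.algHom_eq j j.injective]
  exact h1.symm

/-- The subfield `L(μ_{p^∞})` of `K`. -/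
def bigTower (p : ℕ) [Fact p.Prime] (L K : Type*) [Field L] [Field K] [Algebra ℚ_[p] K]
    [Algebra L K] : IntermediateField ℚ_[p] K :=
  IntermediateField.adjoin ℚ_[p] (Set.range (algebraMap L K) ∪ {x : K | ∃ n : ℕ, x ^ p ^ n = 1})

lemma isAlgebraic_bigTower (L K : Type*) [Field L] [Algebra ℚ_[p] L] [FiniteDimensional ℚ_[p] L]
    [Field K] [Algebra ℚ_[p] K] [Algebra L K] [IsScalarTower ℚ_[p] L K] :
    Algebra.IsAlgebraic ℚ_[p] (bigTower p L K) := by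
  refine IntermediateField.isAlgebraic_adjoin ?_
  rintro x (⟨l, rfl⟩ | ⟨n, hn⟩)
  · exact (Algebra.IsIntegral.isIntegral l).algebraMap
  · exact IsIntegral.of_pow (pow_pos hpr.out.pos n) (hn ▸ isIntegral_one)

/-- The image of `L(μ_{p^∞})` in `PadicAlgCl p` is a finite extension of `ℚ_p(μ_{p^∞})`. -/
lemma exists_range_bigTower (L K : Type*) [Field L] [Algebra ℚ_[p] L]
    [FiniteDimensional ℚ_[p] L] [Field K] [Algebra ℚ_[p] K] [Algebra L K] [IsScalarTower ℚ_[p] L K]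
    (hroots : ∀ n : ℕ, ∃ x : K, IsPrimitiveRoot x (p ^ n))
    (j : bigTower p L K →ₐ[ℚ_[p]] PadicAlgCl p) :
    ∃ M : IntermediateField (cycTower p (PadicAlgCl p)) (PadicAlgCl p),
      FiniteDimensional (cycTower p (PadicAlgCl p)) M ∧ (M : Set (PadicAlgCl p)) = Set.range j := by
  have hL : ∀ l : L, algebraMap L K l ∈ bigTower p L K := fun l =>
    IntermediateField.subset_adjoin _ _ (Or.inl ⟨l, rfl⟩)
  have hμ : ∀ x : K, ∀ n : ℕ, x ^ p ^ n = 1 → x ∈ bigTower p L K := fun x n hx =>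
    IntermediateField.subset_adjoin _ _ (Or.inr ⟨n, hx⟩)
  let i : L →ₐ[ℚ_[p]] bigTower p L K :=
    (IsScalarTower.toAlgHom ℚ_[p] L K).codRestrict (bigTower p L K).toSubalgebra hL
  let b := Module.finBasis ℚ_[p] L
  have hFj : cycTower p (PadicAlgCl p) ≤ j.fieldRange := by
    rw [cycTower, IntermediateField.adjoin_le_iff]
    rintro x ⟨n, hn⟩
    obtain ⟨ζ, hζ⟩ := hroots n
    have hζ' : IsPrimitiveRoot (⟨ζ, hμ ζ n hζ.pow_eq_one⟩ : bigTower p L K) (p ^ n) :=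
      IsPrimitiveRoot.of_map_of_injective (f := (bigTower p L K).val) hζ
        (bigTower p L K).val.injective
    have : NeZero (p ^ n) := ⟨pow_ne_zero n hpr.out.ne_zero⟩
    obtain ⟨k, -, hk⟩ := (hζ'.map_of_injective j.injective).eq_pow_of_pow_eq_one hn
    exact ⟨_ ^ k, by rw [← hk]; exact map_pow j _ k⟩
  refine ⟨IntermediateField.adjoin _ (Set.range fun k => j (i (b k))), ?_, ?_⟩
  · refine IntermediateField.finiteDimensional_adjoin ?_
    rintro x -
    exact (Algebra.IsIntegral.isIntegral (R := ℚ_[p]) x).tower_top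
  set M := IntermediateField.adjoin (cycTower p (PadicAlgCl p))
    (Set.range fun k => j (i (b k))) with hM
  refine Set.Subset.antisymm ?_ ?_
  · have hle : M ≤ IntermediateField.extendScalars hFj := by
      rw [hM, IntermediateField.adjoin_le_iff]
      rintro _ ⟨k, rfl⟩
      exact ⟨i (b k), rfl⟩
    intro x hx
    exact hle hx
  · have hMF : ∀ x ∈ cycTower p (PadicAlgCl p), x ∈ M := fun x hx =>
      M.algebraMap_mem ⟨x, hx⟩
    have hMQ : ∀ c : ℚ_[p], algebraMap ℚ_[p] (PadicAlgCl p) c ∈ M := fun c =>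
      hMF _ (IntermediateField.algebraMap_mem _ c)
    have hle : bigTower p L K
        ≤ (((M.restrictScalars ℚ_[p]).comap j).map (bigTower p L K).val) := by
      refine IntermediateField.adjoin_le_iff.2 ?_
      rintro x (⟨l, rfl⟩ | ⟨n, hn⟩)
      · refine ⟨i l, ?_, rfl⟩
        change j (i l) ∈ M
        rw [← b.sum_repr l, map_sum, map_sum]
        refine sum_mem fun k _ => ?_
        rw [Algebra.smul_def, map_mul, map_mul, AlgHom.commutes, AlgHom.commutes]
        exact mul_mem (hMQ _) (IntermediateField.subset_adjoin _ _ ⟨k, rfl⟩)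
      · refine ⟨⟨x, hμ x n hn⟩, ?_, rfl⟩
        refine hMF _ (IntermediateField.subset_adjoin _ _ ⟨n, ?_⟩)
        rw [← map_pow, ← map_one j]
        exact congrArg j (Subtype.ext hn)
    rintro _ ⟨t, rfl⟩
    obtain ⟨t', ht', h⟩ := hle t.2
    have : t' = t := Subtype.ext h
    rw [← this]
    exact ht'

lemma frobSurj_bigTower (L K : Type*) [Field L] [Algebra ℚ_[p] L]
    [FiniteDimensional ℚ_[p] L] [NormedField K] [Algebra ℚ_[p] K] [Algebra L K]
    [IsScalarTower ℚ_[p] L K] (hext : ∀ c : ℚ_[p], ‖algebraMap ℚ_[p] K c‖ = ‖c‖)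
    (hroots : ∀ n : ℕ, ∃ x : K, IsPrimitiveRoot x (p ^ n)) :
    FrobSurj p (bigTower p L K : Set K) := by
  have := isAlgebraic_bigTower (p := p) L K
  let j : bigTower p L K →ₐ[ℚ_[p]] PadicAlgCl p := IsAlgClosed.lift
  have hj : ∀ t, ‖j t‖ = ‖t‖ := norm_algHom_padicAlgCl (T := bigTower p L K) hext j
  obtain ⟨M, hMfin, hM⟩ := exists_range_bigTower L K hroots j
  have h1 := frobSurj_finite_cycTower rfl M
  rw [hM, ← Set.image_univ] at h1
  have h2 : FrobSurj p (Set.univ : Set (bigTower p L K)) := FrobSurj.of_image j.toRingHom hj h1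
  have h3 := h2.image (bigTower p L K).val.toRingHom fun _ => rfl
  convert h3
  ext x
  simp

end Completion

/-- **The completion of `L(μ_{p^∞})` is perfectoid.**  Let `L` be a finite extension
of `ℚ_p` and let `K` be the completion of `L_∞ = L(μ_{p^∞})` with respect to the
unique absolute value extending the `p`-adic absolute value: i.e. `K` is a complete
nonarchimedean normed field extending `ℚ_p` isometrically, containing `L` and a
primitive `p^n`-th root of unity for every `n`, in which the subfield generated by
`L` and all `p`-power roots of unity is dense.  Then `K` is perfectoid: its value
group is dense in `ℝ_{>0}` and the `p`-power Frobenius on `O_K/pO_K` is surjective,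
where `O_K = {x : K | ‖x‖ ≤ 1}`. -/
theorem completion_of_cyclotomic_tower_is_perfectoid
    (p : ℕ) [Fact p.Prime]
    (L : Type*) [Field L] [Algebra ℚ_[p] L] [FiniteDimensional ℚ_[p] L]
    (K : Type*) [NormedField K] [CompleteSpace K]
    [Algebra ℚ_[p] K] [Algebra L K] [IsScalarTower ℚ_[p] L K]
    (hna : IsNonarchimedean fun x : K => ‖x‖)
    (hext : ∀ c : ℚ_[p], ‖algebraMap ℚ_[p] K c‖ = ‖c‖)
    (hroots : ∀ n : ℕ, ∃ x : K, IsPrimitiveRoot x (p ^ n))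
    (hdense : Dense ((Subfield.closure
      (Set.range (algebraMap L K) ∪ {x : K | ∃ n : ℕ, x ^ p ^ n = 1}) : Subfield K) : Set K))
    (O : Subring K) (hO : (O : Set K) = {x : K | ‖x‖ ≤ 1}) :
    (∀ r : ℝ, 0 < r → r ∈ closure {s : ℝ | ∃ x : K, x ≠ 0 ∧ ‖x‖ = s}) ∧
    (∀ y : O ⧸ Ideal.span {(p : O)}, ∃ x, x ^ p = y) := by
  have : IsUltrametricDist K := IsUltrametricDist.isUltrametricDist_of_isNonarchimedean_norm hna
  have hpn : ‖(p : K)‖ < 1 := by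
    have := hext p
    rw [map_natCast] at this
    rw [this]
    exact Padic.norm_p_lt_one
  have hp0 : (p : K) ≠ 0 := by
    have : (p : ℚ_[p]) ≠ 0 := by exact_mod_cast (Fact.out : p.Prime).ne_zero
    have h := (map_ne_zero (algebraMap ℚ_[p] K)).2 this
    rwa [map_natCast] at h
  have hdense' : Dense (bigTower p L K : Set K) := by
    refine hdense.mono ?_
    have : Subfield.closure (Set.range (algebraMap L K) ∪ {x : K | ∃ n : ℕ, x ^ p ^ n = 1})
        ≤ (bigTower p L K).toSubfield :=
      Subfield.closure_le.2 (IntermediateField.subset_adjoin _ _)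
    exact this
  have hfrob : FrobSurj p ((⊤ : Subfield K) : Set K) :=
    (frobSurj_bigTower L K hext hroots).of_dense hdense'
  have hnd : NormDense ((⊤ : Subfield K) : Set K) := normDense_of_roots hpn hp0 fun n => by
    obtain ⟨ζ, hζ⟩ := hroots n
    exact ⟨ζ, trivial, hζ⟩
  refine ⟨fun r hr => ?_, fun y => ?_⟩
  · rw [Metric.mem_closure_iff]
    intro δ hδ
    obtain ⟨d, -, hd0, hd1, hd2⟩ := hnd.exists_zpow (ε := 1 - δ / r)
      (sub_lt_self 1 (div_pos hδ hr)) hr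
    refine ⟨‖d‖, ⟨d, hd0, rfl⟩, ?_⟩
    rw [sub_mul, one_mul, div_mul_cancel₀ _ hr.ne'] at hd2
    rw [Real.dist_eq, abs_of_nonneg (sub_nonneg.2 hd1)]
    linarith
  · have hmem : ∀ x : K, x ∈ O ↔ ‖x‖ ≤ 1 := fun x => by
      rw [← SetLike.mem_coe, hO, Set.mem_ofPred_eq]
    obtain ⟨⟨x, hx⟩, rfl⟩ := Ideal.Quotient.mk_surjective y
    have hx1 := (hmem x).1 hx
    obtain ⟨z, -, hz⟩ := hfrob.approx_p hnd hpn hp0 x trivial hx1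
    have hz1 := norm_le_one_of_pow_sub hpn.le hx1 hz
    have hw : (z ^ p - x) / p ∈ O := by
      rw [hmem, norm_div, norm_sub_rev]
      exact div_le_one_of_le₀ hz (norm_nonneg _)
    refine ⟨Ideal.Quotient.mk _ ⟨z, (hmem z).2 hz1⟩, ?_⟩
    rw [← map_pow, Ideal.Quotient.eq, Ideal.mem_span_singleton]
    refine ⟨⟨_, hw⟩, Subtype.ext ?_⟩
    change z ^ p - x = (p : K) * ((z ^ p - x) / p)
    rw [mul_div_cancel₀ _ hp0]
end
end

section
/- Suppose in addition that K is algebraically closed. Then O_{K^♭} is an integral domain of characteristic p and its field of fractions K^♭ := Frac(O_{K^♭}) is an algebraically closed field. (In particular, taking K = ℂ_p, the tilt ℂ_p^♭ is algebraically closed.) -/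
/-!
Write `O` for the valuation ring and `R = O / ϖ`. Both parts work directly with the components in `R`.

*Domain.* If `αᵢ ≠ 0` then for every lift `a` of `αᵢ₊₁` one has `‖a‖ ^ q > ‖ϖ‖`. Two nonzero sequences
`α, β` have a common index `i` with `αᵢ, βᵢ ≠ 0`, so lifts `a, b` at the index `i + 1` satisfy
`‖a * b‖ ^ q > ‖ϖ‖ ^ 2`, which is incompatible with `ϖ ∣ a * b` because `q ≥ 2`.

*Algebraic closedness.* It suffices that every monic polynomial `P` of positive degree `d` over the
tilt has a root in the tilt (`isAlgClosed_fractionRing`). Let `Pᵢ` be its `i`-th component, a polynomial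
over `R`. Lift `Pᵢ` to a monic polynomial over `O`; it splits over `O` because `K` is algebraically closed
and `O` is integrally closed, and if `y` is a root of `Pᵢ` in `R` then a lift of `y` is within
`‖ϖ‖ ^ (1 / d)` of one of the lifted roots. Hence `Pᵢ` has a root, and up to elements with vanishing
`d`-th power only finitely many (`exists_finset_roots`). A high power `q ^ m` of Frobenius kills such
elements, so the sets `{y ^ q ^ m | Pᵢ₊ₘ(y) = 0}` of roots of `Pᵢ` are finite and nonempty; they are
compatible under the `q`-power map. An inverse limit of nonempty finite sets is nonempty
(`exists_compatible_seq`), and a point of it is a root of `P` in the tilt.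
-/

set_option synthInstance.maxHeartbeats 1000000
set_option maxHeartbeats 1000000

open Filter Topology

noncomputable section

open Polynomial

/-! ### Inverse limits and fraction fields -/

/-- **Kőnig's lemma** for a tower of nonempty finite subsets of a fixed type. -/
lemma exists_compatible_seq {X : Type*} (φ : X → X) (W : ℕ → Set X) (hfin : ∀ i, (W i).Finite)
    (hne : ∀ i, (W i).Nonempty) (hmap : ∀ i, ∀ x ∈ W (i + 1), φ x ∈ W i) :
    ∃ x : ℕ → X, (∀ i, x i ∈ W i) ∧ ∀ i, φ (x (i + 1)) = x i := by
  let F : CategoryTheory.Functor ℕᵒᵖ (Type _) := CategoryTheory.Functor.ofOpSequence (X := fun i => (W i : Type _))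
    (fun i => TypeCat.ofHom fun x : W (i + 1) => (⟨φ x.1, hmap i x.1 x.2⟩ : W i))
  have : ∀ j : ℕᵒᵖ, Finite (F.obj j) := fun j => (hfin j.unop).to_subtype
  have : ∀ j : ℕᵒᵖ, Nonempty (F.obj j) := fun j => (hne j.unop).to_subtype
  obtain ⟨u, hu⟩ := nonempty_sections_of_finite_inverse_system F
  refine ⟨fun i => (u (Opposite.op i)).1, fun i => (u (Opposite.op i)).2, fun i => ?_⟩
  have h := hu (CategoryTheory.homOfLE (Nat.le_add_right i 1)).op
  rw [CategoryTheory.Functor.ofOpSequence_map_homOfLE_succ] at h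
  exact congrArg Subtype.val h

/-- The fraction field of a domain is algebraically closed once monic polynomials over the domain
have roots: any monic polynomial over the fraction field becomes one over the domain after its roots
are scaled by a common denominator of the coefficients. -/
lemma isAlgClosed_fractionRing (T : Type*) [CommRing T] [IsDomain T]
    (H : ∀ P : T[X], P.Monic → 0 < P.natDegree → ∃ x, P.IsRoot x) :
    IsAlgClosed (FractionRing T) := by
  refine IsAlgClosed.of_exists_root _ fun P hP hirr => ?_
  set c := IsLocalization.commonDenom (nonZeroDivisors T) P.support P.coeff with hc
  have hc0 : algebraMap T (FractionRing T) c ≠ 0 :=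
    IsLocalization.to_map_ne_zero_of_mem_nonZeroDivisors _ le_rfl c.2
  obtain ⟨P', hmap, hdeg, hmon⟩ := lifts_and_natDegree_eq_and_monic
    (IsLocalization.scaleRoots_commonDenom_mem_lifts (nonZeroDivisors T) P
      (by rw [hP.leadingCoeff]; exact one_mem _)) ((monic_scaleRoots_iff _).2 hP)
  obtain ⟨x, hx⟩ := H P' hmon (by rw [hdeg, natDegree_scaleRoots]; exact hirr.natDegree_pos)
  refine ⟨algebraMap T _ x / algebraMap T _ c, ?_⟩
  have h := scaleRoots_eval_mul P (algebraMap T _ x / algebraMap T _ c) (algebraMap T _ c)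
  rw [mul_div_cancel₀ _ hc0, ← hmap, eval_map, eval₂_at_apply, hx, map_zero] at h
  exact (mul_eq_zero.1 h.symm).resolve_left (pow_ne_zero _ hc0)

lemma exists_pow_card_le_prod (s : Multiset NNReal) (hs : s ≠ 0) :
    ∃ x ∈ s, x ^ Multiset.card s ≤ s.prod := by
  obtain ⟨x, hx, hmin⟩ := s.toFinset.exists_min_image id (by simpa using hs)
  refine ⟨x, by simpa using hx, Multiset.pow_card_le_prod fun y hy => hmin y (by simpa using hy)⟩

/-! ### Roots of polynomials over `O / ϖ` -/

section ValRing

variable {K : Type*} [NormedField K] (hna : IsNonarchimedean fun x : K => ‖x‖)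

lemma mk_eq_zero_iff_norm {ϖ : valRing K hna} (hϖ : (ϖ : K) ≠ 0) (x : valRing K hna) :
    Ideal.Quotient.mk (Ideal.span {ϖ}) x = 0 ↔ ‖(x : K)‖ ≤ ‖(ϖ : K)‖ := by
  rw [Ideal.Quotient.eq_zero_iff_mem, Ideal.mem_span_singleton]
  constructor
  · rintro ⟨c, rfl⟩
    rw [Subring.coe_mul, norm_mul]
    exact mul_le_of_le_one_right (norm_nonneg _) c.2
  · intro h
    refine ⟨⟨x / ϖ, ?_⟩, Subtype.ext ?_⟩
    · change ‖(x / ϖ : K)‖ ≤ 1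
      rw [norm_div]
      exact div_le_one_of_le₀ h (norm_nonneg _)
    · exact (mul_div_cancel₀ (x : K) hϖ).symm

lemma norm_le_one_of_root {Q : (valRing K hna)[X]} (hQ : Q.Monic) {r : K}
    (hr : (Q.map (valRing K hna).subtype).IsRoot r) : ‖r‖ ≤ 1 := by
  have := IsUltrametricDist.isUltrametricDist_of_isNonarchimedean_norm hna
  have hint : (NormedField.valuation (K := K)).Integers (valRing K hna) :=
    { hom_inj := Subtype.coe_injective
      map_le_one := fun x => x.2
      exists_of_le_one := fun x hx => ⟨⟨x, hx⟩, rfl⟩ }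
  have hmem : r ∈ (NormedField.valuation (K := K)).integer :=
    hint.mem_of_integral ⟨Q, hQ, by rw [← eval_map]; exact hr⟩
  exact hmem

/-- A monic polynomial of positive degree `d` over `O / ϖ` has a root, and its roots are finite in
number up to elements whose `d`-th power vanishes. -/
lemma exists_finset_roots [IsAlgClosed K] {ϖ : valRing K hna} (hϖ : (ϖ : K) ≠ 0)
    (P : (valRing K hna ⧸ Ideal.span {ϖ})[X]) (hP : P.Monic) (hd : 0 < P.natDegree) :
    (∃ z, P.IsRoot z) ∧
      ∃ S : Set (valRing K hna ⧸ Ideal.span {ϖ}), S.Finite ∧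
        ∀ y, P.IsRoot y → ∃ z ∈ S, (y - z) ^ P.natDegree = 0 := by
  obtain ⟨Q, hQP, hQdeg, hQ⟩ := lifts_and_natDegree_eq_and_monic
    ((lifts_iff_coeff_lifts P).2 fun n => Ideal.Quotient.mk_surjective _) hP
  set QK := Q.map (valRing K hna).subtype with hQK
  have hQKm : QK.Monic := hQ.map _
  have hQKd : QK.natDegree = P.natDegree := by rw [hQK, hQ.natDegree_map, hQdeg]
  have hsp : QK.Splits := IsAlgClosed.splits QK
  have hle : ∀ r : K, QK.IsRoot r → ‖r‖ ≤ 1 := fun r hr => norm_le_one_of_root hna hQ hr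
  constructor
  · obtain ⟨r, hr⟩ := IsAlgClosed.exists_root QK
      (natDegree_pos_iff_degree_pos.1 (hQKd ▸ hd)).ne'
    have h0 : Q.eval ⟨r, hle r hr⟩ = 0 := by
      apply Subtype.ext
      have := eval₂_at_apply (p := Q) (valRing K hna).subtype ⟨r, hle r hr⟩
      rw [← eval_map] at this
      exact this.symm.trans hr
    refine ⟨Ideal.Quotient.mk _ ⟨r, hle r hr⟩, ?_⟩
    rw [← hQP, IsRoot, eval_map, eval₂_at_apply, h0, map_zero]
  · refine ⟨Set.image (Ideal.Quotient.mk _) {x : valRing K hna | QK.IsRoot (x : K)}, Set.Finite.image _ ?_, ?_⟩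
    · exact (QK.finite_setOfPred_isRoot hQKm.ne_zero).preimage Subtype.coe_injective.injOn
    · intro y hy
      obtain ⟨y, rfl⟩ := Ideal.Quotient.mk_surjective y
      have hy' : ‖QK.eval (y : K)‖ ≤ ‖(ϖ : K)‖ := by
        rw [← hQP, IsRoot, eval_map, eval₂_at_apply, mk_eq_zero_iff_norm hna hϖ] at hy
        have := eval₂_at_apply (p := Q) (valRing K hna).subtype y
        rw [← eval_map] at this
        exact (congrArg norm this).trans_le hy
      have hcard : Multiset.card QK.roots = P.natDegree := by
        rw [← hQKd, hsp.natDegree_eq_card_roots]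
      obtain ⟨x, hx, hxle⟩ := exists_pow_card_le_prod (QK.roots.map fun r => ‖(y : K) - r‖₊)
        (by rw [Ne, ← Multiset.card_eq_zero, Multiset.card_map, hcard]; exact hd.ne')
      obtain ⟨r, hr, rfl⟩ := Multiset.mem_map.1 hx
      have hr' : QK.IsRoot r := (mem_roots'.1 hr).2
      refine ⟨_, ⟨⟨r, hle r hr'⟩, hr', rfl⟩, ?_⟩
      rw [← map_sub, ← map_pow, mk_eq_zero_iff_norm hna hϖ]
      have hprod : (QK.roots.map fun r => ‖(y : K) - r‖₊).prod = ‖QK.eval (y : K)‖₊ := by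
        rw [hsp.eval_eq_prod_roots_of_monic hQKm]
        have := map_multiset_prod (nnnormHom (α := K)) (QK.roots.map fun r => (y : K) - r)
        rw [Multiset.map_map] at this
        exact this.symm
      rw [Multiset.card_map, hcard, hprod] at hxle
      refine le_trans (le_of_eq ?_) ((NNReal.coe_le_coe.2 hxle).trans hy')
      simp

end ValRing

/-! ### Polynomials over the tilt -/

section Tilt

variable {R : Type*} [CommRing R] {p q f : ℕ} {hp : p.Prime} {hchar : CharP R p} {hq : q = p ^ f}

lemma tilt_pow (α : tiltSubring R p q f hp hchar hq) (i k : ℕ) :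
    α.1 (i + k) ^ q ^ k = α.1 i := by
  induction k with
  | zero => simp
  | succ k ih => rw [pow_succ' q, pow_mul, ← add_assoc, α.2, ih]

/-- The `i`-th component of an element of the tilt. -/
def tiltProj (R : Type*) [CommRing R] (p q f : ℕ) (hp : p.Prime) (hchar : CharP R p)
    (hq : q = p ^ f) (i : ℕ) : tiltSubring R p q f hp hchar hq →+* R :=
  (Pi.evalRingHom (fun _ : ℕ => R) i).comp (tiltSubring R p q f hp hchar hq).subtype

lemma tilt_isRoot_iff (P : (tiltSubring R p q f hp hchar hq)[X])
    (x : tiltSubring R p q f hp hchar hq) :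
    P.IsRoot x ↔ ∀ i, (P.map (tiltProj R p q f hp hchar hq i)).IsRoot (x.1 i) := by
  have h : ∀ i, (P.map (tiltProj R p q f hp hchar hq i)).eval (x.1 i) = (P.eval x).1 i := fun i => by
    rw [eval_map]
    exact eval₂_at_apply (tiltProj R p q f hp hchar hq i) x
  simp only [IsRoot, h]
  exact ⟨fun h i => by rw [h]; rfl, fun h => Subtype.ext (funext h)⟩

/-- Frobenius carries the `(i + 1)`-st component of a polynomial over the tilt to the `i`-th, hence
roots to roots. -/
lemma tilt_root_pow (P : (tiltSubring R p q f hp hchar hq)[X]) (i k : ℕ) {y : R}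
    (hy : (P.map (tiltProj R p q f hp hchar hq (i + k))).IsRoot y) :
    (P.map (tiltProj R p q f hp hchar hq i)).IsRoot (y ^ q ^ k) := by
  have := hchar
  have : ExpChar R p := ExpChar.prime hp
  have hfr : ∀ z : R, iterateFrobenius R p (f * k) z = z ^ q ^ k := fun z => by
    rw [iterateFrobenius_def, pow_mul, ← hq]
  have hcomp : (iterateFrobenius R p (f * k)).comp (tiltProj R p q f hp hchar hq (i + k)) =
      tiltProj R p q f hp hchar hq i :=
    RingHom.ext fun α => (hfr _).trans (tilt_pow α i k)
  rw [← hcomp, ← Polynomial.map_map, IsRoot, ← hfr, eval_map, eval₂_at_apply, hy, map_zero]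

/-- If over `R` every monic polynomial of positive degree `d` has a root, and finitely many up to
elements with vanishing `d`-th power, then monic polynomials of positive degree have roots in the
tilt. -/
lemma tilt_exists_root [Nontrivial R] (hq1 : 1 < q)
    (H : ∀ P : R[X], P.Monic → 0 < P.natDegree → (∃ z, P.IsRoot z) ∧
      ∃ S : Set R, S.Finite ∧ ∀ y, P.IsRoot y → ∃ z ∈ S, (y - z) ^ P.natDegree = 0)
    (P : (tiltSubring R p q f hp hchar hq)[X]) (hP : P.Monic) (hd : 0 < P.natDegree) :
    ∃ x, P.IsRoot x := by
  have := hchar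
  have : ExpChar R p := ExpChar.prime hp
  set m := P.natDegree with hm
  -- `d ≤ q ^ d`, so the exponent `m = d` already makes `q ^ m` at least the degree.
  have hmq : m ≤ q ^ m := (Nat.lt_pow_self hq1).le
  let Q := fun i => P.map (tiltProj R p q f hp hchar hq i)
  have hdeg : ∀ i, (Q i).natDegree = m := fun i => hP.natDegree_map _
  have hH := fun i => H (Q i) (hP.map _) (by rw [hdeg]; exact hd)
  let W : ℕ → Set R := fun i => Set.image (fun y : R => y ^ q ^ m) {y | (Q (i + m)).IsRoot y}
  have hfin : ∀ i, (W i).Finite := by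
    intro i
    obtain ⟨-, S, hS, hSy⟩ := hH (i + m)
    refine (hS.image fun y : R => y ^ q ^ m).subset ?_
    rintro _ ⟨y, hy, rfl⟩
    obtain ⟨z, hz, hyz⟩ := hSy y hy
    refine ⟨z, hz, ?_⟩
    rw [hdeg] at hyz
    have h0 : (y - z) ^ q ^ m = 0 := pow_eq_zero_of_le hmq hyz
    rw [hq, ← pow_mul, sub_pow_expChar_pow, sub_eq_zero] at h0
    simp only [hq, ← pow_mul]
    exact h0.symm
  have hne : ∀ i, (W i).Nonempty := by
    intro i
    obtain ⟨⟨y, hy⟩, -⟩ := hH (i + m)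
    exact ⟨_, y, hy, rfl⟩
  have hmap : ∀ i, ∀ x ∈ W (i + 1), x ^ q ∈ W i := by
    rintro i _ ⟨y, hy, rfl⟩
    refine ⟨y ^ q, ?_, pow_right_comm y q (q ^ m)⟩
    have h := tilt_root_pow P (i + m) 1 (y := y) (by rw [add_right_comm]; exact hy)
    rwa [pow_one] at h
  obtain ⟨x, hxW, hx⟩ := exists_compatible_seq (fun x : R => x ^ q) W hfin hne hmap
  refine ⟨⟨x, hx⟩, (tilt_isRoot_iff P _).2 fun i => ?_⟩
  obtain ⟨y, hy, hyx⟩ := hxW i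
  change (Q i).IsRoot (x i)
  rw [← hyx]
  exact tilt_root_pow P i m hy

lemma tilt_ne_zero_of_le (α : tiltSubring R p q f hp hchar hq) {j i : ℕ} (hij : j ≤ i)
    (hj : α.1 j ≠ 0) : α.1 i ≠ 0 := by
  obtain ⟨k, rfl⟩ := Nat.exists_eq_add_of_le hij
  intro h
  apply hj
  rw [← tilt_pow α j k, h, zero_pow]
  rw [hq]
  exact pow_ne_zero _ (pow_ne_zero _ hp.ne_zero)

lemma tilt_exists_ne_zero {α : tiltSubring R p q f hp hchar hq} (hα : α ≠ 0) : ∃ j, α.1 j ≠ 0 := by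
  by_contra! h
  exact hα (Subtype.ext (funext h))

lemma tilt_charP : CharP (tiltSubring R p q f hp hchar hq) p := by
  have := hchar
  refine ⟨fun n => ?_⟩
  rw [← CharP.cast_eq_zero_iff R p n]
  constructor
  · intro h
    simpa using congrArg (tiltProj R p q f hp hchar hq 0) h
  · intro h
    refine Subtype.ext (funext fun i => ?_)
    change tiltProj R p q f hp hchar hq i n = 0
    rw [map_natCast, h]

end Tilt

/-! ### Integrality of the tilt -/

lemma tilt_isDomain {K : Type*} [NormedField K] (hna : IsNonarchimedean fun x : K => ‖x‖)
    {ϖ : valRing K hna} (hϖ : (ϖ : K) ≠ 0) (hϖ1 : ‖(ϖ : K)‖ < 1) {p q f : ℕ} {hp : p.Prime}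
    {hchar : CharP (valRing K hna ⧸ Ideal.span {ϖ}) p} {hq : q = p ^ f} (hq1 : 1 < q)
    [Nontrivial (valRing K hna ⧸ Ideal.span {ϖ})] :
    IsDomain (tiltSubring (valRing K hna ⧸ Ideal.span {ϖ}) p q f hp hchar hq) := by
  have : NoZeroDivisors (tiltSubring (valRing K hna ⧸ Ideal.span {ϖ}) p q f hp hchar hq) := by
    refine ⟨fun {α β} h => ?_⟩
    by_contra! hne
    obtain ⟨j, hj⟩ := tilt_exists_ne_zero hne.1
    obtain ⟨k, hk⟩ := tilt_exists_ne_zero hne.2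
    have hα := tilt_ne_zero_of_le α (le_max_left j k) hj
    have hβ := tilt_ne_zero_of_le β (le_max_right j k) hk
    set i := max j k
    obtain ⟨a, ha⟩ := Ideal.Quotient.mk_surjective (α.1 (i + 1))
    obtain ⟨b, hb⟩ := Ideal.Quotient.mk_surjective (β.1 (i + 1))
    have hab : Ideal.Quotient.mk (Ideal.span {ϖ}) (a * b) = 0 := by
      rw [map_mul, ha, hb]
      exact congrFun (congrArg Subtype.val h) (i + 1)
    rw [← α.2 i, ← ha, ← map_pow, Ne, mk_eq_zero_iff_norm hna hϖ, not_le] at hα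
    rw [← β.2 i, ← hb, ← map_pow, Ne, mk_eq_zero_iff_norm hna hϖ, not_le] at hβ
    rw [mk_eq_zero_iff_norm hna hϖ] at hab
    have h1 : ‖(ϖ : K)‖ * ‖(ϖ : K)‖ < ‖((a ^ q : valRing K hna) : K)‖ * ‖((b ^ q : valRing K hna) : K)‖ :=
      mul_lt_mul'' hα hβ (norm_nonneg _) (norm_nonneg _)
    have h2 : ‖((a * b : valRing K hna) : K)‖ ^ q ≤ ‖(ϖ : K)‖ ^ 2 :=
      (pow_le_pow_left₀ (norm_nonneg _) hab q).trans
        (pow_le_pow_of_le_one (norm_nonneg _) hϖ1.le hq1)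
    have h3 : ‖((a ^ q : valRing K hna) : K)‖ * ‖((b ^ q : valRing K hna) : K)‖ =
        ‖((a * b : valRing K hna) : K)‖ ^ q := by
      simp [mul_pow]
    rw [h3, ← sq] at h1
    exact absurd h2 h1.not_ge
  have : Nontrivial (tiltSubring (valRing K hna ⧸ Ideal.span {ϖ}) p q f hp hchar hq) :=
    (tiltProj _ p q f hp hchar hq 0).domain_nontrivial
  exact NoZeroDivisors.to_isDomain _

/-- **The tilt of an algebraically closed field is algebraically closed.**  Suppose
in addition that `K` is algebraically closed.  Then the tilt `O_{K^♭}` is an integral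
domain of characteristic `p`, and its field of fractions `K^♭ = Frac(O_{K^♭})` is an
algebraically closed field.  (In particular, taking `K = ℂ_p`, the tilt `ℂ_p^♭` is
algebraically closed.) -/
theorem tilt_of_algebraically_closed
    (p : ℕ) [Fact p.Prime] (K : Type*) [NormedField K] [CompleteSpace K]
    [Algebra ℚ_[p] K] [IsAlgClosed K]
    (hna : IsNonarchimedean fun x : K => ‖x‖)
    (hext : ∀ c : ℚ_[p], ‖algebraMap ℚ_[p] K c‖ = ‖c‖)
    (q f : ℕ) (hf : 0 < f) (hq : q = p ^ f)
    (ϖ : valRing K hna) (hϖp : ‖(p : K)‖ ≤ ‖(ϖ : K)‖) (hϖ1 : ‖(ϖ : K)‖ < 1)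
    (hchar : CharP (valRing K hna ⧸ Ideal.span {ϖ}) p) :
    IsDomain (tiltSubring (valRing K hna ⧸ Ideal.span {ϖ}) p q f Fact.out hchar hq) ∧
    CharP (tiltSubring (valRing K hna ⧸ Ideal.span {ϖ}) p q f Fact.out hchar hq) p ∧
    (∀ [IsDomain (tiltSubring (valRing K hna ⧸ Ideal.span {ϖ}) p q f Fact.out hchar hq)],
      IsAlgClosed
        (FractionRing
          (tiltSubring (valRing K hna ⧸ Ideal.span {ϖ}) p q f Fact.out hchar hq))) := by
  have hp : p.Prime := Fact.out
  have hq1 : 1 < q := hq ▸ Nat.one_lt_pow hf.ne' hp.one_lt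
  have hϖ : (ϖ : K) ≠ 0 := by
    have hp0 : 0 < ‖(p : K)‖ := by
      rw [← map_natCast (algebraMap ℚ_[p] K) p, hext, norm_pos_iff]
      exact_mod_cast hp.ne_zero
    exact norm_pos_iff.1 (hp0.trans_le hϖp)
  have : Nontrivial (valRing K hna ⧸ Ideal.span {ϖ}) := CharP.nontrivial_of_char_ne_one hp.ne_one
  refine ⟨tilt_isDomain hna hϖ hϖ1 hq1, tilt_charP, ?_⟩
  intro _
  exact isAlgClosed_fractionRing _ (tilt_exists_root hq1 (exists_finset_roots hna hϖ))
end
end
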